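/- arXiv:math/0609552 — 2 statements merged into one kernel-verified Lean document; each statement's English description precedes it below -/
import Mathlib

section
/- Let H be a finitely generated subgroup of F(A), let A₀ be the set of letters of A occurring in the labels of transitions of Γ_A(H), and let d = |A₀| − rank(H). Then H is a free factor of F(A) if and only if d ≥ 0 and Γ_A(H) can be transformed into a one-state automaton by a sequence of d i-steps. -/
open Function

/-- A letter of the symmetrized alphabet Ã: `(a, true)` stands for `a ∈ A` and
`(a, false)` for `a⁻¹ ∈ A⁻¹`. -/
abbrev Ltr (A : Type) := A × Bool

/-- Inversion of letters of Ã. -/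
def Ltr.inv {A : Type} (x : Ltr A) : Ltr A := (x.1, !x.2)

/-- The inverse `u⁻¹` of a word `u` over Ã. -/
def wordInv {A : Type} (w : List (Ltr A)) : List (Ltr A) := (w.map Ltr.inv).reverse

/-- A word over Ã is reduced iff it has no factor of the form `a a⁻¹` or `a⁻¹ a`. -/
def IsReducedWord {A : Type} (w : List (Ltr A)) : Prop :=
  ∀ (u v : List (Ltr A)) (a : A) (b : Bool), w ≠ u ++ (a, b) :: (a, !b) :: v

/-- An automaton over the symmetrized alphabet Ã, with a bundled state type `Q`,
an initial state `q0` and a set `E` of transitions. -/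
structure Autom (A : Type) : Type 1 where
  Q : Type
  q0 : Q
  E : Set (Q × Ltr A × Q)

namespace Autom

variable {A : Type}

/-- Paths using only transitions in the set `T`. -/
inductive PathOn (M : Autom A) (T : Set (M.Q × Ltr A × M.Q)) :
    M.Q → List (Ltr A) → M.Q → Prop
  | nil (q : M.Q) : PathOn M T q [] q
  | cons {p q r : M.Q} {a : Ltr A} {w : List (Ltr A)} :
      (p, a, q) ∈ T → PathOn M T q w r → PathOn M T p (a :: w) r

/-- `M.Path p u q` : the word `u` labels a path from state `p` to state `q` in `M`. -/
def Path (M : Autom A) : M.Q → List (Ltr A) → M.Q → Prop := M.PathOn M.E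

/-- The language L(𝒜) of words labeling a path from `q0` to `q0`. -/
def lang (M : Autom A) : Set (List (Ltr A)) := {w | M.Path M.q0 w M.q0}

/-- The set L(𝒜)ρ of reductions (in the free group `F(A)`) of words of L(𝒜). -/
def langRho (M : Autom A) : Set (FreeGroup A) := FreeGroup.mk '' M.lang

/-- Dual automaton: `(p,a,q)` is an edge iff `(q,a⁻¹,p)` is one. -/
def Dual (M : Autom A) : Prop := ∀ p a q, (p, a, q) ∈ M.E ↔ (q, Ltr.inv a, p) ∈ M.E

/-- Deterministic automaton. -/
def Deterministic (M : Autom A) : Prop :=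
  ∀ p a q q', (p, a, q) ∈ M.E → (p, a, q') ∈ M.E → q = q'

/-- Trim automaton: every state lies on a path from `q0` to `q0`. -/
def Trim (M : Autom A) : Prop := ∀ q, ∃ u v, M.Path M.q0 u q ∧ M.Path q v M.q0

/-- Inverse automaton: deterministic, trim and dual. -/
def IsInv (M : Autom A) : Prop := M.Deterministic ∧ M.Trim ∧ M.Dual

/-- Reduced automaton: every state lies on a path from `q0` to `q0` labeled by
a reduced word. -/
def IsRed (M : Autom A) : Prop :=
  ∀ q, ∃ u v, IsReducedWord (u ++ v) ∧ M.Path M.q0 u q ∧ M.Path q v M.q0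

/-- Homomorphisms of automata. -/
def IsHom (M N : Autom A) (φ : M.Q → N.Q) : Prop :=
  φ M.q0 = N.q0 ∧ ∀ p a q, (p, a, q) ∈ M.E → (φ p, a, φ q) ∈ N.E

/-- Isomorphism of automata. -/
def Isomorphic (M N : Autom A) : Prop :=
  ∃ φ : M.Q ≃ N.Q, M.IsHom N φ ∧ N.IsHom M φ.symm

/-- `N` is (isomorphic to) the automaton obtained from `M` by identifying the two
states `p` and `q`. -/
def IsIdentification (M : Autom A) (p q : M.Q) (N : Autom A) : Prop :=
  ∃ φ : M.Q → N.Q,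
    Surjective φ ∧ φ M.q0 = N.q0 ∧
    (∀ x y, φ x = φ y ↔ x = y ∨ (x = p ∧ y = q) ∨ (x = q ∧ y = p)) ∧
    (∀ e : N.Q × Ltr A × N.Q, e ∈ N.E ↔ ∃ e' ∈ M.E, e = (φ e'.1, e'.2.1, φ e'.2.2))

/-- `N` is (isomorphic to) the automaton obtained from `M` by deleting the state `q`
and all transitions involving it. -/
def IsDeletion (M : Autom A) (q : M.Q) (N : Autom A) : Prop :=
  ∃ φ : N.Q → M.Q,
    Injective φ ∧ Set.range φ = {x | x ≠ q} ∧ φ N.q0 = M.q0 ∧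
    (∀ e : N.Q × Ltr A × N.Q, e ∈ N.E ↔ (φ e.1, e.2.1, φ e.2.2) ∈ M.E)

/-- Elementary reduction of type 1. -/
def Red1 (M N : Autom A) : Prop :=
  ∃ p q r a, p ≠ q ∧ (r, a, p) ∈ M.E ∧ (r, a, q) ∈ M.E ∧ M.IsIdentification p q N

/-- Elementary reduction of type 2. -/
def Red2 (M N : Autom A) : Prop :=
  ∃ (p q : M.Q) (a : Ltr A), q ≠ M.q0 ∧ (p, a, q) ∈ M.E ∧ (q, Ltr.inv a, p) ∈ M.E ∧
    (∀ e ∈ M.E, e.1 = q ∨ e.2.2 = q → e = (p, a, q) ∨ e = (q, Ltr.inv a, p)) ∧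
    M.IsDeletion q N

/-- `N` is (isomorphic to) the reduction `Mρ` of `M`: perform elementary reductions
of type 1 until the automaton is deterministic, then elementary reductions of type 2
until none is possible. -/
def ReductionOf (M N : Autom A) : Prop :=
  ∃ M₁, Relation.ReflTransGen Red1 M M₁ ∧ M₁.Deterministic ∧
    Relation.ReflTransGen Red2 M₁ N ∧ ∀ N', ¬ Red2 N N'

/-- `N` is (isomorphic to) the expansion of `M` by `(p, w, q)`: a new path labeled `w`
from `p` to `q` (together with its inverse path) whose intermediate states are new. -/
def IsExpansion (M : Autom A) (p : M.Q) (w : List (Ltr A)) (q : M.Q) (N : Autom A) : Prop :=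
  w ≠ [] ∧
  ∃ (φ : M.Q → N.Q) (c : Fin (w.length + 1) → N.Q),
    Injective φ ∧ φ M.q0 = N.q0 ∧ c 0 = φ p ∧ c (Fin.last w.length) = φ q ∧
    (∀ i : Fin (w.length + 1), 0 < (i : ℕ) → (i : ℕ) < w.length → c i ∉ Set.range φ) ∧
    (∀ i j : Fin (w.length + 1), 0 < (i : ℕ) → (i : ℕ) < w.length → c i = c j → i = j) ∧
    (∀ x : N.Q, (∃ y, φ y = x) ∨ ∃ i, c i = x) ∧
    (∀ e : N.Q × Ltr A × N.Q, e ∈ N.E ↔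
      ((∃ e' ∈ M.E, e = (φ e'.1, e'.2.1, φ e'.2.2)) ∨
        ∃ i : Fin w.length,
          e = (c i.castSucc, w.get i, c i.succ) ∨
          e = (c i.succ, Ltr.inv (w.get i), c i.castSucc)))

/-- `M →exp^{(p,w,q)} N` : `N` is (isomorphic to) the reduction of the expansion
of `M` by `(p,w,q)`. -/
def ExpStep (M : Autom A) (p : M.Q) (w : List (Ltr A)) (q : M.Q) (N : Autom A) : Prop :=
  ∃ N' N'', M.IsExpansion p w q N' ∧ ReductionOf N' N'' ∧ Isomorphic N'' N

/-- `M →re^{(p,w,q)} N` : a reduced expansion, i.e. an expansion-then-reduction in which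
`M` embeds in `N`. -/
def REStep (M : Autom A) (p : M.Q) (w : List (Ltr A)) (q : M.Q) (N : Autom A) : Prop :=
  M.ExpStep p w q N ∧ ∃ ψ : M.Q → N.Q, Injective ψ ∧ M.IsHom N ψ

/-- `M →e^{w} N` : an e-step, i.e. `M →exp^{(q0,w,q0)} N`. -/
def EStep (M : Autom A) (w : List (Ltr A)) (N : Autom A) : Prop :=
  M.ExpStep M.q0 w M.q0 N

/-- `M →i^{p=q} N` : an i-step; `N` is (isomorphic to) the reduction of the automaton
obtained from `M` by identifying the distinct states `p` and `q`. -/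
def IStep (M : Autom A) (p q : M.Q) (N : Autom A) : Prop :=
  p ≠ q ∧ ∃ N' N'', M.IsIdentification p q N' ∧ ReductionOf N' N'' ∧ Isomorphic N'' N

/-- i-step, allowing `p = q` (in which case nothing happens). -/
def IStep' (M : Autom A) (p q : M.Q) (N : Autom A) : Prop :=
  (p = q ∧ M.Isomorphic N) ∨ M.IStep p q N

/-- `M →i N` : some i-step applies. -/
def IStepAny (M N : Autom A) : Prop := ∃ p q, M.IStep p q N

/-- Some reduced expansion (by a nonempty reduced word) applies. -/
def REStepAny (M N : Autom A) : Prop :=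
  ∃ p w q, IsReducedWord w ∧ M.REStep p w q N

/-- `M` is (isomorphic to) `Γ_A(H)` : a reduced inverse automaton with `L(M)ρ = H`. -/
def Represents (M : Autom A) (H : Subgroup (FreeGroup A)) : Prop :=
  M.IsInv ∧ M.IsRed ∧ M.langRho = ↑H

/-- The `q0`-diameter of an automaton: the maximum over all states `q` of the minimal
length of a reduced word labeling a path from `q0` to `q`. -/
noncomputable def diam (M : Autom A) : ℕ :=
  ⨆ q : M.Q, sInf {n | ∃ u, IsReducedWord u ∧ u.length = n ∧ M.Path M.q0 u q}

end Autom

/-- `S` is a basis of the subgroup `H`: `S` generates `H` and freely so. -/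
def IsFreeBasis {G : Type} [Group G] (S : Set G) (H : Subgroup G) : Prop :=
  Subgroup.closure S = H ∧
    Injective (FreeGroup.lift (Subtype.val : S → G) : FreeGroup S →* G)

/-- `H ≤ff K` : `H` is a free factor of `K`. -/
def FreeFactor {G : Type} [Group G] (H K : Subgroup G) : Prop :=
  ∃ B C : Set G, IsFreeBasis B H ∧ IsFreeBasis C K ∧ B ⊆ C

/-- The rank of a subgroup: the cardinality of a basis (the common value of
the cardinalities of all bases, when `H` is a finite-rank free group). -/
noncomputable def rk {G : Type} [Group G] (H : Subgroup G) : ℕ :=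
  sInf {n | ∃ S : Set G, IsFreeBasis S H ∧ S.ncard = n}

/-- `L` is a graphical free factor of `K` with respect to `A`: `Γ_A(L)` embeds
in `Γ_A(K)`. -/
def GraphicalFF {A : Type} (L K : Subgroup (FreeGroup A)) : Prop :=
  L ≤ K ∧ ∃ ML MK : Autom A, ML.Represents L ∧ MK.Represents K ∧
    ∃ ψ : ML.Q → MK.Q, Injective ψ ∧ ML.IsHom MK ψ

/-- A step (i-step or reduced expansion) from `M` to `N` of cost `c`. -/
def StepCost {A : Type} (M N : Autom A) (c : ℕ) : Prop :=
  (c = 0 ∧ Autom.IStepAny M N) ∨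
  (∃ p w q, IsReducedWord w ∧ w.length = c ∧ M.REStep p w q N)

/-- The well-order `≺` on cost sequences. -/
def costLT (k l : List ℕ) : Prop :=
  k.length < l.length ∨
  (k.length = l.length ∧ k.sum < l.sum) ∨
  (k.length = l.length ∧ k.sum = l.sum ∧ List.Lex (· < ·) k l)


/-! ### Generic group theory -/

theorem aux_ext_perm {X : Type} [Finite X] (r : X → X → Prop)
    (hf : ∀ y y' x, r y x → r y' x → y = y') (hi : ∀ y x x', r y x → r y x' → x = x') :
    ∃ σ : Equiv.Perm X, ∀ y x, r y x → y = σ x := by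
  classical
  have := Fintype.ofFinite X
  let p : X → Prop := fun x => ∃ y, r y x
  let q : X → Prop := fun y => ∃ x, r y x
  let e : {x // p x} ≃ {y // q y} :=
    { toFun := fun x => ⟨x.2.choose, x.1, x.2.choose_spec⟩
      invFun := fun y => ⟨y.2.choose, y.1, y.2.choose_spec⟩
      left_inv := fun x => by
        apply Subtype.ext
        have h1 := x.2.choose_spec
        have h2 : q x.2.choose := ⟨x.1, h1⟩
        exact hi _ _ _ h2.choose_spec h1
      right_inv := fun y => by
        apply Subtype.ext
        have h1 := y.2.choose_spec
        have h2 : p y.2.choose := ⟨y.1, h1⟩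
        exact hf _ _ _ h2.choose_spec h1 }
  refine ⟨e.extendSubtype, fun y x h => ?_⟩
  rw [e.extendSubtype_apply_of_mem x ⟨y, h⟩]
  have h2 : p x := ⟨y, h⟩
  exact hf _ _ _ h h2.choose_spec

/-- free groups are residually finite -/
theorem aux_resid {α : Type} (g : FreeGroup α) (hg : g ≠ 1) :
    ∃ (X : Type) (_ : Finite X) (ρ : FreeGroup α →* Equiv.Perm X), ρ g ≠ 1 := by
  classical
  let S : Set (FreeGroup α) := {x | ∃ l, l <:+ g.toWord ∧ x = FreeGroup.mk l}
  have hS : S.Finite := by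
    have : S ⊆ FreeGroup.mk '' {l | l ∈ g.toWord.tails} := by
      rintro x ⟨l, hl, rfl⟩
      exact ⟨l, by simpa using hl, rfl⟩
    exact Set.Finite.subset (Set.Finite.image _ (List.finite_toSet _)) this
  have : Finite S := hS
  have h := fun a : α => aux_ext_perm (X := S) (fun y x => y.1 = FreeGroup.of a * x.1)
    (fun y y' x h1 h2 => Subtype.ext (h1.trans h2.symm))
    (fun y x x' h1 h2 => Subtype.ext (mul_left_cancel (h1.symm.trans h2)))
  choose σ hσ using h
  refine ⟨S, hS, FreeGroup.lift σ, fun h1 => hg ?_⟩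
  have h1S : (1 : FreeGroup α) ∈ S := ⟨[], List.nil_suffix, rfl⟩
  have key : ∀ l : List (α × Bool), l <:+ g.toWord → ∀ hl : FreeGroup.mk l ∈ S,
      FreeGroup.lift σ (FreeGroup.mk l) ⟨1, h1S⟩ = ⟨FreeGroup.mk l, hl⟩ := by
    intro l
    induction l with
    | nil => intro _ _; rfl
    | cons c l ih =>
      intro hl hm
      have hl' : l <:+ g.toWord := (List.suffix_cons c l).trans hl
      have hm' : FreeGroup.mk l ∈ S := ⟨l, hl', rfl⟩
      have ih := ih hl' hm'
      obtain ⟨a, b⟩ := c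
      have e1 : (FreeGroup.mk ((a, b) :: l) : FreeGroup α)
        = FreeGroup.mk [(a, b)] * FreeGroup.mk l := by
        rw [FreeGroup.mul_mk]; rfl
      rw [Subtype.ext_iff]
      simp only [e1, map_mul, Equiv.Perm.mul_apply, ih]
      cases b
      · have e2 : (FreeGroup.mk [(a, false)] : FreeGroup α) = (FreeGroup.of a)⁻¹ := rfl
        rw [e2, map_inv, FreeGroup.lift_apply_of]
        have := hσ a ⟨_, hm'⟩ ⟨_, hm⟩ (by simp [e1, e2])
        rw [this, Equiv.Perm.inv_def, Equiv.symm_apply_apply, ← e2, ← e1]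
      · have e2 : (FreeGroup.mk [(a, true)] : FreeGroup α) = FreeGroup.of a := rfl
        rw [e2, FreeGroup.lift_apply_of]
        have := hσ a ⟨_, hm⟩ ⟨_, hm'⟩ (by simp [e1, e2])
        rw [← this, ← e2, ← e1]
  have h2 := Subtype.ext_iff.1 (key g.toWord (List.suffix_refl _) ⟨_, List.suffix_refl _, rfl⟩)
  dsimp only at h2
  rw [FreeGroup.mk_toWord, h1] at h2
  exact h2.symm

theorem aux_hopf {α : Type} [Finite α] (ψ : FreeGroup α →* FreeGroup α) (hψ : Surjective ψ) :
    Injective ψ := by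
  rw [injective_iff_map_eq_one]
  intro g hg
  by_contra hne
  obtain ⟨X, hX, ρ, hρ⟩ := aux_resid g hne
  have : Finite (FreeGroup α →* Equiv.Perm X) := Finite.of_equiv _ (FreeGroup.lift (α := α))
  let Φ : (FreeGroup α →* Equiv.Perm X) → (FreeGroup α →* Equiv.Perm X) := fun f => f.comp ψ
  have hΦ : Injective Φ := fun f f' h => by
    ext1 x
    obtain ⟨y, hy⟩ := hψ (FreeGroup.of x)
    have := DFunLike.congr_fun h y
    simpa [Φ, hy] using this
  obtain ⟨f, hf⟩ := (Finite.injective_iff_surjective.1 hΦ) ρ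
  apply hρ
  rw [← hf]
  simp [Φ, hg]

theorem aux_hopf' {α β : Type} [Finite α] (e : α ≃ β) (ψ : FreeGroup α →* FreeGroup β)
    (hψ : Surjective ψ) : Injective ψ := by
  let E := FreeGroup.freeGroupCongr e.symm
  have := aux_hopf (E.toMonoidHom.comp ψ) (E.surjective.comp hψ)
  exact Function.Injective.of_comp (f := E) this

abbrev AuxZ2 := Multiplicative (ZMod 2)

/-- rank bound via homs to `ℤ/2` -/
theorem aux_rank {K Y : Type} [Group K] (S : Set K) (hS : S.Finite)
    (hgen : Subgroup.closure S = ⊤) (y : Y → K)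
    (h : ∀ f : Y → AuxZ2, ∃ Φ : K →* AuxZ2, ∀ i, Φ (y i) = f i) :
    Finite Y ∧ Nat.card Y ≤ S.ncard := by
  choose Φ hΦ using h
  have hfS : Finite S := hS
  let T : (Y → AuxZ2) → (S → AuxZ2) := fun f s => Φ f s
  have hT : Injective T := by
    intro f f' hff
    have : Φ f = Φ f' := by
      apply MonoidHom.eq_of_eqOn_dense hgen
      intro s hs
      exact congr_fun hff ⟨s, hs⟩
    funext i
    rw [← hΦ f, ← hΦ f', this]
  have : Finite (Y → AuxZ2) := Finite.of_injective T hT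
  have hY : Finite Y := by
    classical
    apply Finite.of_injective (fun y : Y => (Pi.mulSingle y (Multiplicative.ofAdd 1) : Y → AuxZ2))
    intro a b hab
    by_contra hne
    have := congr_fun hab a
    simp [Pi.mulSingle_eq_of_ne hne] at this
  refine ⟨hY, ?_⟩
  have := Nat.card_le_card_of_injective T hT
  rw [Nat.card_fun, Nat.card_fun] at this
  have h2 : Nat.card AuxZ2 = 2 := by
    rw [Nat.card_eq_fintype_card]; rfl
  rw [h2] at this
  rw [← Nat.card_coe_set_eq]
  exact (Nat.pow_le_pow_iff_right (by norm_num)).1 this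

/-! ### Schreier generators -/

theorem aux_tree {G : Type} [Group G] (C : Set G) (hC : Subgroup.closure C = ⊤)
    (X : Type) [MulAction G X] [MulAction.IsPretransitive G X] (x0 : X) :
    ∃ (t : X → G) (n : X → ℕ), t x0 = 1 ∧ (∀ x, t x • x0 = x) ∧
      ∀ x, x ≠ x0 → ∃ x', n x' < n x ∧ ∃ c ∈ C,
        (x = c • x' ∧ t x = c * t x') ∨ (x' = c • x ∧ t x = c⁻¹ * t x') := by
  classical
  have hex : ∀ x : X, ∃ k, ∃ l : List G, (∀ y ∈ l, y ∈ C ∨ y⁻¹ ∈ C) ∧ l.length = k ∧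
      l.prod • x0 = x := by
    intro x
    obtain ⟨g, hg⟩ := MulAction.exists_smul_eq G x0 x
    have hgC : g ∈ Submonoid.closure (C ∪ C⁻¹) := by
      rw [← Subgroup.closure_toSubmonoid, hC]; trivial
    obtain ⟨l, hl, hp⟩ := Submonoid.exists_list_of_mem_closure hgC
    exact ⟨_, l, hl, rfl, by rw [hp, hg]⟩
  let n : X → ℕ := fun x => Nat.find (hex x)
  have hpar : ∀ x, x ≠ x0 → ∃ x' g, n x' < n x ∧ (g ∈ C ∨ g⁻¹ ∈ C) ∧ x = g • x' := by
    intro x hx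
    obtain ⟨l, hl, hlen, hp⟩ := Nat.find_spec (hex x)
    cases l with
    | nil => simp at hp; exact absurd hp.symm hx
    | cons g l =>
      refine ⟨l.prod • x0, g, ?_, hl g (by simp), ?_⟩
      · have : n (l.prod • x0) ≤ l.length :=
          Nat.find_le ⟨l, fun y hy => hl y (by simp [hy]), rfl, rfl⟩
        simp at hlen
        change _ < Nat.find (hex x)
        omega
      · rw [← mul_smul, ← hp]; simp
  choose! par g hn hg hx using hpar
  let F : (x : X) → ((y : X) → n y < n x → G) → G := fun x rec =>
    if h : x = x0 then 1 else g x * rec (par x) (hn x h)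
  let wf : WellFounded (fun a b : X => n a < n b) := (measure n).wf
  let t : X → G := wf.fix F
  have ht : ∀ x, t x = if x = x0 then 1 else g x * t (par x) := by
    intro x
    have := wf.fix_eq F x
    simp only [F] at this
    change t x = _ at this
    rw [this]
    split_ifs <;> rfl
  refine ⟨t, n, by rw [ht]; simp, ?_, ?_⟩
  · intro x
    induction x using wf.induction with
    | _ x ih =>
      by_cases h : x = x0
      · rw [ht, if_pos h, one_smul, h]
      · rw [ht, if_neg h, mul_smul, ih _ (hn x h)]
        exact (hx x h).symm
  · intro x h
    refine ⟨par x, hn x h, ?_⟩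
    rcases hg x h with hc | hc
    · exact ⟨g x, hc, Or.inl ⟨hx x h, by rw [ht, if_neg h]⟩⟩
    · refine ⟨(g x)⁻¹, hc, Or.inr ⟨?_, by rw [ht, if_neg h, inv_inv]⟩⟩
      exact (inv_smul_eq_iff.2 (hx x h)).symm

theorem aux_schreier {G : Type} [Group G] (C : Set G) (hC : Subgroup.closure C = ⊤)
    (hlift : ∀ (P : Type) [Group P] (f : C → P), ∃ Φ : G →* P, ∀ c : C, Φ c = f c)
    (K : Subgroup G) (S : Set G) (hSfin : S.Finite) (hS : Subgroup.closure S = K)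
    (B : Set G) (hBC : B ⊆ C) (hBK : B ⊆ K) :
    ∃ T : Set G, T.Finite ∧ Subgroup.closure (B ∪ T) = K ∧ T.ncard + B.ncard ≤ S.ncard := by
  classical
  let X := G ⧸ K
  let x0 : X := ((1 : G) : G ⧸ K)
  have hstab : ∀ g : G, g • x0 = x0 ↔ g ∈ K := by
    intro g
    change ((g * 1 : G) : G ⧸ K) = _ ↔ _
    rw [mul_one, eq_comm, QuotientGroup.eq]
    simp
  obtain ⟨t, n, ht0, ht, htree⟩ := aux_tree C hC X x0
  let s : G → X → G := fun c x => (t (c • x))⁻¹ * c * t x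
  have hsK : ∀ c x, s c x ∈ K := by
    intro c x
    rw [← hstab]
    simp only [s, mul_smul, ht]
    rw [inv_smul_eq_iff, ht]
  let Y := {p : C × X // s p.1 p.2 ≠ 1}
  let y : Y → K := fun p => ⟨s p.1.1 p.1.2, hsK _ _⟩
  have hrank : Finite Y ∧ Nat.card Y ≤ S.ncard := by
    have hSK : S ⊆ K := hS ▸ Subgroup.subset_closure
    have h1 : ((Subtype.val : K → G) ⁻¹' S).ncard = S.ncard := by
      apply Set.ncard_preimage_of_injective_subset_range Subtype.val_injective
      intro x hx
      exact ⟨⟨x, hSK hx⟩, rfl⟩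
    rw [← h1]
    apply aux_rank (K := K) _ (hSfin.preimage Subtype.val_injective.injOn) _ y
    · intro f
      let f' : C → X → AuxZ2 := fun c x => if h : s c x ≠ 1 then f ⟨(c, x), h⟩ else 1
      let π : C → Equiv.Perm (X × AuxZ2) := fun c =>
        { toFun := fun p => (c.1 • p.1, f' c p.1 * p.2)
          invFun := fun p => (c.1⁻¹ • p.1, (f' c (c.1⁻¹ • p.1))⁻¹ * p.2)
          left_inv := fun p => by simp
          right_inv := fun p => by simp }
      obtain ⟨Φ, hΦ⟩ := hlift _ π
      have hm : ∀ g : G, ∀ x, ∃ m : AuxZ2, ∀ z, Φ g (x, z) = (g • x, m * z) := by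
        intro g
        have hg : g ∈ Subgroup.closure C := by rw [hC]; trivial
        induction hg using Subgroup.closure_induction with
        | mem c hc =>
          intro x
          refine ⟨f' ⟨c, hc⟩ x, fun z => ?_⟩
          rw [hΦ ⟨c, hc⟩]
          rfl
        | one => intro x; exact ⟨1, fun z => by simp⟩
        | mul a b _ _ iha ihb =>
          intro x
          obtain ⟨m, hm⟩ := ihb x
          obtain ⟨m', hm'⟩ := iha (b • x)
          exact ⟨m' * m, fun z => by rw [map_mul, Equiv.Perm.mul_apply, hm, hm', mul_smul, mul_assoc]⟩
        | inv a _ iha =>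
          intro x
          obtain ⟨m, hm⟩ := iha (a⁻¹ • x)
          refine ⟨m⁻¹, fun z => ?_⟩
          rw [map_inv, Equiv.Perm.inv_eq_iff_eq, hm]
          simp
      choose m hm using hm
      have hmul : ∀ g h x, m (g * h) x = m g (h • x) * m h x := by
        intro g h x
        have h1 := hm (g * h) x 1
        rw [map_mul, Equiv.Perm.mul_apply, hm, hm] at h1
        simpa using (Prod.ext_iff.1 h1).2.symm
      have hmc : ∀ (c : C) x, m c x = f' c x := by
        intro c x
        have h1 := hm c x 1
        rw [hΦ] at h1
        simpa [π] using (Prod.ext_iff.1 h1).2.symm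
      have hf' : ∀ (c : C) x, s c x = 1 → f' c x = 1 := by
        intro c x h
        simp [f', h]
      have hmt : ∀ k x, n x = k → m (t x) x0 = 1 := by
        intro k
        induction k using Nat.strong_induction_on with
        | _ k ih =>
          intro x hk
          by_cases hx : x = x0
          · rw [hx, ht0]
            have := hmul 1 1 x0
            simpa using this
          · obtain ⟨x', hn, c, hc, h | h⟩ := htree x hx
            · rw [h.2, hmul, ih _ (hk ▸ hn) x' rfl, mul_one, ht, hmc ⟨c, hc⟩]
              apply hf'
              simp only [s]
              rw [← h.1, h.2]
              group
            · have h1 := ih _ (hk ▸ hn) x' rfl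
              have h2 : t x' = c * t x := by rw [h.2]; group
              rw [h2, hmul, ht, hmc ⟨c, hc⟩, hf' ⟨c, hc⟩ x, one_mul] at h1
              · exact h1
              · simp only [s]
                rw [← h.1, h2]
                group
      refine ⟨{ toFun := fun k => m k.1 x0, map_one' := ?_, map_mul' := ?_ }, ?_⟩
      · have := hmul 1 1 x0
        simpa using this
      · intro a b
        change m (a.1 * b.1) x0 = _
        rw [hmul, (hstab _).2 b.2]
      · rintro ⟨⟨c, x⟩, hcx⟩
        change m (s c x) x0 = _
        have h1 : t (c.1 • x) * s c x = c * t x := by simp only [s]; group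
        have h2 := hmul (t (c.1 • x)) (s c x) x0
        rw [h1, hmul, (hstab _).2 (hsK _ _), hmt _ _ rfl, hmt _ _ rfl, ht, hmc] at h2
        simp only [mul_one, one_mul] at h2
        rw [← h2]
        simp only [f']
        rw [dif_pos hcx]
    · rw [← Subgroup.map_injective (Subgroup.subtype_injective K) |>.eq_iff, MonoidHom.map_closure,
        ← MonoidHom.range_eq_map, Subgroup.range_subtype, Subgroup.coe_subtype,
        Set.image_preimage_eq_of_subset, hS]
      intro x hx
      exact ⟨⟨x, hSK hx⟩, rfl⟩
  obtain ⟨hYf, hYc⟩ := hrank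
  let R : Set G := Set.range (fun p : Y => s p.1.1 p.1.2)
  have hRf : R.Finite := Set.finite_range _
  have hRc : R.ncard ≤ S.ncard := by
    refine le_trans ?_ hYc
    rw [← Nat.card_coe_set_eq]
    exact Finite.card_range_le _
  have hBR : B ⊆ R := by
    intro b hb
    have hs : s b x0 = b := by
      simp only [s]
      rw [(hstab b).2 (hBK hb), ht0]; simp
    have hb1 : b ≠ 1 := by
      intro h
      obtain ⟨Φ, hΦ⟩ := hlift AuxZ2 (fun _ => Multiplicative.ofAdd 1)
      have := hΦ ⟨b, hBC hb⟩
      simp only [h, map_one] at this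
      exact absurd (congrArg Multiplicative.toAdd this) (by decide)
    exact ⟨⟨(⟨b, hBC hb⟩, x0), by simpa [hs] using hb1⟩, hs⟩
  refine ⟨R \ B, hRf.sdiff, ?_, ?_⟩
  · rw [Set.union_sdiff_self, Set.union_eq_self_of_subset_left hBR]
    apply le_antisymm
    · rw [Subgroup.closure_le]
      rintro _ ⟨p, rfl⟩
      exact hsK _ _
    · have key : ∀ g : G, ∀ x, s g x ∈ Subgroup.closure R := by
        intro g
        have hg : g ∈ Subgroup.closure C := by rw [hC]; trivial
        induction hg using Subgroup.closure_induction with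
        | mem c hc =>
          intro x
          by_cases h : s c x = 1
          · rw [h]; exact one_mem _
          · exact Subgroup.subset_closure ⟨⟨(⟨c, hc⟩, x), h⟩, rfl⟩
        | one => intro x; simp [s]
        | mul a b _ _ iha ihb =>
          intro x
          have : s (a * b) x = s a (b • x) * s b x := by simp only [s, mul_smul]; group
          rw [this]
          exact mul_mem (iha _) (ihb _)
        | inv a _ iha =>
          intro x
          have : s a⁻¹ x = (s a (a⁻¹ • x))⁻¹ := by
            simp only [s, smul_inv_smul]; group
          rw [this]
          exact inv_mem (iha _)
      intro k hk
      have := key k x0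
      simp only [s] at this
      rw [(hstab k).2 hk, ht0] at this
      simpa using this
  · rw [Set.ncard_sdiff_add_ncard_of_subset hBR hRf]
    exact hRc

/-! ### Bases -/

theorem aux_basis_lift {G : Type} [Group G] {S : Set G} {H : Subgroup G} (hS : IsFreeBasis S H)
    (P : Type) [Group P] (f : S → P) :
    ∃ Φ : H →* P, ∀ (s : S) (hs : s.1 ∈ H), Φ ⟨s.1, hs⟩ = f s := by
  obtain ⟨h1, h2⟩ := hS
  let θ : FreeGroup S →* G := FreeGroup.lift (Subtype.val : S → G)
  have hr : θ.range = H := by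
    simp only [θ]
    rw [FreeGroup.range_lift_eq_closure, Subtype.range_coe, h1]
  let e : FreeGroup S ≃* H := (MonoidHom.ofInjective h2).trans (MulEquiv.subgroupCongr hr)
  refine ⟨(FreeGroup.lift f).comp e.symm.toMonoidHom, fun s hs => ?_⟩
  have : e (FreeGroup.of s) = ⟨s.1, hs⟩ := by
    apply Subtype.ext
    change FreeGroup.lift Subtype.val (FreeGroup.of s) = _
    simp
  rw [← this]
  simp

theorem aux_basis_card {G : Type} [Group G] {S S' : Set G} {H : Subgroup G}
    (hS : IsFreeBasis S H) (hS' : Subgroup.closure S' = H) (hfin : S'.Finite) :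
    S.Finite ∧ S.ncard ≤ S'.ncard := by
  have hSK : S' ⊆ H := hS' ▸ Subgroup.subset_closure
  have hSH : S ⊆ H := hS.1 ▸ Subgroup.subset_closure
  have h1 : ((Subtype.val : H → G) ⁻¹' S').ncard = S'.ncard := by
    apply Set.ncard_preimage_of_injective_subset_range Subtype.val_injective
    intro x hx
    exact ⟨⟨x, hSK hx⟩, rfl⟩
  rw [← h1, ← Nat.card_coe_set_eq S]
  apply aux_rank (K := H) _ (hfin.preimage Subtype.val_injective.injOn) _
    (fun s : S => ⟨s.1, hSH s.2⟩)
  · intro f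
    obtain ⟨Φ, hΦ⟩ := aux_basis_lift hS AuxZ2 f
    exact ⟨Φ, fun i => hΦ i _⟩
  · rw [← Subgroup.map_injective (Subgroup.subtype_injective H) |>.eq_iff, MonoidHom.map_closure,
      ← MonoidHom.range_eq_map, Subgroup.range_subtype, Subgroup.coe_subtype,
      Set.image_preimage_eq_of_subset, hS']
    intro x hx
    exact ⟨⟨x, hSK hx⟩, rfl⟩

theorem aux_rk_eq {G : Type} [Group G] {S : Set G} {H : Subgroup G}
    (hS : IsFreeBasis S H) (hH : H.FG) : S.Finite ∧ rk H = S.ncard := by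
  obtain ⟨S', hS'⟩ := hH
  have hfin := fun (U : Set G) (hU : IsFreeBasis U H) => (aux_basis_card hU hS' S'.finite_toSet).1
  refine ⟨hfin S hS, ?_⟩
  have : {n | ∃ S : Set G, IsFreeBasis S H ∧ S.ncard = n} = {S.ncard} := by
    ext n
    simp only [Set.mem_ofPred_eq, Set.mem_singleton_iff]
    constructor
    · rintro ⟨U, hU, rfl⟩
      exact le_antisymm (aux_basis_card hU hS.1 (hfin S hS)).2 (aux_basis_card hS hU.1 (hfin U hU)).2
    · rintro rfl
      exact ⟨S, hS, rfl⟩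
  rw [rk, this, csInf_singleton]

theorem aux_family_basis {G ι : Type} [Group G] (e : ι → G)
    (he : Injective (FreeGroup.lift e : FreeGroup ι →* G)) :
    IsFreeBasis (Set.range e) (Subgroup.closure (Set.range e)) := by
  refine ⟨rfl, ?_⟩
  have hei : Injective e := fun i j h => by
    apply FreeGroup.of_injective
    apply he
    simpa using h
  let E : FreeGroup ι ≃* FreeGroup (Set.range e) := FreeGroup.freeGroupCongr (Equiv.ofInjective e hei)
  have : (FreeGroup.lift (Subtype.val : Set.range e → G)).comp E.toMonoidHom = FreeGroup.lift e := by
    ext i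
    simp [E]
  have h2 : (FreeGroup.lift (Subtype.val : Set.range e → G) : _ → G) = FreeGroup.lift e ∘ E.symm := by
    funext x
    rw [← this]
    simp
  rw [h2]
  exact he.comp E.symm.injective

theorem aux_exists_basis {A : Type} (H : Subgroup (FreeGroup A)) : ∃ S, IsFreeBasis S H := by
  obtain ⟨ι, ⟨b⟩⟩ := IsFreeGroup.nonempty_basis (G := H)
  let e : ι → FreeGroup A := fun i => (b i : FreeGroup A)
  have h1 : FreeGroup.lift e = H.subtype.comp b.repr.symm.toMonoidHom := by
    ext i
    simp [e]
    rfl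
  have h2 : Injective (FreeGroup.lift e : FreeGroup ι →* FreeGroup A) := by
    rw [h1]
    exact (Subgroup.subtype_injective H).comp b.repr.symm.injective
  refine ⟨Set.range e, ?_⟩
  have h3 := aux_family_basis e h2
  have h4 : Subgroup.closure (Set.range e) = H := by
    rw [← FreeGroup.range_lift_eq_closure, h1]
    ext x
    constructor
    · rintro ⟨y, rfl⟩
      exact (b.repr.symm y).2
    · intro hx
      exact ⟨b.repr ⟨x, hx⟩, by simp⟩
  rwa [h4] at h3

/-- If `K` has a generating set of size `m` and contains part `B` of a basis of the ambient group,
it is generated by `B` and `m - |B|` elements. -/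
theorem aux_kurosh {G : Type} [Group G] {B C : Set G} (hC : IsFreeBasis C ⊤) (hBC : B ⊆ C)
    (K : Subgroup G) (S : Set G) (hSfin : S.Finite) (hS : Subgroup.closure S = K)
    (hBK : B ⊆ K) :
    ∃ T : Set G, T.Finite ∧ Subgroup.closure (B ∪ T) = K ∧ T.ncard + B.ncard ≤ S.ncard := by
  refine aux_schreier C hC.1 ?_ K S hSfin hS B hBC hBK
  intro P _ f
  obtain ⟨Φ, hΦ⟩ := aux_basis_lift hC P f
  exact ⟨Φ.comp (Subgroup.topEquiv (G := G)).symm.toMonoidHom, fun c => hΦ c trivial⟩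

/-- If a finite-rank free factor `F(A₀)` is generated by a basis of `H` and the right number of
further elements, then `H` is a free factor. -/
theorem aux_ff_of_gen {A : Type} (A0 : Set A) (hA0 : A0.Finite) (H : Subgroup (FreeGroup A))
    (B : Set (FreeGroup A)) (hB : IsFreeBasis B H) (hBf : B.Finite) (d : ℕ)
    (g : Fin d → FreeGroup A) (hd : B.ncard + d = A0.ncard)
    (hgen : Subgroup.closure (B ∪ Set.range g) = Subgroup.closure (FreeGroup.of '' A0)) :
    FreeFactor H ⊤ := by
  classical
  have : Finite A0 := hA0
  have : Finite B := hBf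
  let I := B ⊕ Fin d
  let e : I → FreeGroup A := Sum.elim Subtype.val g
  have hre : Set.range e = B ∪ Set.range g := by
    ext x
    constructor
    · rintro ⟨i | i, rfl⟩
      · exact Or.inl i.2
      · exact Or.inr ⟨i, rfl⟩
    · rintro (h | ⟨i, rfl⟩)
      · exact ⟨Sum.inl ⟨x, h⟩, rfl⟩
      · exact ⟨Sum.inr i, rfl⟩
  have hcard : Nat.card I = Nat.card A0 := by
    simp [I, Nat.card_sum, hd]
  let E : I ≃ A0 := (Finite.card_eq.1 hcard).some
  let ι : FreeGroup A0 →* FreeGroup A := FreeGroup.map Subtype.val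
  have hιi : Injective ι := FreeGroup.map_injective Subtype.val_injective
  have hιr : ι.range = Subgroup.closure (FreeGroup.of '' A0) := by
    rw [FreeGroup.range_map, Subtype.range_coe]
  have hmem : ∀ i, ∃ y, ι y = e i := by
    intro i
    have : e i ∈ ι.range := by
      rw [hιr, ← hgen, ← hre]
      exact Subgroup.subset_closure ⟨i, rfl⟩
    exact this
  choose e' he' using hmem
  let ψ : FreeGroup I →* FreeGroup A0 := FreeGroup.lift e'
  have hψι : ι.comp ψ = FreeGroup.lift e := by
    ext i; simp [ψ, he']
  have hψs : Surjective ψ := by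
    intro y
    have : ι y ∈ (FreeGroup.lift e).range := by
      rw [FreeGroup.range_lift_eq_closure, hre, hgen, ← hιr]
      exact ⟨y, rfl⟩
    obtain ⟨x, hx⟩ := this
    refine ⟨x, hιi ?_⟩
    rw [← hx, ← hψι]; rfl
  have hψi : Injective ψ := aux_hopf' E ψ hψs
  let Ψ : FreeGroup I ≃* FreeGroup A0 := MulEquiv.ofBijective ψ ⟨hψi, hψs⟩
  let J := I ⊕ {a : A // a ∉ A0}
  let ε : J → FreeGroup A := Sum.elim e (fun a => FreeGroup.of a.1)
  let ret : FreeGroup A →* FreeGroup J := FreeGroup.lift fun a =>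
    if h : a ∈ A0 then FreeGroup.map Sum.inl (Ψ.symm (FreeGroup.of ⟨a, h⟩))
    else FreeGroup.of (Sum.inr ⟨a, h⟩)
  have hret1 : ret.comp ι = (FreeGroup.map Sum.inl).comp Ψ.symm.toMonoidHom := by
    ext a
    simp [ret, ι]
  have hret : ret.comp (FreeGroup.lift ε) = MonoidHom.id _ := by
    ext j
    rcases j with i | a
    · simp only [MonoidHom.comp_apply, FreeGroup.lift_apply_of, MonoidHom.id_apply]
      change ret (e i) = _
      rw [← he', ← MonoidHom.comp_apply, hret1]
      have : e' i = Ψ (FreeGroup.of i) := by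
        change e' i = ψ (FreeGroup.of i)
        simp [ψ]
      rw [this]
      simp
    · simp [ε, ret, a.2]
  have hεi : Injective (FreeGroup.lift ε : FreeGroup J →* FreeGroup A) := by
    intro x y hxy
    have := congrArg ret hxy
    simpa [← MonoidHom.comp_apply, hret] using this
  have hb := aux_family_basis ε hεi
  have htop : Subgroup.closure (Set.range ε) = ⊤ := by
    rw [eq_top_iff, ← FreeGroup.closure_range_of, Subgroup.closure_le]
    rintro _ ⟨a, rfl⟩
    by_cases ha : a ∈ A0
    · have h1 : FreeGroup.of a ∈ Subgroup.closure (B ∪ Set.range g) := by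
        rw [hgen]; exact Subgroup.subset_closure ⟨a, ha, rfl⟩
      refine Subgroup.closure_mono ?_ h1
      rw [← hre]
      rintro _ ⟨i, rfl⟩
      exact ⟨Sum.inl i, rfl⟩
    · exact Subgroup.subset_closure ⟨Sum.inr ⟨a, ha⟩, rfl⟩
  rw [htop] at hb
  exact ⟨B, Set.range ε, hB, hb, fun b hb => ⟨Sum.inl (Sum.inl ⟨b, hb⟩), rfl⟩⟩

theorem aux_rank_lower {A : Type} (A0 : Set A) (hA0 : A0.Finite)
    (S : Set (FreeGroup A)) (hS : S.Finite)
    (hgen : Subgroup.closure (FreeGroup.of '' A0) ≤ Subgroup.closure S) :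
    A0.ncard ≤ S.ncard := by
  classical
  let π : FreeGroup A →* FreeGroup A0 :=
    FreeGroup.lift fun a => if h : a ∈ A0 then FreeGroup.of ⟨a, h⟩ else 1
  have h := aux_rank (π '' S) (hS.image π) ?_ (fun a : A0 => FreeGroup.of a)
    (fun f => ⟨FreeGroup.lift f, fun i => by simp⟩)
  · rw [← Nat.card_coe_set_eq]
    exact h.2.trans (Set.ncard_image_le hS)
  · rw [eq_top_iff, ← FreeGroup.closure_range_of, Subgroup.closure_le, ← MonoidHom.map_closure]
    rintro _ ⟨a, rfl⟩
    exact ⟨FreeGroup.of a.1, hgen (Subgroup.subset_closure ⟨a.1, a.2, rfl⟩), by simp [π]⟩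

/-! ### Automata -/

namespace Autom

variable {A : Type}

/-- The invariants kept along i-steps. -/
structure AuxInv (M : Autom A) : Prop where
  dual : M.Dual
  conn : ∀ q, ∃ u, M.Path M.q0 u q
  deg : ∀ q, q ≠ M.q0 → ∃ a b r s, a ≠ b ∧ (q, a, r) ∈ M.E ∧ (q, b, s) ∈ M.E

/-- The set of letters of an automaton. -/
def auxLet (M : Autom A) : Set A := {a | ∃ p b q, (p, (a, b), q) ∈ M.E}

/-- `N` is the quotient of `M` along `φ`. -/
structure AuxQuot (M N : Autom A) (φ : M.Q → N.Q) : Prop where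
  surj : Surjective φ
  init : φ M.q0 = N.q0
  edge : ∀ e : N.Q × Ltr A × N.Q, e ∈ N.E ↔ ∃ e' ∈ M.E, e = (φ e'.1, e'.2.1, φ e'.2.2)

theorem AuxQuot.map {M N : Autom A} {φ : M.Q → N.Q} (h : AuxQuot M N φ) {p q : M.Q} {a : Ltr A}
    (he : (p, a, q) ∈ M.E) : (φ p, a, φ q) ∈ N.E :=
  (h.edge _).2 ⟨_, he, rfl⟩

theorem AuxQuot.lift {M N : Autom A} {φ : M.Q → N.Q} (h : AuxQuot M N φ) {p q : N.Q} {a : Ltr A}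
    (he : (p, a, q) ∈ N.E) : ∃ p' q', (p', a, q') ∈ M.E ∧ φ p' = p ∧ φ q' = q := by
  obtain ⟨⟨p', a', q'⟩, he', heq⟩ := (h.edge _).1 he
  simp only [Prod.mk.injEq] at heq
  obtain ⟨rfl, rfl, rfl⟩ := heq
  exact ⟨p', q', he', rfl, rfl⟩

theorem AuxQuot.refl (M : Autom A) : AuxQuot M M id :=
  ⟨surjective_id, rfl, fun e => ⟨fun h => ⟨e, h, rfl⟩, by rintro ⟨e', h, rfl⟩; exact h⟩⟩

theorem AuxQuot.comp {M N K : Autom A} {φ : M.Q → N.Q} {ψ : N.Q → K.Q} (h : AuxQuot M N φ)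
    (h' : AuxQuot N K ψ) : AuxQuot M K (ψ ∘ φ) := by
  refine ⟨h'.surj.comp h.surj, by simp [h.init, h'.init], fun e => ⟨fun he => ?_, ?_⟩⟩
  · obtain ⟨p, a, q⟩ := e
    obtain ⟨p', q', he', rfl, rfl⟩ := h'.lift he
    obtain ⟨p'', q'', he'', rfl, rfl⟩ := h.lift he'
    exact ⟨_, he'', rfl⟩
  · rintro ⟨⟨p, a, q⟩, he, rfl⟩
    exact h'.map (h.map he)

theorem AuxQuot.path {M N : Autom A} {φ : M.Q → N.Q} (h : AuxQuot M N φ) {p q : M.Q}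
    {u : List (Ltr A)} (hp : M.Path p u q) : N.Path (φ p) u (φ q) := by
  unfold Path at hp ⊢
  induction hp with
  | nil => exact PathOn.nil _
  | cons he _ ih => exact PathOn.cons (h.map he) ih

theorem AuxQuot.inv {M N : Autom A} {φ : M.Q → N.Q} (h : AuxQuot M N φ) (hM : AuxInv M) :
    AuxInv N := by
  refine ⟨?_, ?_, ?_⟩
  · have key : ∀ p a q, (p, a, q) ∈ N.E → (q, Ltr.inv a, p) ∈ N.E := by
      intro p a q he
      obtain ⟨p', q', he', rfl, rfl⟩ := h.lift he
      exact h.map ((hM.dual _ _ _).1 he')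
    intro p a q
    refine ⟨key p a q, fun he => ?_⟩
    have := key _ _ _ he
    simpa [Ltr.inv] using this
  · intro q
    obtain ⟨q, rfl⟩ := h.surj q
    obtain ⟨u, hu⟩ := hM.conn q
    exact ⟨u, h.init ▸ h.path hu⟩
  · intro q hq
    obtain ⟨q, rfl⟩ := h.surj q
    obtain ⟨a, b, r, s, hab, h1, h2⟩ := hM.deg q (by rintro rfl; exact hq h.init)
    exact ⟨a, b, _, _, hab, h.map h1, h.map h2⟩

theorem AuxQuot.letters {M N : Autom A} {φ : M.Q → N.Q} (h : AuxQuot M N φ) :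
    N.auxLet = M.auxLet := by
  ext a
  constructor
  · rintro ⟨p, b, q, he⟩
    obtain ⟨p', q', he', rfl, rfl⟩ := h.lift he
    exact ⟨p', b, q', he'⟩
  · rintro ⟨p, b, q, he⟩
    exact ⟨_, b, _, h.map he⟩

/-- `M` maps to the Schreier graph of `L`. -/
def AuxCohAt (M : Autom A) (L : Subgroup (FreeGroup A)) (τ : M.Q → FreeGroup A) : Prop :=
  τ M.q0 ∈ L ∧ ∀ p a q, (p, a, q) ∈ M.E → τ p * FreeGroup.mk [a] * (τ q)⁻¹ ∈ L

def AuxCoh (M : Autom A) (L : Subgroup (FreeGroup A)) : Prop := ∃ τ, M.AuxCohAt L τ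

theorem AuxCohAt.path {M : Autom A} {L : Subgroup (FreeGroup A)} {τ : M.Q → FreeGroup A}
    (h : M.AuxCohAt L τ) {p q : M.Q} {u : List (Ltr A)} (hp : M.Path p u q) :
    τ p * FreeGroup.mk u * (τ q)⁻¹ ∈ L := by
  unfold Path at hp
  induction hp with
  | nil q =>
    have : (FreeGroup.mk [] : FreeGroup A) = 1 := rfl
    simp [this]
  | @cons p q r a w he _ ih =>
    have h1 := L.mul_mem (h.2 _ _ _ he) ih
    have h2 : (FreeGroup.mk (a :: w) : FreeGroup A) = FreeGroup.mk [a] * FreeGroup.mk w := by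
      simp [FreeGroup.mul_mk]
    rw [h2]
    convert h1 using 1
    group

theorem AuxCoh.langRho {M : Autom A} {L : Subgroup (FreeGroup A)} (h : M.AuxCoh L) :
    M.langRho ⊆ L := by
  obtain ⟨τ, h⟩ := h
  rintro _ ⟨w, hw, rfl⟩
  have h1 := h.path hw
  have h2 := L.mul_mem (L.mul_mem (L.inv_mem h.1) h1) h.1
  change FreeGroup.mk w ∈ L
  convert h2 using 1
  group

theorem AuxCohAt.quot {M N : Autom A} {φ : M.Q → N.Q} (hq : AuxQuot M N φ)
    {L : Subgroup (FreeGroup A)} {τ : M.Q → FreeGroup A}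
    (h : M.AuxCohAt L τ) (hc : ∀ x y, φ x = φ y → τ x * (τ y)⁻¹ ∈ L) : N.AuxCoh L := by
  obtain ⟨s, hs⟩ := hq.surj.hasRightInverse
  refine ⟨fun x => τ (s x), ?_, ?_⟩
  · have := hc (s N.q0) M.q0 (by rw [hs, hq.init])
    have h2 := L.mul_mem this h.1
    simpa using h2
  · intro p a q he
    obtain ⟨p', q', he', rfl, rfl⟩ := hq.lift he
    have h1 := hc (s (φ p')) p' (by rw [hs])
    have h2 := hc q' (s (φ q')) (by rw [hs])
    have h3 := L.mul_mem (L.mul_mem h1 (h.2 _ _ _ he')) h2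
    convert h3 using 1
    group

theorem aux_path_append {M : Autom A} {T : Set (M.Q × Ltr A × M.Q)} {p q r : M.Q}
    {u v : List (Ltr A)} (h1 : M.PathOn T p u q) (h2 : M.PathOn T q v r) :
    M.PathOn T p (u ++ v) r := by
  induction h1 with
  | nil => exact h2
  | cons he _ ih => exact PathOn.cons he (ih h2)

theorem aux_path_inv {M : Autom A} (hd : M.Dual) {p q : M.Q} {u : List (Ltr A)}
    (h1 : M.Path p u q) : M.Path q (FreeGroup.invRev u) p := by
  unfold Path at h1 ⊢
  induction h1 with
  | nil => exact PathOn.nil _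
  | @cons p q r a w he _ ih =>
    have : FreeGroup.invRev (a :: w) = FreeGroup.invRev w ++ [Ltr.inv a] := by
      simp [FreeGroup.invRev, Ltr.inv]
    rw [this]
    exact aux_path_append ih (PathOn.cons ((hd _ _ _).1 he) (PathOn.nil _))

theorem AuxInv.exists_coh {M : Autom A} (hM : M.AuxInv) (L : Subgroup (FreeGroup A))
    (hL : M.langRho ⊆ L) : ∃ τ, M.AuxCohAt L τ ∧
      ∀ q, ∃ u, M.Path M.q0 u q ∧ τ q = FreeGroup.mk u := by
  choose u hu using hM.conn
  refine ⟨fun q => FreeGroup.mk (u q), ⟨?_, ?_⟩, fun q => ⟨_, hu q, rfl⟩⟩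
  · exact hL ⟨_, hu _, rfl⟩
  · intro p a q he
    refine hL ⟨u p ++ [a] ++ FreeGroup.invRev (u q), ?_, ?_⟩
    · exact aux_path_append (aux_path_append (hu p) (PathOn.cons he (PathOn.nil _)))
        (aux_path_inv hM.dual (hu q))
    · simp [FreeGroup.mul_mk, FreeGroup.inv_mk]

theorem aux_path_mem {M : Autom A} {p q : M.Q} {u : List (Ltr A)}
    (h : M.Path p u q) : FreeGroup.mk u ∈ Subgroup.closure (FreeGroup.of '' M.auxLet) := by
  unfold Path at h
  induction h with
  | nil => exact Subgroup.one_mem _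
  | @cons p q r a w he _ ih =>
    have h2 : (FreeGroup.mk (a :: w) : FreeGroup A) = FreeGroup.mk [a] * FreeGroup.mk w := by
      simp [FreeGroup.mul_mk]
    rw [h2]
    refine Subgroup.mul_mem _ ?_ ih
    have h3 : FreeGroup.of a.1 ∈ Subgroup.closure (FreeGroup.of '' M.auxLet) :=
      Subgroup.subset_closure ⟨a.1, ⟨p, a.2, q, he⟩, rfl⟩
    obtain ⟨a, b⟩ := a
    cases b
    · exact Subgroup.inv_mem _ h3
    · exact h3

theorem aux_ident {M N : Autom A} {p q : M.Q} (h : M.IsIdentification p q N) :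
    ∃ φ, AuxQuot M N φ ∧ φ p = φ q ∧ ∀ L τ, M.AuxCohAt L τ → τ p * (τ q)⁻¹ ∈ L → N.AuxCoh L := by
  obtain ⟨φ, h1, h2, h3, h4⟩ := h
  have hq : AuxQuot M N φ := ⟨h1, h2, h4⟩
  refine ⟨φ, hq, (h3 p q).2 (by simp), fun L τ hτ hpq => hτ.quot hq ?_⟩
  intro x y hxy
  rcases (h3 x y).1 hxy with rfl | ⟨rfl, rfl⟩ | ⟨rfl, rfl⟩
  · simp
  · exact hpq
  · simpa using L.inv_mem hpq

theorem aux_red1 {M N : Autom A} (h : Red1 M N) :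
    ∃ φ, AuxQuot M N φ ∧ ∀ L, M.AuxCoh L → N.AuxCoh L := by
  obtain ⟨p, q, r, a, -, hp, hq, h⟩ := h
  obtain ⟨φ, h1, -, h2⟩ := aux_ident h
  refine ⟨φ, h1, fun L ⟨τ, hτ⟩ => h2 L τ hτ ?_⟩
  have := L.mul_mem (L.inv_mem (hτ.2 _ _ _ hp)) (hτ.2 _ _ _ hq)
  convert this using 1
  group

theorem aux_red1s {M N : Autom A} (h : Relation.ReflTransGen Red1 M N) :
    ∃ φ, AuxQuot M N φ ∧ ∀ L, M.AuxCoh L → N.AuxCoh L := by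
  induction h with
  | refl => exact ⟨id, AuxQuot.refl _, fun _ h => h⟩
  | tail _ h ih =>
    obtain ⟨φ, h1, h2⟩ := ih
    obtain ⟨ψ, h3, h4⟩ := aux_red1 h
    exact ⟨ψ ∘ φ, h1.comp h3, fun L hL => h4 L (h2 L hL)⟩

theorem aux_last {M : Autom A} {T : Set (M.Q × Ltr A × M.Q)} {p q : M.Q} {u : List (Ltr A)}
    (h : M.PathOn T p u q) : (u = [] ∧ p = q) ∨
      ∃ u' a r, u = u' ++ [a] ∧ M.PathOn T p u' r ∧ (r, a, q) ∈ T := by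
  induction h with
  | nil => exact Or.inl ⟨rfl, rfl⟩
  | @cons p q r a w he h ih =>
    right
    rcases ih with ⟨rfl, rfl⟩ | ⟨u', b, s, rfl, h1, h2⟩
    · exact ⟨[], a, p, rfl, PathOn.nil _, he⟩
    · exact ⟨a :: u', b, s, rfl, PathOn.cons he h1, h2⟩

theorem AuxInv.enter {M : Autom A} (hM : M.AuxInv) {q : M.Q} (hq : q ≠ M.q0) :
    ∃ r a, r ≠ q ∧ (r, a, q) ∈ M.E := by
  obtain ⟨u, hu⟩ := hM.conn q
  unfold Path at hu
  have key : ∀ (p q : M.Q) u, M.PathOn M.E p u q → q ≠ p → ∃ r a, r ≠ q ∧ (r, a, q) ∈ M.E := by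
    intro p q u h
    induction h with
    | nil => exact fun h => absurd rfl h
    | @cons p q r a w he h ih =>
      intro hrp
      by_cases hrq : r = q
      · subst hrq
        exact ⟨p, a, hrp.symm, he⟩
      · exact ih hrq
  exact key _ _ _ hu hq

theorem AuxInv.not_red2 {M : Autom A} (hM : M.AuxInv) (N : Autom A) : ¬ Red2 M N := by
  rintro ⟨p, q, a, hq, h1, h2, h3, -⟩
  obtain ⟨r, b, hr, he⟩ := hM.enter hq
  have hpq : p ≠ q := by
    rintro rfl
    rcases h3 _ he (Or.inr rfl) with h | h <;> simp only [Prod.mk.injEq] at h <;> exact hr h.1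
  obtain ⟨c, d, s, t, hcd, hc, hd⟩ := hM.deg q hq
  have : ∀ c s, (q, c, s) ∈ M.E → c = Ltr.inv a := by
    intro c s hc
    rcases h3 _ hc (Or.inl rfl) with h | h <;> simp only [Prod.mk.injEq] at h
    · exact absurd h.1.symm hpq
    · exact h.2.1
  exact hcd ((this _ _ hc).trans (this _ _ hd).symm)

theorem AuxInv.red2s {M N : Autom A} (hM : M.AuxInv) (h : Relation.ReflTransGen Red2 M N) :
    M = N := by
  rcases Relation.ReflTransGen.cases_head h with h | ⟨K, h, -⟩
  · exact h
  · exact absurd h (hM.not_red2 K)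

theorem aux_iso {M N : Autom A} (h : M.Isomorphic N) :
    ∃ φ, AuxQuot M N φ ∧ Injective φ ∧ ∀ L, M.AuxCoh L → N.AuxCoh L := by
  obtain ⟨φ, h1, h2⟩ := h
  have hq : AuxQuot M N φ := by
    refine ⟨φ.surjective, h1.1, fun e => ⟨fun he => ?_, ?_⟩⟩
    · obtain ⟨p, a, q⟩ := e
      exact ⟨_, h2.2 _ _ _ he, by simp⟩
    · rintro ⟨⟨p, a, q⟩, he, rfl⟩
      exact h1.2 _ _ _ he
  refine ⟨φ, hq, φ.injective, fun L ⟨τ, hτ⟩ => hτ.quot hq ?_⟩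
  intro x y hxy
  rw [φ.injective hxy]
  simp

theorem AuxInv.istep {M N : Autom A} (hM : M.AuxInv) {p q : M.Q} (h : M.IStep p q N) :
    ∃ φ, AuxQuot M N φ ∧ φ p = φ q ∧ N.Deterministic ∧
      ∃ g ∈ Subgroup.closure (FreeGroup.of '' M.auxLet),
        N.langRho ⊆ Subgroup.closure (M.langRho ∪ {g}) := by
  obtain ⟨-, N', N'', h1, ⟨M₁, h2, h3, h4, -⟩, h5⟩ := h
  obtain ⟨φ, hφ, hpq, hφc⟩ := aux_ident h1
  obtain ⟨ψ, hψ, hψc⟩ := aux_red1s h2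
  have := ((hφ.comp hψ).inv hM).red2s h4
  subst this
  obtain ⟨χ, hχ, hχi, hχc⟩ := aux_iso h5
  refine ⟨χ ∘ ψ ∘ φ, (hφ.comp hψ).comp hχ, by simp [hpq], ?_, ?_⟩
  · intro p a q q' he he'
    obtain ⟨x, y, hxy, rfl, rfl⟩ := hχ.lift he
    obtain ⟨x', y', hxy', hx, rfl⟩ := hχ.lift he'
    have := hχi hx
    subst this
    rw [h3 _ _ _ _ hxy hxy']
  · obtain ⟨τ, -, hτu⟩ := hM.exists_coh ⊤ (fun _ _ => trivial)
    obtain ⟨τ, hτ, hτu⟩ := hM.exists_coh (Subgroup.closure M.langRho) Subgroup.subset_closure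
    refine ⟨τ p * (τ q)⁻¹, ?_, ?_⟩
    · obtain ⟨u, hu, hu'⟩ := hτu p
      obtain ⟨v, hv, hv'⟩ := hτu q
      rw [hu', hv']
      exact Subgroup.mul_mem _ (aux_path_mem hu) (Subgroup.inv_mem _ (aux_path_mem hv))
    · apply AuxCoh.langRho
      apply hχc
      apply hψc
      apply hφc _ τ
      · have hle : Subgroup.closure M.langRho ≤
          Subgroup.closure (M.langRho ∪ {τ p * (τ q)⁻¹}) :=
            Subgroup.closure_mono Set.subset_union_left
        exact ⟨hle hτ.1, fun p a q he => hle (hτ.2 p a q he)⟩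
      · exact Subgroup.subset_closure (Or.inr rfl)

theorem aux_inv_of_represents {M : Autom A} {H : Subgroup (FreeGroup A)} (h : M.Represents H) :
    M.AuxInv := by
  obtain ⟨⟨h1, h2, h3⟩, h4, -⟩ := h
  refine ⟨h3, fun q => ?_, fun q hq => ?_⟩
  · obtain ⟨u, -, hu, -⟩ := h2 q
    exact ⟨u, hu⟩
  · obtain ⟨u, v, huv, hu, hv⟩ := h4 q
    rcases aux_last hu with ⟨-, h⟩ | ⟨u', a, r, rfl, -, he⟩
    · exact absurd h.symm hq
    unfold Path at hv
    cases hv with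
    | nil => exact absurd rfl hq
    | @cons _ s _ b w he' _ =>
      refine ⟨Ltr.inv a, b, r, s, ?_, (h3 _ _ _).1 he, he'⟩
      rintro rfl
      exact huv u' w a.1 a.2 (by simp [Ltr.inv])

/-- Several i-steps. -/
inductive AuxSteps : ℕ → Autom A → Autom A → Prop
  | refl (M : Autom A) : AuxSteps 0 M M
  | head {n : ℕ} {M N K : Autom A} : IStepAny M N → AuxSteps n N K → AuxSteps (n + 1) M K

theorem aux_steps_of_fun (n : ℕ) : ∀ (f : ℕ → Autom A),
    (∀ i < n, IStepAny (f i) (f (i + 1))) → AuxSteps n (f 0) (f n) := by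
  induction n with
  | zero => intro f _; exact AuxSteps.refl _
  | succ n ih =>
    intro f hf
    exact AuxSteps.head (hf 0 (by omega)) (ih (fun i => f (i + 1)) fun i hi => hf (i + 1) (by omega))

theorem aux_fun_of_steps {n : ℕ} {M N : Autom A} (h : AuxSteps n M N) :
    ∃ f : ℕ → Autom A, f 0 = M ∧ (∀ i < n, IStepAny (f i) (f (i + 1))) ∧ f n = N := by
  induction h with
  | refl M => exact ⟨fun _ => M, rfl, by simp, rfl⟩
  | @head n M N K h _ ih =>
    obtain ⟨f, h0, h1, h2⟩ := ih
    refine ⟨fun i => Nat.casesOn i M f, rfl, ?_, h2⟩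
    intro i hi
    cases i with
    | zero => simpa [h0] using h
    | succ i => exact h1 i (by omega)

theorem aux_steps_gen {n : ℕ} {M N : Autom A} (h : AuxSteps n M N) (hM : M.AuxInv) :
    N.AuxInv ∧ N.auxLet = M.auxLet ∧ ∃ g : Fin n → FreeGroup A,
      (∀ i, g i ∈ Subgroup.closure (FreeGroup.of '' M.auxLet)) ∧
      N.langRho ⊆ Subgroup.closure (M.langRho ∪ Set.range g) := by
  induction h with
  | refl M => exact ⟨hM, rfl, Fin.elim0, fun i => i.elim0, fun x hx =>
      Subgroup.subset_closure (Or.inl hx)⟩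
  | @head n M N K h _ ih =>
    obtain ⟨p, q, h⟩ := h
    obtain ⟨φ, hφ, -, -, g, hg, hgl⟩ := hM.istep h
    obtain ⟨h1, h2, g', hg', hgl'⟩ := ih (hφ.inv hM)
    rw [hφ.letters] at h2 hg'
    refine ⟨h1, h2, Fin.cons g g', ?_, ?_⟩
    · intro i
      refine Fin.cases hg hg' i
    · refine hgl'.trans ?_
      rw [SetLike.coe_subset_coe, Subgroup.closure_le]
      rintro x (hx | ⟨i, rfl⟩)
      · refine Subgroup.closure_mono ?_ (hgl hx)
        rintro y (hy | rfl)
        · exact Or.inl hy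
        · exact Or.inr ⟨0, rfl⟩
      · exact Subgroup.subset_closure (Or.inr ⟨i.succ, by simp⟩)

theorem aux_one_state {N : Autom A} (h : Nat.card N.Q = 1) :
    FreeGroup.of '' N.auxLet ⊆ (Subgroup.closure N.langRho : Set (FreeGroup A)) := by
  rintro _ ⟨a, ⟨p, b, q, he⟩, rfl⟩
  have hs : Subsingleton N.Q := (Nat.card_eq_one_iff_unique.1 h).1
  have : FreeGroup.mk [(a, b)] ∈ N.langRho := by
    refine ⟨[(a, b)], ?_, rfl⟩
    rw [Subsingleton.elim p N.q0, Subsingleton.elim q N.q0] at he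
    exact PathOn.cons he (PathOn.nil _)
  have h2 := Subgroup.subset_closure this
  cases b
  · have := Subgroup.inv_mem _ h2
    rw [FreeGroup.inv_mk] at this
    exact this
  · exact h2

end Autom

namespace Autom

variable {A : Type}

theorem aux_exists_ident (M : Autom A) [Finite M.Q] {p q : M.Q} (hpq : p ≠ q) :
    ∃ N, M.IsIdentification p q N ∧ Finite N.Q ∧ Nat.card N.Q < Nat.card M.Q := by
  classical
  let φ : M.Q → {x : M.Q // x ≠ q} := fun x =>
    if h : x = q then ⟨p, hpq⟩ else ⟨x, h⟩
  let N : Autom A := ⟨{x : M.Q // x ≠ q}, φ M.q0,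
    {e | ∃ e' ∈ M.E, e = (φ e'.1, e'.2.1, φ e'.2.2)}⟩
  refine ⟨N, ⟨φ, ?_, rfl, ?_, fun e => Iff.rfl⟩, ?_, ?_⟩
  · rintro ⟨x, hx⟩
    exact ⟨x, by simp [φ, hx]⟩
  · intro x y
    have hv : ∀ x, (φ x).1 = if x = q then p else x := by
      intro x
      simp only [φ]
      split <;> rfl
    refine Subtype.ext_iff.trans ?_
    rw [hv, hv]
    grind
  · exact Subtype.finite
  · exact Finite.card_subtype_lt (x := q) (by simp)

theorem aux_exists_red1s (n : ℕ) : ∀ (M : Autom A) [Finite M.Q], Nat.card M.Q = n →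
    ∃ N, Relation.ReflTransGen Red1 M N ∧ N.Deterministic ∧ Finite N.Q := by
  induction n using Nat.strong_induction_on with
  | _ n ih =>
    intro M hf hn
    by_cases hd : M.Deterministic
    · exact ⟨M, Relation.ReflTransGen.refl, hd, hf⟩
    · unfold Deterministic at hd
      push Not at hd
      obtain ⟨r, a, p, q, hp, hq, hpq⟩ := hd
      obtain ⟨N, h1, h2, h3⟩ := aux_exists_ident M hpq
      obtain ⟨K, h4, h5, h6⟩ := ih _ (hn ▸ h3) N rfl
      exact ⟨K, Relation.ReflTransGen.head ⟨p, q, r, a, hpq, hp, hq, h1⟩ h4, h5, h6⟩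

theorem AuxInv.exists_istep {M : Autom A} (hM : M.AuxInv) [Finite M.Q] {p q : M.Q} (hpq : p ≠ q) :
    ∃ N, M.IStep p q N ∧ Finite N.Q := by
  obtain ⟨N', h1, h2, -⟩ := aux_exists_ident M hpq
  obtain ⟨N, h3, h4, h5⟩ := aux_exists_red1s _ N' rfl
  refine ⟨N, ⟨hpq, N', N, h1, ⟨N, h3, h4, Relation.ReflTransGen.refl, ?_⟩,
    Equiv.refl _, ⟨rfl, fun _ _ _ h => h⟩, ⟨rfl, fun _ _ _ h => h⟩⟩, h5⟩
  obtain ⟨φ, hφ, -, -⟩ := aux_ident h1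
  obtain ⟨ψ, hψ, -⟩ := aux_red1s h3
  exact fun K => ((hφ.comp hψ).inv hM).not_red2 K

end Autom

/-! ### Systems of permutations -/

/-- Every solution of the system is constant. -/
def AuxTot {A W : Type} (E : Set (W × A × W)) (P : List (W × W))
    (R : List (W × List (Ltr A) × W)) : Prop :=
  ∀ (X : Type) (σ : A → Equiv.Perm X) (θ : W → X),
    (∀ x a y, (x, a, y) ∈ E → θ x = σ a (θ y)) → (∀ x y, (x, y) ∈ P → θ x = θ y) →
    (∀ x w y, (x, w, y) ∈ R → θ x = FreeGroup.lift σ (FreeGroup.mk w) (θ y)) →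
    ∀ x y, θ x = θ y

theorem aux_tot_edges {A W : Type} [Finite W] (Eb : Set (W × A × W)) (n : ℕ) :
    ∀ (E' : List (W × A × W)) (P : List (W × W)), E'.length = n →
      (∀ x a y, (x, a, y) ∈ E' → ∃ x' y', (x', a, y') ∈ Eb) →
      AuxTot (Eb ∪ {e | e ∈ E'}) P [] →
      ∃ P' : List (W × W), P'.length ≤ P.length + n ∧ AuxTot Eb P' [] := by
  induction n with
  | zero =>
    intro E' P hn _ hT
    have : E' = [] := List.length_eq_zero_iff.1 hn
    subst this
    refine ⟨P, le_rfl, ?_⟩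
    simpa using hT
  | succ n ih =>
    intro E' P hn hlet hT
    let R0 : W → W → Prop := fun u v => ∀ (X : Type) (σ : A → Equiv.Perm X) (θ : W → X),
      (∀ x a y, (x, a, y) ∈ Eb → θ x = σ a (θ y)) → (∀ x y, (x, y) ∈ P → θ x = θ y) →
      θ u = θ v
    have hsymm : ∀ u v, R0 u v → R0 v u := fun u v h X σ θ h1 h2 => (h X σ θ h1 h2).symm
    have htrans : ∀ u v w, R0 u v → R0 v w → R0 u w := fun u v w h h' X σ θ h1 h2 =>
      (h X σ θ h1 h2).trans (h' X σ θ h1 h2)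
    by_cases hex : ∃ l1 l2 x a y x' y', E' = l1 ++ (x, a, y) :: l2 ∧
        (x', a, y') ∈ Eb ∪ {e | e ∈ l1 ++ l2} ∧ (R0 x x' ∨ R0 y y')
    · obtain ⟨l1, l2, x, a, y, x', y', rfl, hf, hR⟩ := hex
      have hlen : (l1 ++ l2).length = n := by
        simp at hn ⊢; omega
      have hlet' : ∀ x a y, (x, a, y) ∈ l1 ++ l2 → ∃ x' y', (x', a, y') ∈ Eb := by
        intro x a y h
        apply hlet x a y
        simp at h ⊢
        tauto
      have key : ∀ pr : W × W, (pr = (x, x') ∧ R0 y y' ∨ pr = (y, y') ∧ R0 x x') →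
          AuxTot (Eb ∪ {e | e ∈ l1 ++ l2}) (pr :: P) [] := by
        intro pr hpr X σ θ h1 h2 h3
        have hE : ∀ x a y, (x, a, y) ∈ Eb → θ x = σ a (θ y) :=
          fun x a y h => h1 x a y (Or.inl h)
        have hP : ∀ x y, (x, y) ∈ P → θ x = θ y :=
          fun x y h => h2 x y (List.mem_cons_of_mem _ h)
        have hxy : θ x = θ x' ∧ θ y = θ y' := by
          rcases hpr with ⟨rfl, hpr⟩ | ⟨rfl, hpr⟩
          · exact ⟨h2 _ _ List.mem_cons_self, hpr X σ θ hE hP⟩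
          · exact ⟨hpr X σ θ hE hP, h2 _ _ List.mem_cons_self⟩
        refine hT X σ θ ?_ hP h3
        rintro u b v (h | h)
        · exact hE _ _ _ h
        · have h' : (u, b, v) = (x, a, y) ∨ (u, b, v) ∈ l1 ++ l2 := by
            have : (u, b, v) ∈ l1 ++ (x, a, y) :: l2 := h
            simp only [List.mem_append, List.mem_cons] at this ⊢
            tauto
          rcases h' with h | h
          · simp only [Prod.mk.injEq] at h
            obtain ⟨rfl, rfl, rfl⟩ := h
            rw [hxy.1, hxy.2]
            exact h1 _ _ _ hf
          · exact h1 _ _ _ (Or.inr h)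
      rcases hR with hR | hR
      · obtain ⟨P', hP', hT'⟩ := ih _ _ hlen hlet' (key (y, y') (Or.inr ⟨rfl, hR⟩))
        exact ⟨P', by simp at hP'; omega, hT'⟩
      · obtain ⟨P', hP', hT'⟩ := ih _ _ hlen hlet' (key (x, x') (Or.inl ⟨rfl, hR⟩))
        exact ⟨P', by simp at hP'; omega, hT'⟩
    · exfalso
      have hex' : ∀ x a y x' y', (x, a, y) ∈ E' → (x', a, y') ∈ Eb ∪ {e | e ∈ E'} →
          (x, a, y) ≠ (x', a, y') → ¬ (R0 x x' ∨ R0 y y') := by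
        intro x a y x' y' he hf hne hR
        obtain ⟨l1, l2, hl⟩ := List.append_of_mem he
        refine hex ⟨l1, l2, x, a, y, x', y', hl, ?_, hR⟩
        rcases hf with hf | hf
        · exact Or.inl hf
        · right
          have : (x', a, y') ∈ E' := hf
          rw [hl] at this
          change _ ∈ l1 ++ l2
          simp only [List.mem_append, List.mem_cons] at this ⊢
          have hne' := hne.symm
          tauto
      have hfold : ∀ x a y x' y', (x, a, y) ∈ Eb ∪ {e | e ∈ E'} →
          (x', a, y') ∈ Eb ∪ {e | e ∈ E'} → (R0 x x' ↔ R0 y y') := by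
        intro x a y x' y' he hf
        by_cases hne : (x, a, y) = (x', a, y')
        · simp only [Prod.mk.injEq] at hne
          obtain ⟨rfl, -, rfl⟩ := hne
          exact ⟨fun _ _ _ _ _ _ => rfl, fun _ _ _ _ _ _ => rfl⟩
        · by_cases he' : (x, a, y) ∈ E'
          · have := hex' _ _ _ _ _ he' hf hne
            tauto
          · by_cases hf' : (x', a, y') ∈ E'
            · have := hex' _ _ _ _ _ hf' he (Ne.symm hne)
              have h1 := hsymm x x'
              have h2 := hsymm y y'
              tauto
            · have he2 : (x, a, y) ∈ Eb := he.resolve_right he'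
              have hf2 : (x', a, y') ∈ Eb := hf.resolve_right hf'
              constructor
              · intro h X σ θ h1 h2
                have := h X σ θ h1 h2
                rw [h1 _ _ _ he2, h1 _ _ _ hf2] at this
                exact (σ a).injective this
              · intro h X σ θ h1 h2
                rw [h1 _ _ _ he2, h1 _ _ _ hf2, h X σ θ h1 h2]
      let s : Setoid W := ⟨R0, fun _ _ _ _ _ _ => rfl, fun {u v} h => hsymm u v h,
        fun {u v w} h h' => htrans u v w h h'⟩
      have hmk : ∀ u v : W, (Quotient.mk s u = Quotient.mk s v) ↔ R0 u v := fun u v =>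
        Quotient.eq (r := s)
      have hperm : ∀ a : A, ∃ σ : Equiv.Perm (Quotient s), ∀ y x : Quotient s,
          (∃ u v, (u, a, v) ∈ Eb ∪ {e | e ∈ E'} ∧ Quotient.mk s u = y ∧ Quotient.mk s v = x) →
          y = σ x := by
        intro a
        apply aux_ext_perm
        · rintro _ _ _ ⟨u, v, h, rfl, rfl⟩ ⟨u', v', h', rfl, hv⟩
          rw [hmk]
          exact (hfold _ _ _ _ _ h h').2 (hsymm _ _ ((hmk _ _).1 hv))
        · rintro _ _ _ ⟨u, v, h, rfl, rfl⟩ ⟨u', v', h', hu, rfl⟩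
          rw [hmk]
          exact (hfold _ _ _ _ _ h h').1 (hsymm _ _ ((hmk _ _).1 hu))
      choose σ hσ using hperm
      have hall := hT (Quotient s) σ (Quotient.mk s)
        (fun x a y h => hσ a _ _ ⟨x, y, h, rfl, rfl⟩)
        (fun x y h => (hmk x y).2 fun X σ θ _ h2 => h2 x y h) (by simp)
      obtain ⟨⟨x, a, y⟩, l, rfl⟩ := List.exists_cons_of_length_eq_add_one hn
      obtain ⟨x', y', hb⟩ := hlet x a y List.mem_cons_self
      exact hex ⟨[], l, x, a, y, x', y', rfl, Or.inl hb, Or.inl ((hmk _ _).1 (hall x x'))⟩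

theorem aux_tot_contract {A W : Type} [Nonempty W] (Eb : Set (W × A × W))
    (P : List (Option W × Option W))
    (hT : AuxTot {e : Option W × A × Option W |
      ∃ x a y, (x, a, y) ∈ Eb ∧ e = (some x, a, some y)} P []) :
    ∃ P' : List (W × W), P'.length + 1 ≤ P.length ∧ AuxTot Eb P' [] := by
  have hex : ∃ pr ∈ P, ∃ w : W, pr = (none, some w) ∨ pr = (some w, none) := by
    by_contra hcon
    push Not at hcon
    obtain ⟨w⟩ := ‹Nonempty W›
    have := hT Bool (fun _ => 1) (fun o => o.isSome) ?_ ?_ (by simp) none (some w)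
    · simp at this
    · rintro _ a _ ⟨x, b, y, -, h⟩
      simp only [Prod.mk.injEq] at h
      obtain ⟨rfl, rfl, rfl⟩ := h
      rfl
    · intro x y hxy
      rcases x with _ | x <;> rcases y with _ | y
      · rfl
      · exact absurd rfl (hcon _ hxy y).1
      · exact absurd rfl (hcon _ hxy x).2
      · rfl
  obtain ⟨pr, hpr, w, hw⟩ := hex
  obtain ⟨l1, l2, rfl⟩ := List.append_of_mem hpr
  let g : Option W → W := fun o => o.getD w
  refine ⟨(l1 ++ l2).map (Prod.map g g), by simp, ?_⟩
  intro X σ θ h1 h2 _ x y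
  refine hT X σ (θ ∘ g) ?_ ?_ (by simp) (some x) (some y)
  · rintro _ a _ ⟨x, b, y, hb, h⟩
    simp only [Prod.mk.injEq] at h
    obtain ⟨rfl, rfl, rfl⟩ := h
    exact h1 _ _ _ hb
  · intro u v huv
    have : (u, v) = pr ∨ (u, v) ∈ l1 ++ l2 := by
      simp only [List.mem_append, List.mem_cons] at huv ⊢
      tauto
    rcases this with rfl | h
    · simp only [Prod.mk.injEq] at hw
      rcases hw with ⟨rfl, rfl⟩ | ⟨rfl, rfl⟩ <;> rfl
    · exact h2 _ _ (List.mem_map.2 ⟨_, h, rfl⟩)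

theorem aux_tot_arcs {A : Type} (n : ℕ) : ∀ (W : Type) [Finite W] [Nonempty W]
    (Eb : Set (W × A × W)) (E' : List (W × A × W)) (P : List (W × W))
    (R : List (W × List (Ltr A) × W)), R.length = n →
      (∀ x a y, (x, a, y) ∈ E' → ∃ x' y', (x', a, y') ∈ Eb) →
      (∀ x w y, (x, w, y) ∈ R → ∀ c ∈ w, ∃ x' y', (x', c.1, y') ∈ Eb) →
      AuxTot (Eb ∪ {e | e ∈ E'}) P R →
      ∃ P' : List (W × W), P'.length ≤ P.length + E'.length + n ∧ AuxTot Eb P' [] := by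
  induction n with
  | zero =>
    intro W _ _ Eb E' P R hn hlet _ hT
    have : R = [] := List.length_eq_zero_iff.1 hn
    subst this
    exact aux_tot_edges Eb _ E' P rfl hlet hT
  | succ n ih =>
    have key : ∀ (w : List (Ltr A)) (W : Type) [Finite W] [Nonempty W]
        (Eb : Set (W × A × W)) (E' : List (W × A × W)) (P : List (W × W)) (x y : W)
        (R : List (W × List (Ltr A) × W)), R.length = n →
        (∀ x a y, (x, a, y) ∈ E' → ∃ x' y', (x', a, y') ∈ Eb) →
        (∀ u v z, (u, v, z) ∈ (x, w, y) :: R → ∀ c ∈ v, ∃ x' y', (x', c.1, y') ∈ Eb) →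
        AuxTot (Eb ∪ {e | e ∈ E'}) P ((x, w, y) :: R) →
        ∃ P' : List (W × W), P'.length ≤ P.length + E'.length + (n + 1) ∧ AuxTot Eb P' [] := by
      intro w
      induction w with
      | nil =>
        intro W _ _ Eb E' P x y R hn hlet hletR hT
        have hT1 : AuxTot (Eb ∪ {e | e ∈ E'}) ((x, y) :: P) R := by
          intro X σ θ h1 h2 h3
          refine hT X σ θ h1 (fun u v h => h2 u v (List.mem_cons_of_mem _ h)) ?_
          intro u v z h
          rcases List.mem_cons.1 h with h | h
          · simp only [Prod.mk.injEq] at h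
            obtain ⟨rfl, rfl, rfl⟩ := h
            have : (FreeGroup.mk [] : FreeGroup A) = 1 := rfl
            rw [this]
            simpa using h2 _ _ List.mem_cons_self
          · exact h3 u v z h
        obtain ⟨P', h1, h2⟩ := ih W Eb E' ((x, y) :: P) R hn hlet
          (fun u v z h => hletR u v z (List.mem_cons_of_mem _ h)) hT1
        exact ⟨P', by simp at h1; omega, h2⟩
      | cons c w ihw =>
        intro W _ _ Eb E' P x y R hn hlet hletR hT
        obtain ⟨a, b⟩ := c
        obtain ⟨xa, ya, hab⟩ := hletR _ _ _ List.mem_cons_self (a, b) List.mem_cons_self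
        let new : Option W × A × Option W := if b then (some x, a, none) else (none, a, some x)
        let Eb' : Set (Option W × A × Option W) :=
          {e | ∃ x a y, (x, a, y) ∈ Eb ∧ e = (some x, a, some y)}
        let E'' := new :: E'.map (fun e => (some e.1, e.2.1, some e.2.2))
        let R' := R.map (fun e => (some e.1, e.2.1, some e.2.2))
        have hlet' : ∀ x a y, (x, a, y) ∈ E'' → ∃ x' y', (x', a, y') ∈ Eb' := by
          intro u d v h
          rcases List.mem_cons.1 h with h | h
          · have : d = a := by
              simp only [new] at h
              split at h <;> simp only [Prod.mk.injEq] at h <;> exact h.2.1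
            subst this
            exact ⟨some xa, some ya, xa, d, ya, hab, rfl⟩
          · obtain ⟨⟨u', d', v'⟩, h', heq⟩ := List.mem_map.1 h
            simp only [Prod.mk.injEq] at heq
            obtain ⟨rfl, rfl, rfl⟩ := heq
            obtain ⟨x', y', h2⟩ := hlet _ _ _ h'
            exact ⟨some x', some y', x', d', y', h2, rfl⟩
        have hletR' : ∀ u v z, (u, v, z) ∈ (none, w, some y) :: R' →
            ∀ c ∈ v, ∃ x' y', (x', c.1, y') ∈ Eb' := by
          intro u v z h c hc
          have : ∃ x' y', (x', c.1, y') ∈ Eb := by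
            rcases List.mem_cons.1 h with h | h
            · simp only [Prod.mk.injEq] at h
              obtain ⟨rfl, rfl, rfl⟩ := h
              exact hletR _ _ _ List.mem_cons_self c (List.mem_cons_of_mem _ hc)
            · obtain ⟨⟨u', d', v'⟩, h', heq⟩ := List.mem_map.1 h
              simp only [Prod.mk.injEq] at heq
              obtain ⟨rfl, rfl, rfl⟩ := heq
              exact hletR _ _ _ (List.mem_cons_of_mem _ h') c hc
          obtain ⟨x', y', h⟩ := this
          exact ⟨some x', some y', x', c.1, y', h, rfl⟩
        have hT' : AuxTot (Eb' ∪ {e | e ∈ E''}) (P.map (Prod.map some some))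
            ((none, w, some y) :: R') := by
          intro X σ θ h1 h2 h3
          have hc : ∀ u v, θ (some u) = θ (some v) := by
            refine hT X σ (θ ∘ some) ?_ ?_ ?_
            · rintro u d v (h | h)
              · exact h1 _ _ _ (Or.inl ⟨u, d, v, h, rfl⟩)
              · exact h1 _ _ _ (Or.inr (List.mem_cons_of_mem _ (List.mem_map.2 ⟨_, h, rfl⟩)))
            · intro u v h
              exact h2 _ _ (List.mem_map.2 ⟨_, h, rfl⟩)
            · intro u v z h
              rcases List.mem_cons.1 h with h | h
              · simp only [Prod.mk.injEq] at h
                obtain ⟨rfl, rfl, rfl⟩ := h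
                have hnew := h1 new.1 new.2.1 new.2.2 (Or.inr List.mem_cons_self)
                have hnone := h3 _ _ _ List.mem_cons_self
                have hmk : (FreeGroup.mk ((a, b) :: w) : FreeGroup A) =
                    FreeGroup.mk [(a, b)] * FreeGroup.mk w := by
                  simp [FreeGroup.mul_mk]
                rw [hmk, map_mul, Equiv.Perm.mul_apply]
                simp only [comp_apply]
                rw [← hnone]
                cases b
                · have hnew' : θ none = σ a (θ (some u)) := hnew
                  rw [hnew']
                  simp
                · have hnew' : θ (some u) = σ a (θ none) := hnew
                  rw [hnew']
                  simp
              · exact h3 _ _ _ (List.mem_cons_of_mem _ (List.mem_map.2 ⟨_, h, rfl⟩))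
          have hfix : θ (some x) = σ a (θ (some x)) := by
            have := h1 (some xa) a (some ya) (Or.inl ⟨xa, a, ya, hab, rfl⟩)
            rwa [hc xa x, hc ya x] at this
          have hnx : θ none = θ (some x) := by
            have hnew := h1 new.1 new.2.1 new.2.2 (Or.inr List.mem_cons_self)
            cases b
            · have hnew' : θ none = σ a (θ (some x)) := hnew
              rw [hnew', ← hfix]
            · have hnew' : θ (some x) = σ a (θ none) := hnew
              apply (σ a).injective
              rw [← hnew', ← hfix]
          have hall : ∀ o, θ o = θ (some x) := by
            rintro (_ | u)
            · exact hnx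
            · exact hc u x
          intro u v
          rw [hall u, hall v]
        obtain ⟨P1, hP1, hT1⟩ := ihw (Option W) Eb' E'' (P.map (Prod.map some some)) none (some y)
          R' (by simp [R', hn]) hlet' hletR' hT'
        obtain ⟨P2, hP2, hT2⟩ := aux_tot_contract Eb P1 hT1
        refine ⟨P2, ?_, hT2⟩
        simp [E''] at hP1
        omega
    intro W _ _ Eb E' P R hn hlet hletR hT
    obtain ⟨⟨x, w, y⟩, R', rfl⟩ := List.exists_cons_of_length_eq_add_one hn
    exact key w W Eb E' P x y R' (by simpa using hn) hlet hletR hT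

namespace Autom

variable {A : Type}

/-- Positive edges. -/
def auxPos (M : Autom A) : Set (M.Q × A × M.Q) := {e | (e.1, (e.2.1, true), e.2.2) ∈ M.E}

theorem aux_chain (n : ℕ) : ∀ (M : Autom A) [Finite M.Q], M.AuxInv → M.Deterministic →
    ∀ L : List (M.Q × M.Q), L.length = n → AuxTot M.auxPos L [] →
    ∃ k ≤ n, ∃ N, AuxSteps k M N ∧ Nat.card N.Q = 1 := by
  induction n with
  | zero =>
    intro M _ hM hd L hL hT
    refine ⟨0, le_rfl, M, AuxSteps.refl M, ?_⟩
    have hperm : ∀ a : A, ∃ σ : Equiv.Perm M.Q, ∀ y x, (y, (a, true), x) ∈ M.E → y = σ x := by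
      intro a
      apply aux_ext_perm
      · intro y y' x h h'
        exact hd _ _ _ _ ((hM.dual _ _ _).1 h) ((hM.dual _ _ _).1 h')
      · intro y x x' h h'
        exact hd _ _ _ _ h h'
    choose σ hσ using hperm
    have : L = [] := List.length_eq_zero_iff.1 hL
    subst this
    have := hT M.Q σ id (fun x a y h => hσ a x y h) (by simp) (by simp)
    exact Nat.card_eq_one_iff_unique.2 ⟨⟨this⟩, ⟨M.q0⟩⟩
  | succ n ih =>
    intro M hf hM hd L hL hT
    obtain ⟨⟨p, q⟩, L', rfl⟩ := List.exists_cons_of_length_eq_add_one hL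
    by_cases hpq : p = q
    · obtain ⟨k, hk, h⟩ := ih M hM hd L' (by simpa using hL) (by
        intro X σ θ h1 h2 h3
        refine hT X σ θ h1 ?_ h3
        intro x y h
        rcases List.mem_cons.1 h with h | h
        · simp only [Prod.mk.injEq] at h
          rw [h.1, h.2, hpq]
        · exact h2 x y h)
      exact ⟨k, by omega, h⟩
    · obtain ⟨N, hN, hNf⟩ := hM.exists_istep hpq
      obtain ⟨φ, hφ, hφpq, hNd, -⟩ := hM.istep hN
      obtain ⟨k, hk, K, hs, hK⟩ := ih N (hφ.inv hM) hNd (L'.map (Prod.map φ φ))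
        (by simpa using hL) (by
          intro X σ θ h1 h2 h3 x y
          obtain ⟨x, rfl⟩ := hφ.surj x
          obtain ⟨y, rfl⟩ := hφ.surj y
          refine hT X σ (θ ∘ φ) ?_ ?_ (by simp) x y
          · intro x a y h
            exact h1 _ _ _ (hφ.map h)
          · intro x y h
            rcases List.mem_cons.1 h with h | h
            · simp only [Prod.mk.injEq] at h
              simp [h.1, h.2, hφpq]
            · exact h2 _ _ (List.mem_map.2 ⟨_, h, rfl⟩))
      exact ⟨k + 1, by omega, K, AuxSteps.head ⟨p, q, hN⟩ hs, hK⟩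

theorem aux_path_theta {M : Autom A} (hd : M.Dual) {X : Type} (σ : A → Equiv.Perm X) (θ : M.Q → X)
    (h : ∀ x a y, (x, a, y) ∈ M.auxPos → θ x = σ a (θ y)) {p q : M.Q} {u : List (Ltr A)}
    (hp : M.Path p u q) : θ p = FreeGroup.lift σ (FreeGroup.mk u) (θ q) := by
  unfold Path at hp
  induction hp with
  | nil q =>
    have : (FreeGroup.mk [] : FreeGroup A) = 1 := rfl
    simp [this]
  | @cons p q r a w he _ ih =>
    have h2 : (FreeGroup.mk (a :: w) : FreeGroup A) = FreeGroup.mk [a] * FreeGroup.mk w := by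
      simp [FreeGroup.mul_mk]
    rw [h2, map_mul, Equiv.Perm.mul_apply, ← ih]
    obtain ⟨a, b⟩ := a
    cases b
    · have := h q a p ((hd _ _ _).1 he)
      rw [this]
      simp
    · have := h p a q he
      rw [this]
      simp

end Autom

theorem aux_word {A : Type} (A0 : Set A) (t : FreeGroup A)
    (ht : t ∈ Subgroup.closure (FreeGroup.of '' A0)) :
    ∃ w : List (Ltr A), FreeGroup.mk w = t ∧ ∀ c ∈ w, c.1 ∈ A0 := by
  induction ht using Subgroup.closure_induction with
  | mem x hx =>
    obtain ⟨a, ha, rfl⟩ := hx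
    exact ⟨[(a, true)], rfl, by simpa using ha⟩
  | one => exact ⟨[], rfl, by simp⟩
  | mul x y _ _ hx hy =>
    obtain ⟨u, rfl, hu⟩ := hx
    obtain ⟨v, rfl, hv⟩ := hy
    refine ⟨u ++ v, by simp [FreeGroup.mul_mk], ?_⟩
    intro c hc
    rcases List.mem_append.1 hc with h | h
    · exact hu c h
    · exact hv c h
  | inv x _ hx =>
    obtain ⟨u, rfl, hu⟩ := hx
    refine ⟨FreeGroup.invRev u, by simp [FreeGroup.inv_mk], ?_⟩
    intro c hc
    simp only [FreeGroup.invRev, List.mem_reverse, List.mem_map] at hc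
    obtain ⟨d, hd, rfl⟩ := hc
    exact hu d hd


/-- Corollary 3.3: with `A₀` the set of letters occurring in `Γ_A(H)` and
`d = |A₀| - rank H`, `H ≤ff F(A)` iff `d ≥ 0` and `Γ_A(H)` can be transformed into a
one-state automaton by a sequence of `d` i-steps. -/
theorem free_factor_of_ambient_iff
    {A : Type} (H : Subgroup (FreeGroup A)) (hHfg : H.FG)
    (M : Autom A) (hM : M.Represents H) (hfin : Finite M.Q)
    (A0 : Set A) (hA0 : A0 = {a | ∃ p b q, (p, (a, b), q) ∈ M.E}) (hA0fin : A0.Finite) :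
    FreeFactor H (⊤ : Subgroup (FreeGroup A)) ↔
      rk H ≤ A0.ncard ∧
      ∃ f : ℕ → Autom A, f 0 = M ∧
        (∀ i < A0.ncard - rk H, Autom.IStepAny (f i) (f (i + 1))) ∧
        Nat.card (f (A0.ncard - rk H)).Q = 1 := by
  have hlet : M.auxLet = A0 := hA0.symm
  have hinv := Autom.aux_inv_of_represents hM
  have hHl : M.langRho = (H : Set (FreeGroup A)) := hM.2.2
  have hHK : H ≤ Subgroup.closure (FreeGroup.of '' A0) := by
    intro x hx
    have : x ∈ M.langRho := by rw [hHl]; exact hx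
    obtain ⟨w, hw, rfl⟩ := this
    rw [← hlet]
    exact Autom.aux_path_mem hw
  have hsteps : ∀ (B : Set (FreeGroup A)), IsFreeBasis B H → ∀ k N, Autom.AuxSteps k M N →
      Nat.card N.Q = 1 → ∃ g : Fin k → FreeGroup A,
        Subgroup.closure (B ∪ Set.range g) = Subgroup.closure (FreeGroup.of '' A0) := by
    intro B hB k N hs hN
    obtain ⟨h1, h2, g, hg, hgl⟩ := Autom.aux_steps_gen hs hinv
    have hone := Autom.aux_one_state hN
    rw [h2, hlet] at hone
    rw [hlet] at hg
    refine ⟨g, le_antisymm ?_ ?_⟩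
    · rw [Subgroup.closure_le]
      rintro x (hx | ⟨i, rfl⟩)
      · apply hHK
        rw [← hB.1]
        exact Subgroup.subset_closure hx
      · exact hg i
    · rw [Subgroup.closure_le]
      refine hone.trans ?_
      rw [SetLike.coe_subset_coe, Subgroup.closure_le]
      refine hgl.trans ?_
      rw [SetLike.coe_subset_coe, Subgroup.closure_le, hHl]
      rintro x (hx | hx)
      · have hx' : x ∈ Subgroup.closure B := by rw [hB.1]; exact hx
        exact Subgroup.closure_mono Set.subset_union_left hx'
      · exact Subgroup.subset_closure (Or.inr hx)
  constructor
  · rintro ⟨B, C, hB, hC, hBC⟩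
    obtain ⟨hBf, hrk⟩ := aux_rk_eq hB hHfg
    have hBH : B ⊆ H := by
      rw [← hB.1]; exact Subgroup.subset_closure
    obtain ⟨T, hTf, hTK, hTc⟩ := aux_kurosh hC hBC _ (FreeGroup.of '' A0) (hA0fin.image _) rfl
      (fun x hx => hHK (hBH hx))
    have hle : (FreeGroup.of '' A0).ncard ≤ A0.ncard := Set.ncard_image_le hA0fin
    have hword : ∀ t, ∃ w : List (Ltr A), t ∈ T → FreeGroup.mk w = t ∧ ∀ c ∈ w, c.1 ∈ A0 := by
      intro t
      by_cases ht : t ∈ T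
      · have : t ∈ Subgroup.closure (FreeGroup.of '' A0) := by
          rw [← hTK]; exact Subgroup.subset_closure (Or.inr ht)
        obtain ⟨w, hw⟩ := aux_word A0 t this
        exact ⟨w, fun _ => hw⟩
      · exact ⟨[], fun h => absurd h ht⟩
    choose wd hwd using hword
    let R : List (M.Q × List (Ltr A) × M.Q) :=
      hTf.toFinset.toList.map fun t => (M.q0, wd t, M.q0)
    have hRlen : R.length = T.ncard := by
      simp [R, Set.ncard_eq_toFinset_card T hTf]
    have hRmem : ∀ x w y, (x, w, y) ∈ R → ∃ t ∈ T, x = M.q0 ∧ w = wd t ∧ y = M.q0 := by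
      intro x w y h
      obtain ⟨t, ht, heq⟩ := List.mem_map.1 h
      simp only [Prod.mk.injEq] at heq
      exact ⟨t, by simpa using ht, heq.1.symm, heq.2.1.symm, heq.2.2.symm⟩
    have : Nonempty M.Q := ⟨M.q0⟩
    have hl1 : ∀ x w y, (x, w, y) ∈ R → ∀ c ∈ w, ∃ x' y', (x', c.1, y') ∈ M.auxPos := by
      intro x w y h c hc
      obtain ⟨t, ht, rfl, rfl, rfl⟩ := hRmem x w y h
      have hcA := (hwd t ht).2 c hc
      rw [hA0] at hcA
      obtain ⟨p, b, q, he⟩ := hcA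
      cases b
      · exact ⟨q, p, (hinv.dual _ _ _).1 he⟩
      · exact ⟨p, q, he⟩
    have hl2 : AuxTot (M.auxPos ∪ {e | e ∈ ([] : List (M.Q × A × M.Q))}) [] R := by
      intro X σ θ h1 _ h3
      have h1' : ∀ x a y, (x, a, y) ∈ M.auxPos → θ x = σ a (θ y) :=
        fun x a y h => h1 x a y (Or.inl h)
      have hstab : Subgroup.closure (FreeGroup.of '' A0) ≤
          (MulAction.stabilizer (Equiv.Perm X) (θ M.q0)).comap (FreeGroup.lift σ) := by
        rw [← hTK, Subgroup.closure_le]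
        rintro x (hx | hx)
        · have hxl : x ∈ M.langRho := by rw [hHl]; exact hBH hx
          obtain ⟨w, hw, rfl⟩ := hxl
          exact (Autom.aux_path_theta hinv.dual σ θ h1' hw).symm
        · have := h3 M.q0 (wd x) M.q0 (List.mem_map.2 ⟨x, by simpa using hx, rfl⟩)
          rw [(hwd x hx).1] at this
          exact this.symm
      have hall : ∀ q, θ q = θ M.q0 := by
        intro q
        obtain ⟨u, hu⟩ := hinv.conn q
        have e1 := Autom.aux_path_theta hinv.dual σ θ h1' hu
        have hm := Autom.aux_path_mem hu
        rw [hlet] at hm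
        have e2 : FreeGroup.lift σ (FreeGroup.mk u) (θ M.q0) = θ M.q0 := hstab hm
        apply (FreeGroup.lift σ (FreeGroup.mk u)).injective
        rw [e2, ← e1]
      intro x y
      rw [hall x, hall y]
    obtain ⟨P, hP, hPT⟩ := aux_tot_arcs T.ncard M.Q M.auxPos [] [] R hRlen (by simp) hl1 hl2
    obtain ⟨k, hk, N, hs, hN⟩ := Autom.aux_chain _ M hinv hM.1.1 P rfl hPT
    obtain ⟨g, hg⟩ := hsteps B hB k N hs hN
    have h1 := aux_rank_lower A0 hA0fin (B ∪ Set.range g) (hBf.union (Set.finite_range g)) hg.ge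
    have h2 : (B ∪ Set.range g).ncard ≤ B.ncard + (Set.range g).ncard := Set.ncard_union_le _ _
    have h3 : (Set.range g).ncard ≤ k := by
      rw [← Set.image_univ]
      refine (Set.ncard_image_le Set.finite_univ).trans ?_
      simp
    simp only [List.length_nil] at hP
    have hkd : A0.ncard - rk H = k := by omega
    obtain ⟨f, hf0, hf1, hf2⟩ := Autom.aux_fun_of_steps hs
    refine ⟨by omega, f, hf0, ?_, ?_⟩
    · rw [hkd]; exact hf1
    · rw [hkd, hf2]; exact hN
  · rintro ⟨hrk, f, hf0, hf1, hf2⟩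
    obtain ⟨B, hB⟩ := aux_exists_basis H
    obtain ⟨hBf, hrkB⟩ := aux_rk_eq hB hHfg
    have hs := Autom.aux_steps_of_fun _ f hf1
    rw [hf0] at hs
    obtain ⟨g, hg⟩ := hsteps B hB _ _ hs hf2
    exact aux_ff_of_gen A0 hA0fin H B hB hBf _ g (by omega) hg
end

section
/- Let H and K be finitely generated subgroups of F(A) with H a free factor of K. Then there exist a basis C of H and a set D ⊆ K disjoint from C such that C ∪ D is a basis of K and every element of D has length (as a reduced word over Ã) at most max(2·diam_{q₀}(Γ_A(H)), 1 + 2·diam_{q₀}(Γ_A(K))). -/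
open Function

namespace CF
open FreeGroup

set_option linter.unusedSectionVars false

variable {A : Type}

/-- all vertices of the path labeled `w` starting at `g` lie in `Y`. -/
def Walk (Y : Set (FreeGroup A)) : FreeGroup A → List (A × Bool) → Prop
  | g, [] => g ∈ Y
  | g, x :: w => g ∈ Y ∧ Walk Y (g * mk [x]) w

theorem mk_cons (x : A × Bool) (w : List (A × Bool)) : mk (x :: w) = mk [x] * mk w := by
  rw [mul_mk]; rfl

theorem mk_append (v w : List (A × Bool)) : mk (v ++ w) = mk v * mk w := by
  rw [mul_mk]

theorem Walk.start {Y : Set (FreeGroup A)} {g : FreeGroup A} {w : List (A × Bool)}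
    (h : Walk Y g w) : g ∈ Y := by
  cases w with
  | nil => exact h
  | cons x w => exact h.1

theorem walk_append {Y : Set (FreeGroup A)} {v w : List (A × Bool)} {g : FreeGroup A} :
    Walk Y g (v ++ w) ↔ Walk Y g v ∧ Walk Y (g * mk v) w := by
  induction v generalizing g with
  | nil =>
    simp only [List.nil_append, Walk, ← one_eq_mk, mul_one]
    exact ⟨fun h => ⟨h.start, h⟩, fun h => h.2⟩
  | cons x v ih =>
    simp only [List.cons_append, Walk, ih, mk_cons x v, mul_assoc, and_assoc]

theorem Walk.end_mem {Y : Set (FreeGroup A)} {g : FreeGroup A} {w : List (A × Bool)}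
    (h : Walk Y g w) : g * mk w ∈ Y := by
  have : Walk Y g (w ++ []) := by simpa using h
  exact (walk_append.1 this).2

theorem Walk.inv {Y : Set (FreeGroup A)} {w : List (A × Bool)} {g : FreeGroup A}
    (h : Walk Y g w) : Walk Y (g * mk w) (invRev w) := by
  induction w generalizing g with
  | nil => simpa [Walk, ← one_eq_mk] using h
  | cons x w ih =>
    rw [invRev_cons, walk_append]
    have h2 := ih h.2
    rw [mul_assoc, ← mk_cons] at h2
    refine ⟨h2, ?_⟩
    have e : g * mk (x :: w) * mk (invRev w) = g * mk [x] := by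
      rw [mk_cons, ← inv_mk]; group
    rw [e]
    have : invRev [x] = [(x.1, !x.2)] := by simp [invRev]
    rw [this]
    refine ⟨h.2.start, ?_⟩
    have e2 : mk [(x.1, !x.2)] = (mk [x])⁻¹ := by rw [inv_mk, this]
    rw [e2]
    simp only [Walk, mul_inv_cancel_right]
    exact h.1

theorem Walk.map {Y Y' : Set (FreeGroup A)} {k : FreeGroup A} (hY : ∀ y ∈ Y, k * y ∈ Y')
    {w : List (A × Bool)} {g : FreeGroup A} (h : Walk Y g w) : Walk Y' (k * g) w := by
  induction w generalizing g with
  | nil => exact hY _ h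
  | cons x w ih =>
    refine ⟨hY _ h.1, ?_⟩
    rw [mul_assoc]; exact ih h.2

theorem Walk.mono {Y Y' : Set (FreeGroup A)} (hY : Y ⊆ Y')
    {w : List (A × Bool)} {g : FreeGroup A} (h : Walk Y g w) : Walk Y' g w := by
  have := Walk.map (k := 1) (Y' := Y') (fun y hy => by simpa using hY hy) h
  simpa using this

theorem Walk.red {Y : Set (FreeGroup A)} {v w : List (A × Bool)} (hr : Red v w)
    {g : FreeGroup A} (h : Walk Y g v) : Walk Y g w := by
  induction hr with
  | refl => exact h
  | tail _ hs ih =>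
    cases hs with
    | @not L1 L2 x b =>
      rw [walk_append] at ih ⊢
      refine ⟨ih.1, ?_⟩
      have := ih.2.2.2
      have e : mk [(x, !b)] = (mk [(x, b)])⁻¹ := by simp [inv_mk, invRev]
      rw [e, mul_inv_cancel_right] at this
      exact this

section
variable [DecidableEq A]

def Reach (Y : Set (FreeGroup A)) (u v : FreeGroup A) : Prop := Walk Y u (toWord (u⁻¹ * v))

theorem reach_of_walk {Y : Set (FreeGroup A)} {u v : FreeGroup A} {w : List (A × Bool)}
    (h : Walk Y u w) (e : u * mk w = v) : Reach Y u v := by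
  unfold Reach
  rw [← e]
  simp only [inv_mul_cancel_left, toWord_mk]
  exact h.red reduce.red

theorem Reach.refl {Y : Set (FreeGroup A)} {u : FreeGroup A} (h : u ∈ Y) : Reach Y u u :=
  reach_of_walk (w := []) h (by simp [← one_eq_mk])

theorem Reach.symm {Y : Set (FreeGroup A)} {u v : FreeGroup A} (h : Reach Y u v) :
    Reach Y v u := by
  have h2 := Walk.inv h
  rw [mk_toWord, mul_inv_cancel_left] at h2
  refine reach_of_walk h2 ?_
  rw [← inv_mk, mk_toWord]; group

theorem Reach.trans {Y : Set (FreeGroup A)} {u v w : FreeGroup A} (h : Reach Y u v)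
    (h' : Reach Y v w) : Reach Y u w := by
  refine reach_of_walk (w := toWord (u⁻¹ * v) ++ toWord (v⁻¹ * w)) ?_ ?_
  · rw [walk_append, mk_toWord, mul_inv_cancel_left]
    exact ⟨h, h'⟩
  · rw [mk_append, mk_toWord, mk_toWord]; group

theorem Reach.map {Y Y' : Set (FreeGroup A)} {k : FreeGroup A} (hY : ∀ y ∈ Y, k * y ∈ Y')
    {u v : FreeGroup A} (h : Reach Y u v) : Reach Y' (k * u) (k * v) := by
  refine reach_of_walk (Walk.map hY h) ?_
  rw [mk_toWord]; group

theorem Reach.mono {Y Y' : Set (FreeGroup A)} (hY : Y ⊆ Y')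
    {u v : FreeGroup A} (h : Reach Y u v) : Reach Y' u v := Walk.mono hY h

theorem Reach.left {Y : Set (FreeGroup A)} {u v : FreeGroup A} (h : Reach Y u v) : u ∈ Y :=
  Walk.start h

theorem Reach.edge {Y : Set (FreeGroup A)} {u : FreeGroup A} (c : A × Bool) (hu : u ∈ Y)
    (hv : u * mk [c] ∈ Y) : Reach Y u (u * mk [c]) :=
  reach_of_walk (w := [c]) ⟨hu, hv⟩ rfl

/-- The convex hull of `G` in the Cayley tree. -/
def T (G : Subgroup (FreeGroup A)) : Set (FreeGroup A) :=
  {x | ∃ g ∈ G, ∃ h ∈ G, ∃ p q, toWord h = p ++ q ∧ x = g * mk p}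

variable {G G' : Subgroup (FreeGroup A)}

theorem T_smul {g x : FreeGroup A} (hg : g ∈ G) (hx : x ∈ T G) : g * x ∈ T G := by
  obtain ⟨k, hk, h, hh, p, q, e, rfl⟩ := hx
  exact ⟨g * k, G.mul_mem hg hk, h, hh, p, q, e, by rw [mul_assoc]⟩

theorem one_mem_T : (1 : FreeGroup A) ∈ T G :=
  ⟨1, G.one_mem, 1, G.one_mem, [], [], by simp, by simp [← one_eq_mk]⟩

theorem mem_T {g : FreeGroup A} (hg : g ∈ G) : g ∈ T G := by
  simpa using T_smul hg (one_mem_T (G := G))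

theorem T_mono (h : G ≤ G') : T G ⊆ T G' := by
  rintro x ⟨k, hk, l, hl, p, q, e, rfl⟩
  exact ⟨k, h hk, l, h hl, p, q, e, rfl⟩

theorem walk_of_prefix {Y : Set (FreeGroup A)} {g : FreeGroup A} {w : List (A × Bool)}
    (h : ∀ p q, w = p ++ q → g * mk p ∈ Y) : Walk Y g w := by
  induction w generalizing g with
  | nil => simpa [Walk, ← one_eq_mk] using h [] [] rfl
  | cons x w ih =>
    refine ⟨by simpa [← one_eq_mk] using h [] _ rfl, ih fun p q e => ?_⟩
    have := h (x :: p) q (by rw [e]; rfl)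
    rwa [mk_cons, ← mul_assoc] at this

theorem reach_T_one {u : FreeGroup A} (hu : u ∈ T G) : Reach (T G) 1 u := by
  obtain ⟨g, hg, h, hh, p, q, e, rfl⟩ := hu
  have key : ∀ k ∈ G, Walk (T G) 1 (toWord k) := fun k hk =>
    walk_of_prefix fun p q e => ⟨1, G.one_mem, k, hk, p, q, e, rfl⟩
  have h1 : Reach (T G) 1 g := reach_of_walk (key g hg) (by rw [one_mul, mk_toWord])
  have h2 : Reach (T G) (g * 1) (g * mk p) := by
    refine Reach.map (Y := T G) (fun y hy => T_smul hg hy) ?_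
    have := key h hh
    rw [e, walk_append] at this
    exact reach_of_walk this.1 (by simp)
  rw [mul_one] at h2
  exact h1.trans h2

theorem reach_T {u v : FreeGroup A} (hu : u ∈ T G) (hv : v ∈ T G) : Reach (T G) u v :=
  (reach_T_one hu).symm.trans (reach_T_one hv)

/-- convexity of the hull -/
theorem T_convex {u v : FreeGroup A} (hu : u ∈ T G) (hv : v ∈ T G) {p q : List (A × Bool)}
    (e : toWord (u⁻¹ * v) = p ++ q) : u * mk p ∈ T G := by
  have := reach_T hu hv
  unfold Reach at this
  rw [e, walk_append] at this
  exact this.1.end_mem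

theorem T_subset {Y : Set (FreeGroup A)} (hG : ∀ g ∈ G, ∀ y ∈ Y, g * y ∈ Y)
    (hr : ∀ g ∈ G, Reach Y 1 g) : T G ⊆ Y := by
  rintro x ⟨g, hg, h, hh, p, q, e, rfl⟩
  refine hG g hg _ ?_
  have := hr h hh
  unfold Reach at this
  rw [inv_one, one_mul, e, walk_append] at this
  simpa using this.1.end_mem

/-- `G` extended by an element -/
abbrev adj (G : Subgroup (FreeGroup A)) (x : FreeGroup A) : Subgroup (FreeGroup A) :=
  G ⊔ Subgroup.zpowers x

theorem mem_adj_self {x : FreeGroup A} : x ∈ adj G x :=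
  (le_sup_right : _ ≤ adj G x) (Subgroup.mem_zpowers x)

theorem le_adj {x : FreeGroup A} : G ≤ adj G x := le_sup_left

theorem adj_le {x : FreeGroup A} (h : G ≤ G') (hx : x ∈ G') : adj G x ≤ G' :=
  sup_le h (by simpa using hx)

theorem adj_induction {x : FreeGroup A} {P : FreeGroup A → Prop} (hG : ∀ g ∈ G, P g) (hx : P x)
    (hmul : ∀ a ∈ adj G x, ∀ b ∈ adj G x, P a → P b → P (a * b))
    (hinv : ∀ a ∈ adj G x, P a → P a⁻¹)
    {g : FreeGroup A} (hg : g ∈ adj G x) : P g := by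
  have e : adj G x = Subgroup.closure (↑G ∪ {x}) := by
    rw [Subgroup.closure_union, Subgroup.closure_eq, ← Subgroup.zpowers_eq_closure]
  have h2 := hg
  rw [e] at h2
  have : g ∈ adj G x ∧ P g := by
    induction h2 using Subgroup.closure_induction with
    | mem y hy =>
      rcases hy with hy | hy
      · exact ⟨le_adj hy, hG y hy⟩
      · rw [Set.mem_singleton_iff] at hy
        subst hy; exact ⟨mem_adj_self, hx⟩
    | one => exact ⟨Subgroup.one_mem _, hG 1 G.one_mem⟩
    | mul a b ha hb iha ihb =>
      rw [← e] at ha hb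
      have ia := iha ha
      have ib := ihb hb
      exact ⟨Subgroup.mul_mem _ ia.1 ib.1, hmul a ia.1 b ib.1 ia.2 ib.2⟩
    | inv a ha iha =>
      rw [← e] at ha
      have ia := iha ha
      exact ⟨Subgroup.inv_mem _ ia.1, hinv a ia.1 ia.2⟩
  exact this.2

/-- hull of an extension -/
theorem T_adj {x u0 v0 : FreeGroup A} (hu0 : u0 ∈ T G) (hv0 : v0 ∈ T G) {y : FreeGroup A}
    (hy : y ∈ T (adj G x)) :
    ∃ g ∈ adj G x, ∃ z, y = g * z ∧
      (z ∈ T G ∨ ∃ p q, toWord (u0⁻¹ * (x * v0)) = p ++ q ∧ z = u0 * mk p) := by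
  let Y : Set (FreeGroup A) := {y | ∃ g ∈ adj G x, ∃ z, y = g * z ∧
      (z ∈ T G ∨ ∃ p q, toWord (u0⁻¹ * (x * v0)) = p ++ q ∧ z = u0 * mk p)}
  have hsm : ∀ g ∈ adj G x, ∀ y ∈ Y, g * y ∈ Y := by
    rintro g hg y ⟨k, hk, z, rfl, hz⟩
    exact ⟨g * k, Subgroup.mul_mem _ hg hk, z, by rw [mul_assoc], hz⟩
  have hT : T G ⊆ Y := fun z hz => ⟨1, Subgroup.one_mem _, z, by simp, Or.inl hz⟩
  have : T (adj G x) ⊆ Y := by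
    refine T_subset hsm fun g hg => ?_
    refine adj_induction (P := fun g => Reach Y 1 g) ?_ ?_ ?_ ?_ hg
    · intro g hg
      exact (reach_T_one (mem_T hg)).mono hT
    · have h1 : Reach Y 1 u0 := (reach_T_one hu0).mono hT
      have h2 : Reach Y u0 (x * v0) := by
        refine walk_of_prefix fun p q e => ?_
        exact ⟨1, Subgroup.one_mem _, u0 * mk p, by simp, Or.inr ⟨p, q, e, rfl⟩⟩
      have h3 : Reach Y (x * v0) (x * 1) := by
        refine Reach.map (Y := Y) (hsm x mem_adj_self) ?_
        exact (reach_T hv0 one_mem_T).mono hT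
      rw [mul_one] at h3
      exact (h1.trans h2).trans h3
    · intro a ha b hb h1 h2
      have := Reach.map (Y' := Y) (hsm a ha) h2
      rw [mul_one] at this
      exact h1.trans this
    · intro a ha h1
      have := Reach.map (Y' := Y) (hsm a⁻¹ (Subgroup.inv_mem _ ha)) h1
      rw [mul_one, inv_mul_cancel] at this
      exact this.symm
  exact this hy

end
end CF

namespace CF
open FreeGroup
set_option linter.unusedSectionVars false

section
variable {A : Type} [DecidableEq A] {G : Subgroup (FreeGroup A)}

theorem mk_true (a : A) : mk [(a, true)] = of a := rfl
theorem mk_false (a : A) : mk [(a, false)] = (of a)⁻¹ := rfl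

/-- Marshall Hall style argument. -/
theorem swap_lemma {Y : Set (FreeGroup A)} (hY : ∀ g ∈ G, ∀ y ∈ Y, g * y ∈ Y)
    (h1 : (1 : FreeGroup A) ∈ Y) (hr : ∀ y ∈ Y, Reach Y 1 y) {x u0 v0 : FreeGroup A} {a : A}
    (hu0 : u0 ∈ Y) (hv0 : v0 ∈ Y) (e : u0 * of a = x * v0) (hd : ∀ u ∈ Y, ∀ v ∈ Y, u ≠ x * v)
    {u v g : FreeGroup A} (hu : u ∈ Y) (hv : v ∈ Y) (hg : g ∈ adj G x) (huv : u = g * v) :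
    g ∈ G := by
  classical
  let pt : FreeGroup A → FreeGroup A ⧸ G := fun y => (QuotientGroup.mk y⁻¹)
  have hpt : ∀ y z, pt y = pt z → ∃ k ∈ G, z = k * y := by
    intro y z h
    have := QuotientGroup.eq.1 h
    refine ⟨z * y⁻¹, ?_, by group⟩
    have := G.inv_mem this
    simpa using this
  let sw : Equiv.Perm (FreeGroup A ⧸ G) := Equiv.swap (pt (u0 * of a)) (pt v0)
  let ρ : FreeGroup A →* Equiv.Perm (FreeGroup A ⧸ G) := MulAction.toPermHom _ _
  let P : FreeGroup A →* Equiv.Perm (FreeGroup A ⧸ G) :=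
    FreeGroup.lift fun b => if b = a then ρ (of b) * sw else ρ (of b)
  have hPa : P (of a) = ρ (of a) * sw := by simp [P]
  have hPb : ∀ b, b ≠ a → P (of b) = ρ (of b) := fun b hb => by simp [P, hb]
  have hρ : ∀ k y, ρ k (pt y) = pt (y * k⁻¹) := by
    intro k y
    simp [ρ, pt]
  have hswY : ∀ y, y ∈ Y → y * of a ∈ Y → sw (pt (y * of a)) = pt (y * of a) := by
    intro y hy hya
    refine Equiv.swap_apply_of_ne_of_ne ?_ ?_
    · intro h
      obtain ⟨k, hk, h⟩ := hpt _ _ h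
      have := hY k hk _ hya
      rw [← h, e] at this
      exact hd _ this _ hv0 rfl
    · intro h
      obtain ⟨k, hk, h⟩ := hpt _ _ h
      have := hY k hk _ hy
      refine hd u0 hu0 _ this ?_
      have : v0 * (of a)⁻¹ = k * y := by rw [h]; group
      rw [← this, ← mul_assoc, ← e]; group
  have step : ∀ y, y ∈ Y → ∀ b, y * of b ∈ Y → P (of b) (pt (y * of b)) = pt y := by
    intro y hy b hyb
    by_cases hb : b = a
    · subst hb
      rw [hPa, Equiv.Perm.mul_apply, hswY y hy hyb, hρ]; simp
    · rw [hPb b hb, hρ]; simp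
  have walk : ∀ w y, Walk Y y w → P y⁻¹ (pt 1) = pt y →
      P (y * mk w)⁻¹ (pt 1) = pt (y * mk w) := by
    intro w
    induction w with
    | nil => intro y _ h; simpa [← one_eq_mk] using h
    | cons c w ih =>
      intro y hw h
      rw [mk_cons, ← mul_assoc]
      refine ih _ hw.2 ?_
      have hy := hw.1
      have hy2 := hw.2.start
      obtain ⟨b, c⟩ := c
      rw [mul_inv_rev, _root_.map_mul, Equiv.Perm.mul_apply, h]
      cases c with
      | true =>
        rw [mk_true] at hy2 ⊢
        have := step y hy b hy2
        rw [_root_.map_inv, ← this]; exact Equiv.symm_apply_apply _ _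
      | false =>
        rw [mk_false] at hy2 ⊢
        have := step _ hy2 b (by simpa using hy)
        rw [inv_mul_cancel_right] at this
        rw [inv_inv, this]
  have hYP : ∀ y ∈ Y, P y⁻¹ (pt 1) = pt y := by
    intro y hy
    have := walk _ 1 (hr y hy) (by simp)
    rw [mk_toWord] at this
    simpa using this
  have hstab : ∀ k ∈ adj G x, P k⁻¹ (pt 1) = pt 1 := by
    intro k hk
    refine adj_induction (P := fun k => P k⁻¹ (pt 1) = pt 1) ?_ ?_ ?_ ?_ hk
    · intro k hk
      rw [hYP k (by simpa using hY k hk 1 h1)]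
      apply QuotientGroup.eq.2
      simpa using hk
    · have h2 : P (x * v0)⁻¹ (pt 1) = pt v0 := by
        rw [← e, mul_inv_rev, _root_.map_mul, Equiv.Perm.mul_apply, hYP u0 hu0, _root_.map_inv, hPa,
          mul_inv_rev, Equiv.Perm.mul_apply, ← _root_.map_inv, hρ, inv_inv, Equiv.swap_inv,
          Equiv.swap_apply_left]
      rw [mul_inv_rev, _root_.map_mul, Equiv.Perm.mul_apply, ← hYP v0 hv0] at h2
      exact (P v0⁻¹).injective h2
    · intro a _ b _ ha hb
      rw [mul_inv_rev, _root_.map_mul, Equiv.Perm.mul_apply, ha, hb]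
    · intro a _ ha
      have := congrArg (P a) ha
      rw [← Equiv.Perm.mul_apply, ← _root_.map_mul, mul_inv_cancel, _root_.map_one] at this
      simpa using this.symm
  have h3 : pt u = pt v := by
    rw [← hYP u hu, ← hYP v hv, huv, mul_inv_rev, _root_.map_mul, Equiv.Perm.mul_apply, hstab g hg]
  obtain ⟨k, hk, h⟩ := hpt _ _ h3.symm
  have : g = k := by
    have : g * v = k * v := by rw [← huv, h]
    exact mul_right_cancel this
  rwa [this]

theorem adj_inv {x : FreeGroup A} : adj G x⁻¹ = adj G x := by
  simp [adj]

theorem swap_lemma' {Y : Set (FreeGroup A)} (hY : ∀ g ∈ G, ∀ y ∈ Y, g * y ∈ Y)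
    (h1 : (1 : FreeGroup A) ∈ Y) (hr : ∀ y ∈ Y, Reach Y 1 y) {x u0 v0 : FreeGroup A}
    {c : A × Bool}
    (hu0 : u0 ∈ Y) (hv0 : v0 ∈ Y) (e : u0 * mk [c] = x * v0)
    (hd : ∀ u ∈ Y, ∀ v ∈ Y, u ≠ x * v)
    {u v g : FreeGroup A} (hu : u ∈ Y) (hv : v ∈ Y) (hg : g ∈ adj G x) (huv : u = g * v) :
    g ∈ G := by
  obtain ⟨a, b⟩ := c
  cases b with
  | true => exact swap_lemma hY h1 hr hu0 hv0 e hd hu hv hg huv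
  | false =>
    rw [mk_false] at e
    refine swap_lemma (x := x⁻¹) (u0 := v0) (v0 := u0) (a := a) hY h1 hr hv0 hu0 ?_ ?_ hu hv
      (by rwa [adj_inv]) huv
    · have : u0 = x * v0 * of a := by rw [← e]; group
      rw [this]; group
    · intro u hu v hv h
      exact hd v hv u hu (by rw [h]; group)

theorem emb_aux (n : ℕ) : ∀ {Y : Set (FreeGroup A)} (_ : ∀ g ∈ G, ∀ y ∈ Y, g * y ∈ Y)
    (_ : (1 : FreeGroup A) ∈ Y) (_ : ∀ y ∈ Y, Reach Y 1 y) {x u0 v0 : FreeGroup A}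
    {w : List (A × Bool)} (_ : w.length = n)
    (_ : u0 ∈ Y) (_ : v0 ∈ Y) (_ : u0 * mk w = x * v0)
    (_ : ∀ u ∈ Y, ∀ v ∈ Y, u ≠ x * v)
    {u v g : FreeGroup A} (_ : u ∈ Y) (_ : v ∈ Y) (_ : g ∈ adj G x) (_ : u = g * v),
    g ∈ G := by
  induction n with
  | zero =>
    intro Y hY h1 hr x u0 v0 w hw hu0 hv0 e hd
    rw [List.length_eq_zero_iff] at hw
    subst hw
    exact absurd (by simpa [← one_eq_mk] using e) (hd u0 hu0 v0 hv0)
  | succ n ih =>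
    intro Y hY h1 hr x u0 v0 w hw hu0 hv0 e hd u v g hu hv hg huv
    by_cases hone : ∃ u1 ∈ Y, ∃ v1 ∈ Y, ∃ c : A × Bool, u1 * mk [c] = x * v1
    · obtain ⟨u1, hu1, v1, hv1, c, hc⟩ := hone
      exact swap_lemma' hY h1 hr hu1 hv1 hc hd hu hv hg huv
    push Not at hone
    cases w with
    | nil => simp at hw
    | cons c w =>
      rw [mk_cons, ← mul_assoc] at e
      have hw' : w.length = n := by simpa using hw
      let Y' : Set (FreeGroup A) := Y ∪ {y | ∃ k ∈ G, y = k * (u0 * mk [c])}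
      have hsub : Y ⊆ Y' := Set.subset_union_left
      have hu0c : u0 * mk [c] ∈ Y' := Or.inr ⟨1, G.one_mem, by simp⟩
      refine ih (Y := Y') ?_ (hsub h1) ?_ hw' hu0c (hsub hv0) e ?_ (hsub hu) (hsub hv) hg huv
      · rintro k hk y (hy | ⟨l, hl, rfl⟩)
        · exact hsub (hY k hk y hy)
        · exact Or.inr ⟨k * l, G.mul_mem hk hl, by group⟩
      · rintro y (hy | ⟨l, hl, rfl⟩)
        · exact (hr y hy).mono hsub
        · have hl0 := hY l hl _ hu0
          refine ((hr _ hl0).mono hsub).trans ?_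
          rw [← mul_assoc]
          exact Reach.edge c (hsub hl0) (Or.inr ⟨l, hl, by group⟩)
      · rintro y1 (hy1 | ⟨l1, hl1, rfl⟩) y2 (hy2 | ⟨l2, hl2, rfl⟩) h
        · exact hd _ hy1 _ hy2 h
        · refine hone y1 hy1 _ (hY l2 hl2 _ hu0) (c.1, !c.2) ?_
          have : mk [(c.1, !c.2)] = (mk [c])⁻¹ := by simp [inv_mk, invRev]
          rw [this, h]; group
        · refine hone _ (hY l1 hl1 _ hu0) _ hy2 c ?_
          rw [← h]; group
        · have : x = l1 * l2⁻¹ := by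
            have h' : l1 * (u0 * mk [c]) = x * l2 * (u0 * mk [c]) := by rw [h]; group
            have := mul_right_cancel h'
            rw [this]; group
          have hx : x ∈ G := this ▸ G.mul_mem hl1 (G.inv_mem hl2)
          exact hd (x * 1) (hY x hx 1 h1) 1 h1 rfl

/-- extension with disjoint hulls embeds. -/
theorem emb_step {x : FreeGroup A} (hd : ∀ u ∈ T G, ∀ v ∈ T G, u ≠ x * v)
    {u v g : FreeGroup A} (hu : u ∈ T G) (hv : v ∈ T G) (hg : g ∈ adj G x) (huv : u = g * v) :
    g ∈ G :=
  emb_aux _ (Y := T G) (fun _ hg _ hy => T_smul hg hy) one_mem_T (fun _ hy => reach_T_one hy)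
    (u0 := 1) (v0 := 1) (w := toWord x) rfl one_mem_T one_mem_T (by simp [mk_toWord]) hd hu hv hg
    huv

end
end CF

namespace CF
open FreeGroup
set_option linter.unusedSectionVars false

section
variable {A : Type} [DecidableEq A] {G L : Subgroup (FreeGroup A)}

/-- functions restricting to a homomorphism on `G` -/
def HomOn {Z : Type} [Group Z] (G : Subgroup (FreeGroup A)) (ψ : FreeGroup A → Z) : Prop :=
  ∀ a ∈ G, ∀ b ∈ G, ψ (a * b) = ψ a * ψ b

theorem HomOn.one {Z : Type} [Group Z] {ψ : FreeGroup A → Z} (h : HomOn G ψ) : ψ 1 = 1 := by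
  have := h 1 G.one_mem 1 G.one_mem
  simpa using this

theorem HomOn.inv {Z : Type} [Group Z] {ψ : FreeGroup A → Z} (h : HomOn G ψ) {a : FreeGroup A}
    (ha : a ∈ G) : ψ a⁻¹ = (ψ a)⁻¹ := by
  have := h a ha a⁻¹ (G.inv_mem ha)
  rw [mul_inv_cancel, h.one] at this
  exact (inv_eq_of_mul_eq_one_right this.symm).symm

theorem HomOn.mono {Z : Type} [Group Z] {ψ : FreeGroup A → Z} (h : HomOn L ψ) (hl : G ≤ L) :
    HomOn G ψ := fun a ha b hb => h a (hl ha) b (hl hb)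

theorem HomOn.eq_adj {Z : Type} [Group Z] {ψ ψ' : FreeGroup A → Z} {x : FreeGroup A}
    (h : HomOn (adj G x) ψ) (h' : HomOn (adj G x) ψ') (hG : ∀ g ∈ G, ψ g = ψ' g)
    (hx : ψ x = ψ' x) {g : FreeGroup A} (hg : g ∈ adj G x) : ψ g = ψ' g := by
  refine adj_induction (P := fun g => ψ g = ψ' g) hG hx ?_ ?_ hg
  · intro a ha b hb e1 e2
    rw [h a ha b hb, h' a ha b hb, e1, e2]
  · intro a ha e
    rw [h.inv ha, h'.inv ha, e]

/-- free extension property -/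
def Ext (G : Subgroup (FreeGroup A)) (x : FreeGroup A) : Prop :=
  ∀ (Z : Type) [Group Z] (φ : FreeGroup A → Z), HomOn G φ → ∀ z, ∃ ψ : FreeGroup A → Z,
    HomOn (adj G x) ψ ∧ (∀ g ∈ G, ψ g = φ g) ∧ ψ x = z

/-- free extension property for two elements -/
def Ext2 (G : Subgroup (FreeGroup A)) (x y : FreeGroup A) : Prop :=
  ∀ (Z : Type) [Group Z] (φ : FreeGroup A → Z), HomOn G φ → ∀ z1 z2, ∃ ψ : FreeGroup A → Z,
    HomOn (adj (adj G x) y) ψ ∧ (∀ g ∈ G, ψ g = φ g) ∧ ψ x = z1 ∧ ψ y = z2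

variable {x y : FreeGroup A}

theorem ext2_of (h1 : Ext G x) (h2 : Ext (adj G x) y) : Ext2 G x y := by
  intro Z _ φ hφ z1 z2
  obtain ⟨ψ, hψ, e, ex⟩ := h1 Z φ hφ z1
  obtain ⟨χ, hχ, e', ey⟩ := h2 Z ψ hψ z2
  exact ⟨χ, hχ, fun g hg => by rw [e' g (le_adj hg), e g hg], by rw [e' x mem_adj_self, ex], ey⟩

theorem Ext2.left (h : Ext2 G x y) : Ext G x := by
  intro Z _ φ hφ z
  obtain ⟨ψ, hψ, e, ex, _⟩ := h Z φ hφ z 1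
  exact ⟨ψ, hψ.mono le_adj, e, ex⟩

theorem Ext2.right (h : Ext2 G x y) : Ext (adj G x) y := by
  intro Z _ φ hφ z
  obtain ⟨ψ, hψ, e, ex, ey⟩ := h Z φ (hφ.mono le_adj) (φ x) z
  exact ⟨ψ, hψ, fun g hg => (hψ.mono le_adj).eq_adj hφ e ex hg, ey⟩

theorem adj_swap : adj (adj G x) y = adj (adj G y) x := sup_right_comm _ _ _

theorem Ext2.swap (h : Ext2 G x y) : Ext2 G y x := by
  intro Z _ φ hφ z1 z2
  obtain ⟨ψ, hψ, e, ex, ey⟩ := h Z φ hφ z2 z1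
  exact ⟨ψ, by rwa [adj_swap], e, ey, ex⟩

theorem adj_conj {g h : FreeGroup A} (hg : g ∈ L) (hh : h ∈ L) : adj L (g * y * h) = adj L y := by
  apply le_antisymm
  · exact adj_le le_adj ((adj L y).mul_mem ((adj L y).mul_mem (le_adj hg) mem_adj_self)
      (le_adj hh))
  · refine adj_le le_adj ?_
    have : y = g⁻¹ * (g * y * h) * h⁻¹ := by group
    rw [this]
    exact (adj L _).mul_mem ((adj L _).mul_mem (le_adj (L.inv_mem hg))
      (by rw [← this]; exact mem_adj_self)) (le_adj (L.inv_mem hh))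

theorem Ext.conj {g h : FreeGroup A} (hy : Ext L y) (hg : g ∈ L) (hh : h ∈ L) :
    Ext L (g * y * h) := by
  intro Z _ φ hφ z
  obtain ⟨ψ, hψ, e, ey⟩ := hy Z φ hφ ((φ g)⁻¹ * z * (φ h)⁻¹)
  refine ⟨ψ, by rwa [adj_conj hg hh], e, ?_⟩
  rw [hψ _ ((adj L y).mul_mem (le_adj hg) mem_adj_self) _ (le_adj hh), hψ _ (le_adj hg) _
    mem_adj_self, ey, e g hg, e h hh]
  group

theorem Ext.inv (hy : Ext L y) : Ext L y⁻¹ := by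
  intro Z _ φ hφ z
  obtain ⟨ψ, hψ, e, ey⟩ := hy Z φ hφ z⁻¹
  refine ⟨ψ, by rwa [adj_inv], e, ?_⟩
  rw [hψ.inv mem_adj_self, ey, inv_inv]

theorem Ext.notMem (hy : Ext L y) : y ∉ L := by
  intro h
  obtain ⟨ψ, hψ, e, ey⟩ := hy (Multiplicative ℤ) (fun _ => 1) (fun _ _ _ _ => by simp)
    (Multiplicative.ofAdd 1)
  have := e y h
  rw [ey] at this
  exact absurd this (by decide)

theorem Ext.ne_one (hy : Ext L y) : y ≠ 1 := fun h => hy.notMem (h ▸ L.one_mem)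

/-- cost of adjoining `x` to `G` -/
noncomputable def cost (G : Subgroup (FreeGroup A)) (x : FreeGroup A) : ℕ :=
  sInf {n | ∃ u ∈ T G, ∃ v ∈ T G, norm (u⁻¹ * (x * v)) = n}

theorem cost_le {u v : FreeGroup A} (hu : u ∈ T G) (hv : v ∈ T G) :
    cost G x ≤ norm (u⁻¹ * (x * v)) := Nat.sInf_le ⟨u, hu, v, hv, rfl⟩

theorem cost_spec (G : Subgroup (FreeGroup A)) (x : FreeGroup A) :
    ∃ u ∈ T G, ∃ v ∈ T G, norm (u⁻¹ * (x * v)) = cost G x :=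
  Nat.sInf_mem (s := {n | ∃ u ∈ T G, ∃ v ∈ T G, norm (u⁻¹ * (x * v)) = n})
    ⟨_, 1, one_mem_T, 1, one_mem_T, rfl⟩

theorem cost_zero (h : cost G x = 0) : ∃ u ∈ T G, ∃ v ∈ T G, u = x * v := by
  obtain ⟨u, hu, v, hv, e⟩ := cost_spec G x
  rw [h, FreeGroup.norm_eq_zero] at e
  exact ⟨u, hu, v, hv, inv_mul_eq_one.1 e⟩

theorem cost_pos (h : 0 < cost G x) : ∀ u ∈ T G, ∀ v ∈ T G, u ≠ x * v := by
  intro u hu v hv e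
  have := cost_le (x := x) hu hv
  rw [← e, inv_mul_cancel, FreeGroup.norm_one] at this
  omega

/-- bound on cost via a joining equation -/
theorem cost_le_of {u v : FreeGroup A} {w : List (A × Bool)} (hu : u ∈ T G) (hv : v ∈ T G)
    (e : u * mk w = x * v) : cost G x ≤ w.length := by
  refine (cost_le hu hv).trans ?_
  rw [← e, inv_mul_cancel_left]
  exact norm_mk_le

theorem tripod (p q : List (A × Bool)) (hp : IsReduced p) (hq : IsReduced q) :
    ∃ p1 t q1, p = p1 ++ t ∧ q = invRev t ++ q1 ∧ toWord (mk p * mk q) = p1 ++ q1 := by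
  induction p using List.reverseRecOn generalizing q with
  | nil => exact ⟨[], [], q, rfl, by simp [invRev], by
      rw [← one_eq_mk, one_mul, toWord_mk, hq.reduce_eq]; rfl⟩
  | append_singleton p c ih =>
    have hp' : IsReduced p := List.IsChain.left_of_append hp
    by_cases h : IsReduced (p ++ [c] ++ q)
    · refine ⟨p ++ [c], [], q, by simp, by simp [invRev], ?_⟩
      rw [mul_mk, toWord_mk, h.reduce_eq]
    · cases q with
      | nil => exact absurd (by simpa using hp) h
      | cons d q =>
        have hd : d = (c.1, !c.2) := by
          by_contra hne
          apply h
          unfold FreeGroup.IsReduced at *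
          rw [List.append_assoc] 
          have hh : List.IsChain (fun a b : A × Bool => a.1 = b.1 → a.2 = b.2) (p ++ [c] ++ (d :: q)) := by
            refine List.IsChain.append hp hq ?_
            intro x hx y hy h1
            simp at hx hy
            subst hx hy
            by_contra h2
            apply hne
            ext
            · exact h1.symm
            · revert h2; cases c.2 <;> cases d.2 <;> simp
          simpa using hh
        have hq' : IsReduced q := List.IsChain.right_of_append (l₁ := [d]) hq
        obtain ⟨p1, t, q1, rfl, rfl, e⟩ := ih q hp' hq'
        refine ⟨p1, t ++ [c], q1, by simp, by simp [invRev, hd], ?_⟩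
        rw [← e]
        have : mk [d] = (mk [c])⁻¹ := by rw [hd]; simp [inv_mk, invRev]
        rw [mk_append, mk_cons d, this]
        congr 1
        group

theorem isReduced_left {p q : List (A × Bool)} {g : FreeGroup A} (h : toWord g = p ++ q) :
    IsReduced p := by
  have : IsReduced (p ++ q) := h ▸ isReduced_toWord
  exact List.IsChain.left_of_append this

theorem isReduced_right {p q : List (A × Bool)} {g : FreeGroup A} (h : toWord g = p ++ q) :
    IsReduced q := by
  have : IsReduced (p ++ q) := h ▸ isReduced_toWord
  exact List.IsChain.right_of_append this

end
end CF

namespace CF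
open FreeGroup
set_option linter.unusedSectionVars false

section
variable {A : Type} [DecidableEq A] {G L : Subgroup (FreeGroup A)} {x y : FreeGroup A}

/-- outcome of a move -/
def Good (G N : Subgroup (FreeGroup A)) (k : ℕ) : Prop :=
  ∃ x' y', Ext2 G x' y' ∧ adj (adj G x') y' = N ∧ cost G x' < k ∧
    cost G x' + cost (adj G x') y' ≤ k

theorem Ext2.conj {g h : FreeGroup A} (he : Ext2 G x y) (hg : g ∈ adj G x) (hh : h ∈ adj G x) :
    Ext2 G x (g * y * h) := ext2_of he.left (he.right.conj hg hh)

theorem move_a (he : Ext2 G x y) (hk : 0 < cost G x) {u v : FreeGroup A} (hu : u ∈ T G)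
    (hv : v ∈ T G) (e : u = y * v) : Good G (adj (adj G x) y) (cost G x) := by
  have h0 : cost G y = 0 := by
    have := cost_le_of (w := []) hu hv (by simpa [← one_eq_mk] using e)
    simpa using this
  refine ⟨y, x, he.swap, adj_swap, by rwa [h0], ?_⟩
  rw [h0, zero_add]
  obtain ⟨u0, hu0, v0, hv0, h⟩ := cost_spec G x
  rw [← h]
  exact cost_le (T_mono le_adj hu0) (T_mono le_adj hv0)

theorem move_b (he : Ext2 G x y) (hk : 0 < cost G x) {u0 v0 v : FreeGroup A}
    {p q : List (A × Bool)} (hu0 : u0 ∈ T G) (hv0 : v0 ∈ T G)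
    (h0 : norm (u0⁻¹ * (x * v0)) = cost G x)
    (hw : toWord (u0⁻¹ * (x * v0)) = p ++ q) (hv : v ∈ T G) (e : u0 * mk p = y * v) :
    Good G (adj (adj G x) y) (cost G x) := by
  have hx : u0 * mk p * mk q = x * v0 := by
    rw [mul_assoc, ← mk_append, ← hw, mk_toWord]; group
  have hl : p.length + q.length = cost G x := by
    rw [← h0, ← List.length_append, ← hw]; rfl
  by_cases hq : q = []
  · subst hq
    have hx' : u0 * mk p = x * v0 := by simpa [← one_eq_mk] using hx
    have hg : x⁻¹ ∈ adj G x := (adj G x).inv_mem mem_adj_self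
    have := move_a (he.conj hg (adj G x).one_mem) hk hv0 hv (by
      rw [mul_one, mul_assoc, ← e, hx']; group)
    rwa [adj_conj hg (adj G x).one_mem] at this
  · have hq : 0 < q.length := List.length_pos_iff.2 hq
    have h1 : cost G y ≤ p.length := cost_le_of hu0 hv e
    have h2 : cost (adj G y) x ≤ q.length := by
      refine cost_le_of ?_ (T_mono le_adj hv0) hx
      rw [e]
      exact T_smul mem_adj_self (T_mono le_adj hv)
    exact ⟨y, x, he.swap, adj_swap, by omega, by omega⟩

theorem move_c (he : Ext2 G x y) {u0 v0 : FreeGroup A}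
    {p q r : List (A × Bool)} (hu0 : u0 ∈ T G) (hv0 : v0 ∈ T G)
    (h0 : norm (u0⁻¹ * (x * v0)) = cost G x)
    (hw : toWord (u0⁻¹ * (x * v0)) = p ++ r ++ q) (hr : 0 < r.length)
    (e : u0 * mk p = y * (u0 * mk (p ++ r))) :
    Good G (adj (adj G x) y) (cost G x) := by
  have hx : u0 * mk (p ++ r) * mk q = x * v0 := by
    rw [mul_assoc, ← mk_append, ← hw, mk_toWord]; group
  have hl : p.length + r.length + q.length = cost G x := by
    rw [← h0, ← List.length_append, ← List.length_append, ← hw]; rfl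
  have hp : FreeGroup.IsReduced p := isReduced_left (hw.trans (List.append_assoc _ _ _))
  have hq : FreeGroup.IsReduced q := isReduced_right hw
  obtain ⟨p1, t, q1, rfl, rfl, ht⟩ := tripod p q hp hq
  have hx1 : u0⁻¹ * (y * x * v0) = mk (p1 ++ t) * mk (invRev t ++ q1) := by
    rw [mul_assoc y, ← hx, ← mul_assoc y, ← e]; group
  have hex : Ext2 G (y * x) y := by
    have := he.swap.conj (g := y) (h := 1) mem_adj_self (adj G y).one_mem
    rw [mul_one] at this
    exact this.swap
  have hadj : adj (adj G (y * x)) y = adj (adj G x) y := by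
    rw [adj_swap, adj_swap (x := x)]
    have := adj_conj (y := x) (g := y) (h := 1) (L := adj G y) mem_adj_self (adj G y).one_mem
    rwa [mul_one] at this
  have hc1 : cost G (y * x) ≤ p1.length + q1.length := by
    refine (cost_le hu0 hv0).trans ?_
    rw [hx1, FreeGroup.norm, ht, List.length_append]
  have hm : u0 * mk p1 ∈ T (adj G (y * x)) := by
    refine T_convex (T_mono le_adj hu0) (T_smul (g := y * x) (x := v0) mem_adj_self
      (T_mono le_adj hv0)) (q := q1) ?_
    rw [hx1, ht]
  have hc2 : cost (adj G (y * x)) y ≤ (t ++ invRev r ++ invRev t).length := by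
    refine cost_le_of hm hm ?_
    rw [mk_append, mk_append, ← inv_mk, ← inv_mk]
    have : y * u0 = u0 * mk (p1 ++ t) * (mk (p1 ++ t ++ r))⁻¹ := by
      rw [e]; group
    rw [← mul_assoc y, this]
    simp only [mk_append]
    group
  refine ⟨y * x, y, hex, hadj, ?_, ?_⟩
  · simp [invRev_length] at hl hc2; omega
  · simp [invRev_length] at hl hc2; omega

theorem move (he : Ext2 G x y) (hk : 0 < cost G x) (hy : cost (adj G x) y = 0) :
    Good G (adj (adj G x) y) (cost G x) := by
  obtain ⟨u0, hu0, v0, hv0, h0⟩ := cost_spec G x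
  obtain ⟨u, hu, v, hv, e⟩ := cost_zero hy
  obtain ⟨g, hg, u', rfl, hu'⟩ := T_adj hu0 hv0 hu
  obtain ⟨h, hh, v', rfl, hv'⟩ := T_adj hu0 hv0 hv
  have hg' := (adj G x).inv_mem hg
  have he' := he.conj hg' hh
  have e' : u' = g⁻¹ * y * h * v' := by
    have : g⁻¹ * (g * u') = g⁻¹ * (y * (h * v')) := by rw [e]
    rw [inv_mul_cancel_left] at this
    rw [this]; group
  rw [← adj_conj (y := y) hg' hh]
  generalize g⁻¹ * y * h = y at *
  have hei : Ext2 G x y⁻¹ := ext2_of he'.left he'.right.inv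
  have ei : v' = y⁻¹ * u' := by rw [e']; group
  rcases hu' with hu' | ⟨p, q, hw, rfl⟩ <;> rcases hv' with hv' | ⟨p', q', hw', rfl⟩
  · exact move_a he' hk hu' hv' e'
  · rw [← adj_inv]
    exact move_b hei hk hu0 hv0 h0 hw' hu' ei
  · exact move_b he' hk hu0 hv0 h0 hw hv' e'
  · rcases lt_trichotomy p.length p'.length with hlt | heq | hlt
    · have hpre : p <+: p' := by
        apply List.prefix_of_prefix_length_le (l₃ := toWord (u0⁻¹ * (x * v0))) _ _ hlt.le
        · rw [hw]; exact List.prefix_append _ _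
        · rw [hw']; exact List.prefix_append _ _
      obtain ⟨r, rfl⟩ := hpre
      exact move_c he' hu0 hv0 h0 hw' (by simpa using hlt) e'
    · have : p = p' := by
        have := hw.symm.trans hw'
        exact (List.append_inj this heq).1
      subst this
      exact absurd (mul_eq_right.1 e'.symm) he'.right.ne_one
    · have hpre : p' <+: p := by
        apply List.prefix_of_prefix_length_le (l₃ := toWord (u0⁻¹ * (x * v0))) _ _ hlt.le
        · rw [hw']; exact List.prefix_append _ _
        · rw [hw]; exact List.prefix_append _ _
      obtain ⟨r, rfl⟩ := hpre
      rw [← adj_inv]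
      exact move_c hei hu0 hv0 h0 hw (by simpa using hlt) ei

/-- chains of free extensions -/
def Chain (K : Subgroup (FreeGroup A)) : Subgroup (FreeGroup A) → List (FreeGroup A) → Prop
  | G, [] => G = K
  | G, x :: l => Ext G x ∧ Chain K (adj G x) l

/-- measure of a chain -/
noncomputable def meas : Subgroup (FreeGroup A) → List (FreeGroup A) → ℕ
  | _, [] => 0
  | G, x :: l => (l.length + 1) * cost G x + meas (adj G x) l

/-- all costs positive -/
def AllPos : Subgroup (FreeGroup A) → List (FreeGroup A) → Prop
  | _, [] => True
  | G, x :: l => 0 < cost G x ∧ AllPos (adj G x) l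

/-- zero costs first -/
def Srt : Subgroup (FreeGroup A) → List (FreeGroup A) → Prop
  | _, [] => True
  | G, x :: l => (cost G x = 0 ∧ Srt (adj G x) l) ∨ (0 < cost G x ∧ AllPos (adj G x) l)

theorem sort_chain (K : Subgroup (FreeGroup A)) (n : ℕ) : ∀ (G : Subgroup (FreeGroup A))
    (l : List (FreeGroup A)), l.length = n → Chain K G l →
    ∃ l', l'.length = n ∧ Chain K G l' ∧ meas G l' ≤ meas G l ∧ Srt G l' := by
  induction n with
  | zero =>
    intro G l hl hc
    exact ⟨l, hl, hc, le_rfl, by rw [List.length_eq_zero_iff] at hl; subst hl; trivial⟩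
  | succ n ih =>
    intro G l hl hc
    induction hm : meas G l using Nat.strong_induction_on generalizing l with
    | _ m ihm =>
    subst hm
    cases l with
    | nil => simp at hl
    | cons x l =>
      have hl : l.length = n := by simpa using hl
      obtain ⟨l', hl', hc', hm', hs'⟩ := ih _ l hl hc.2
      have hmle : meas G (x :: l') ≤ meas G (x :: l) := by
        simp only [meas, hl, hl']; omega
      have hch : Chain K G (x :: l') := ⟨hc.1, hc'⟩
      rcases Nat.eq_zero_or_pos (cost G x) with h0 | hpos
      · exact ⟨x :: l', by simp [hl'], hch, hmle, Or.inl ⟨h0, hs'⟩⟩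
      · cases l' with
        | nil => exact ⟨[x], by simpa using hl'.symm, hch, hmle, Or.inr ⟨hpos, trivial⟩⟩
        | cons y l' =>
          rcases hs' with ⟨hy0, _⟩ | hp
          · obtain ⟨x', y', he, hadj, h1, h2⟩ := move (ext2_of hc.1 hc'.1) hpos hy0
            have hch' : Chain K G (x' :: y' :: l') :=
              ⟨he.left, he.right, by rw [hadj]; exact hc'.2⟩
            have hlt : meas G (x' :: y' :: l') < meas G (x :: l) := by
              refine lt_of_lt_of_le ?_ hmle
              simp only [meas, hadj, hy0, List.length_cons]
              nlinarith
            obtain ⟨l2, a, b, c, d⟩ := ihm _ hlt (x' :: y' :: l') (by simpa using hl') hch' rfl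
            exact ⟨l2, a, b, c.trans hlt.le, d⟩
          · exact ⟨x :: y :: l', by simp [hl'], hch, hmle, Or.inr ⟨hpos, hp⟩⟩

end
end CF

namespace CF
open FreeGroup
set_option linter.unusedSectionVars false

section
variable {A : Type} [DecidableEq A] {G L K : Subgroup (FreeGroup A)} {x y : FreeGroup A}

theorem Chain.le {l : List (FreeGroup A)} : ∀ {G : Subgroup (FreeGroup A)}, Chain K G l → G ≤ K := by
  induction l with
  | nil => intro G h; exact le_of_eq h
  | cons x l ih => intro G h; exact le_adj.trans (ih h.2)

/-- hull of `L` embeds in the quotient by `K` -/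
def Emb (L K : Subgroup (FreeGroup A)) : Prop :=
  ∀ u ∈ T L, ∀ v ∈ T L, ∀ g ∈ K, u = g * v → g ∈ L

theorem AllPos.emb {l : List (FreeGroup A)} : ∀ {G : Subgroup (FreeGroup A)}, Chain K G l →
    AllPos G l → Emb G K := by
  induction l with
  | nil => intro G h _ u _ v _ g hg _; exact (h : G = K) ▸ hg
  | cons x l ih =>
    intro G h hp u hu v hv g hg e
    have := ih h.2 hp.2 u (T_mono le_adj hu) v (T_mono le_adj hv) g hg e
    exact emb_step (cost_pos hp.1) hu hv this e

/-- every hull vertex is equivalent to one of norm at most `R` -/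
def RadLE (G : Subgroup (FreeGroup A)) (R : ℕ) : Prop := ∀ u ∈ T G, ∃ g ∈ G, norm (g * u) ≤ R

theorem exists_inv_lift {Z : Type} [Group Z] {C : Set Z} {K : Subgroup Z}
    (h : IsFreeBasis C K) : ∃ θ : Z → FreeGroup C, (∀ w, θ (lift Subtype.val w) = w) ∧
      ∀ k ∈ K, lift Subtype.val (θ k) = k := by
  have hr : (lift (Subtype.val : C → Z)).range = K := by
    rw [← h.1, FreeGroup.range_lift_eq_closure, Subtype.range_coe]
  refine ⟨Function.invFun (lift (Subtype.val : C → Z)), Function.leftInverse_invFun h.2, ?_⟩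
  intro k hk
  rw [← hr] at hk
  obtain ⟨w, rfl⟩ := hk
  rw [Function.leftInverse_invFun h.2]

/-- A family on which `lift` is injective gives a basis. -/
theorem basis_of_family {ι Z : Type} [Group Z] (b : ι → Z)
    (h : Function.Injective (lift b)) :
    IsFreeBasis (Set.range b) (Subgroup.closure (Set.range b)) ∧ Function.Injective b := by
  have hb : Function.Injective b := by
    intro i j e
    have : lift b (of i) = lift b (of j) := by simpa using e
    exact of_injective (h this)
  refine ⟨⟨rfl, ?_⟩, hb⟩
  let e : ι ≃ Set.range b := Equiv.ofInjective b hb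
  have : (lift (Subtype.val : Set.range b → Z)) = (lift b).comp (freeGroupCongr e.symm).toMonoidHom := by
    ext i
    obtain ⟨i, j, rfl⟩ := i
    have : e.symm ⟨b j, ⟨j, rfl⟩⟩ = j := Equiv.ofInjective_symm_apply hb j
    simp [this]
  rw [this]
  exact h.comp (freeGroupCongr e.symm).injective

theorem lift_injective_of {ι Z W : Type} [Group Z] [Group W] (b : ι → Z) (K : Subgroup Z)
    (hb : ∀ i, b i ∈ K) (f : Z → W) (hf : ∀ a ∈ K, ∀ c ∈ K, f (a * c) = f a * f c)
    (c : ι → W) (hfb : ∀ i, f (b i) = c i) (hc : Function.Injective (lift c)) :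
    Function.Injective (lift b) := by
  let fK : K →* W := MonoidHom.mk' (fun k => f k) (fun a c => hf _ a.2 _ c.2)
  let b' : ι → K := fun i => ⟨b i, hb i⟩
  have h1 : lift b = K.subtype.comp (lift b') := by ext i; simp [b']
  have h2 : lift c = fK.comp (lift b') := by ext i; simp [b', fK, hfb]
  have : Function.Injective (lift b') := by
    intro u v h
    apply hc
    rw [h2]; simp [h]
  rw [h1]
  exact K.subtype_injective.comp this

theorem basis_adj {C : Set (FreeGroup A)} (hC : IsFreeBasis C G) (hx : Ext G x) :
    IsFreeBasis (C ∪ {x}) (adj G x) ∧ x ∉ C := by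
  have hCG : C ⊆ G := by rw [← hC.1]; exact Subgroup.subset_closure
  refine ⟨?_, fun h => hx.notMem (hCG h)⟩
  obtain ⟨θ, hθ1, hθ2⟩ := exists_inv_lift hC
  let j : FreeGroup C →* FreeGroup (C ⊕ Unit) := FreeGroup.map Sum.inl
  obtain ⟨ψ, hψ, e, ex⟩ := hx (FreeGroup (C ⊕ Unit)) (fun g => j (θ g)) (by
    intro a ha b hb
    rw [← _root_.map_mul]
    refine congrArg j ?_
    apply hC.2
    rw [_root_.map_mul, hθ2 a ha, hθ2 b hb, hθ2 _ (G.mul_mem ha hb)]) (of (Sum.inr ()))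
  let b : C ⊕ Unit → FreeGroup A := Sum.elim Subtype.val (fun _ => x)
  have hinj : Function.Injective (lift b) := by
    refine lift_injective_of b (adj G x) ?_ ψ hψ of ?_ ?_
    · rintro (c | c)
      · exact le_adj (hCG c.2)
      · exact mem_adj_self
    · rintro (c | c)
      · show ψ c = _
        rw [e _ (hCG c.2)]
        have := hθ1 (of c)
        rw [lift_apply_of] at this
        simp [this, j]
      · exact ex
    · have : lift (of : C ⊕ Unit → FreeGroup (C ⊕ Unit)) = MonoidHom.id _ := by ext i; simp
      rw [this]; exact fun _ _ h => h
  have hrange : Set.range b = C ∪ {x} := by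
    rw [Set.Sum.elim_range]; simp
  have := (basis_of_family b hinj).1
  rw [hrange] at this
  have hcl : Subgroup.closure (C ∪ {x}) = adj G x := by
    rw [Subgroup.closure_union, hC.1, ← Subgroup.zpowers_eq_closure]
  rwa [hcl] at this

theorem zero_phase (R : ℕ) {l : List (FreeGroup A)} :
    ∀ {G : Subgroup (FreeGroup A)} {C' : Set (FreeGroup A)}, RadLE G R → IsFreeBasis C' G →
    Chain K G l → Srt G l →
    ∃ L D, L ≤ K ∧ Emb L K ∧ IsFreeBasis (C' ∪ D) L ∧ Disjoint C' D ∧ ∀ d ∈ D, norm d ≤ 2 * R := by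
  induction l with
  | nil =>
    intro G C' hR hC hc _
    exact ⟨G, ∅, hc.le, AllPos.emb hc trivial, by simpa using hC, by simp, by simp⟩
  | cons x l ih =>
    intro G C' hR hC hc hs
    rcases hs with ⟨h0, hs⟩ | hp
    · obtain ⟨u, hu, v, hv, e⟩ := cost_zero h0
      obtain ⟨g, hg, hgu⟩ := hR u hu
      obtain ⟨h, hh, hhv⟩ := hR v hv
      have hh' := G.inv_mem hh
      let x' := g * x * h⁻¹
      have hx' : norm x' ≤ 2 * R := by
        have : x' = (g * u) * (h * v)⁻¹ := by
          simp only [x']; rw [e]; group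
        rw [this]
        refine (FreeGroup.norm_mul_le _ _).trans ?_
        rw [norm_inv_eq]; omega
      have hadj : adj G x' = adj G x := adj_conj hg hh'
      have hb := basis_adj hC (hc.1.conj hg hh')
      change IsFreeBasis (C' ∪ {x'}) (adj G x') ∧ x' ∉ C' at hb
      rw [hadj] at hb
      have hR' : RadLE (adj G x) R := by
        intro y hy
        obtain ⟨k, hk, z, rfl, hz⟩ := T_adj hu hv hy
        have hz : z ∈ T G := by
          rcases hz with hz | ⟨p, q, hw, rfl⟩
          · exact hz
          · rw [← e, inv_mul_cancel, toWord_one] at hw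
            obtain ⟨rfl, _⟩ := List.append_eq_nil_iff.1 hw.symm
            simpa [← one_eq_mk] using hu
        obtain ⟨k', hk', hn⟩ := hR z hz
        refine ⟨k' * k⁻¹, (adj G x).mul_mem (le_adj hk') ((adj G x).inv_mem hk), ?_⟩
        have : k' * k⁻¹ * (k * z) = k' * z := by group
        rwa [this]
      obtain ⟨L, D, hL, hE, hB, hD, hn⟩ := ih hR' hb.1 hc.2 hs
      refine ⟨L, {x'} ∪ D, hL, hE, by rwa [← Set.union_assoc], ?_, ?_⟩
      · rw [Set.disjoint_union_right]
        exact ⟨by simpa using hb.2, hD.mono_left Set.subset_union_left⟩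
      · rintro d (rfl | hd)
        · exact hx'
        · exact hn d hd
    · exact ⟨G, ∅, hc.le, AllPos.emb hc hp, by simpa using hC, by simp, by simp⟩

end
end CF

namespace CF
open FreeGroup
set_option linter.unusedSectionVars false

section
variable {A : Type} [DecidableEq A] {G L K : Subgroup (FreeGroup A)} {x y : FreeGroup A}

/-- a geodesic prefix-closed transversal of `K` -/
structure UData (K : Subgroup (FreeGroup A)) (u : FreeGroup A → FreeGroup A) : Prop where
  inv : ∀ k ∈ K, ∀ g, u (k * g) = u g
  mem : ∀ g, ∃ k ∈ K, u g = k * g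
  pre : ∀ g p q, toWord (u g) = p ++ q → u (mk p) = mk p
  min : ∀ g, ∀ k ∈ K, norm (u g) ≤ norm (k * g)

theorem lex_append {α : Type} {r : α → α → Prop} {s t : List α} (h : List.Lex r s t)
    (hl : s.length = t.length) (q : List α) : List.Lex r (s ++ q) (t ++ q) := by
  induction h with
  | nil => simp at hl
  | cons _ ih => exact List.Lex.cons (ih (by simpa using hl))
  | rel h => exact List.Lex.rel h

theorem exists_u (K : Subgroup (FreeGroup A)) : ∃ u, UData K u := by
  classical
  obtain ⟨r, hr⟩ := exists_wellFoundedLT (A × Bool)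
  have hwf : WellFounded (List.Shortlex (fun a b : A × Bool => a < b)) :=
    List.Shortlex.wf wellFounded_lt
  let S : FreeGroup A → Set (List (A × Bool)) := fun g => {w | ∃ k ∈ K, w = toWord (k * g)}
  have hS : ∀ g, (S g).Nonempty := fun g => ⟨_, 1, K.one_mem, rfl⟩
  have hSk : ∀ k ∈ K, ∀ g, S (k * g) = S g := by
    intro k hk g
    ext w
    constructor
    · rintro ⟨l, hl, rfl⟩
      exact ⟨l * k, K.mul_mem hl hk, by rw [mul_assoc]⟩
    · rintro ⟨l, hl, rfl⟩
      exact ⟨l * k⁻¹, K.mul_mem hl (K.inv_mem hk), by congr 1; group⟩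
  let W : FreeGroup A → List (A × Bool) := fun g => hwf.min (S g) (hS g)
  have hWm : ∀ g, W g ∈ S g := fun g => hwf.min_mem _ _
  have hWn : ∀ g, ∀ w ∈ S g, ¬ List.Shortlex (fun a b : A × Bool => a < b) w (W g) :=
    fun g w hw => hwf.not_lt_min _ hw
  have hWt : ∀ g, toWord (mk (W g)) = W g := by
    intro g
    obtain ⟨k, hk, e⟩ := hWm g
    rw [e, mk_toWord]
  refine ⟨fun g => mk (W g), ?_, ?_, ?_, ?_⟩
  · intro k hk g
    have : W (k * g) = W g := by
      simp only [W]
      congr 1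
      exact hSk k hk g
    simp only [this]
  · intro g
    obtain ⟨k, hk, e⟩ := hWm g
    exact ⟨k, hk, by rw [e, mk_toWord]⟩
  · intro g p q e
    rw [hWt] at e
    have hp : FreeGroup.IsReduced p := isReduced_left (g := mk (W g)) (by rw [hWt, e])
    have hpt : toWord (mk p) = p := by rw [toWord_mk, hp.reduce_eq]
    have hpS : p ∈ S (mk p) := ⟨1, K.one_mem, by rw [one_mul, hpt]⟩
    have h1 := hWn _ _ hpS
    suffices hsuff : ¬ List.Shortlex (fun a b : A × Bool => a < b) (W (mk p)) p by
      have : W (mk p) = p :=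
        Std.Trichotomous.trichotomous (r := List.Shortlex (fun a b : A × Bool => a < b)) _ _ hsuff h1
      simp only [this]
    intro hlt
    obtain ⟨k, hk, ek⟩ := hWm (mk p)
    obtain ⟨k', hk', ek'⟩ := hWm g
    have ek2 : mk (W (mk p)) = k * mk p := by rw [ek, mk_toWord]
    have ek3 : mk (p ++ q) = k' * g := by rw [← e, ek', mk_toWord]
    have hmem : toWord (mk (W (mk p) ++ q)) ∈ S g := by
      refine ⟨k * k', K.mul_mem hk hk', ?_⟩
      rw [mk_append, ek2, mul_assoc, ← mk_append, ek3, mul_assoc]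
    refine hWn _ _ hmem ?_
    rw [e]
    have hred : Red (W (mk p) ++ q) (toWord (mk (W (mk p) ++ q))) := by
      rw [toWord_mk]; exact reduce.red
    rcases List.shortlex_def.1 hlt with hl | ⟨hl, hlex⟩
    · refine List.Shortlex.of_length_lt ?_
      have := hred.length_le
      simp only [List.length_append] at this ⊢
      omega
    · rcases hred.length_le.lt_or_eq with hl2 | hl2
      · refine List.Shortlex.of_length_lt ?_
        simp only [List.length_append] at hl2 ⊢
        omega
      · have heq : toWord (mk (W (mk p) ++ q)) = W (mk p) ++ q := by
          exact (hred.sublist.eq_of_length hl2)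
        rw [heq]
        refine List.Shortlex.of_lex (by simp [hl]) (lex_append hlex hl q)
  · intro g k hk
    have := hWn g (toWord (k * g)) ⟨k, hk, rfl⟩
    rw [List.shortlex_def] at this
    push Not at this
    show (toWord (mk (W g))).length ≤ (toWord (k * g)).length
    rw [hWt]
    exact this.1

variable {u : FreeGroup A → FreeGroup A}

theorem UData.uu (hu : UData K u) (g : FreeGroup A) : u (u g) = u g := by
  have := hu.pre g (toWord (u g)) [] (by simp)
  rwa [mk_toWord] at this

theorem UData.mem_K (hu : UData K u) {k : FreeGroup A} (hk : k ∈ K) : u k = 1 := by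
  have := hu.min k k⁻¹ (K.inv_mem hk)
  rw [inv_mul_cancel, FreeGroup.norm_one, Nat.le_zero, FreeGroup.norm_eq_zero] at this
  exact this

theorem UData.umul (hu : UData K u) (g h : FreeGroup A) : u (u g * h) = u (g * h) := by
  obtain ⟨k, hk, e⟩ := hu.mem g
  rw [e, mul_assoc, hu.inv k hk]

theorem UData.kmem (hu : UData K u) (g : FreeGroup A) : g * (u g)⁻¹ ∈ K := by
  obtain ⟨k, hk, e⟩ := hu.mem g
  rw [e]
  simpa using hk

theorem UData.kmem' (hu : UData K u) (g : FreeGroup A) : u g * g⁻¹ ∈ K := by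
  obtain ⟨k, hk, e⟩ := hu.mem g
  rw [e]
  simpa using hk

theorem exists_phi (K : Subgroup (FreeGroup A)) {Z : Type} [Group Z] (β : FreeGroup A → A → Z)
    (hβ : ∀ k ∈ K, ∀ g a, β (k * g) a = β g a) :
    ∃ f : FreeGroup A → Z, f 1 = 1 ∧ (∀ g a, f (g * of a) = f g * β g a) ∧
      ∀ k ∈ K, ∀ g, f (k * g) = f k * f g := by
  let α : A → Equiv.Perm (FreeGroup A × Z) := fun a =>
    { toFun := fun p => (p.1 * (of a)⁻¹, p.2 * (β (p.1 * (of a)⁻¹) a)⁻¹)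
      invFun := fun p => (p.1 * of a, p.2 * β p.1 a)
      left_inv := fun p => by simp
      right_inv := fun p => by simp }
  let P : FreeGroup A →* Equiv.Perm (FreeGroup A × Z) := lift α
  have hP : ∀ a, P (of a) = α a := fun a => by simp [P]
  have hPinv : ∀ a p, P (of a)⁻¹ p = (p.1 * of a, p.2 * β p.1 a) := by
    intro a p
    rw [_root_.map_inv, hP]; rfl
  have hfst : ∀ g p, (P g⁻¹ p).1 = p.1 * g := by
    intro g
    induction g using FreeGroup.induction_on with
    | C1 => intro p; simp
    | of a => intro p; rw [hPinv]
    | inv_of a _ => intro p; rw [inv_inv, hP]; rfl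
    | mul x y hx hy => 
      intro p
      rw [mul_inv_rev, _root_.map_mul, Equiv.Perm.mul_apply, hy, hx, mul_assoc]
  have hcomm : ∀ k ∈ K, ∀ z : Z, ∀ g : FreeGroup A, ∀ p : FreeGroup A × Z,
      P g⁻¹ (k * p.1, z * p.2) = (k * (P g⁻¹ p).1, z * (P g⁻¹ p).2) := by
    intro k hk z g
    induction g using FreeGroup.induction_on with
    | C1 => intro p; simp
    | of a => intro p; rw [hPinv, hPinv]; simp only [hβ k hk, mul_assoc]
    | inv_of a _ =>
      intro p; rw [inv_inv, hP]
      show (k * p.1 * (of a)⁻¹, z * p.2 * (β (k * p.1 * (of a)⁻¹) a)⁻¹) =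
        (k * (p.1 * (of a)⁻¹), z * (p.2 * (β (p.1 * (of a)⁻¹) a)⁻¹))
      rw [mul_assoc k, hβ k hk, mul_assoc z]
    | mul x y hx hy => 
      intro p
      rw [mul_inv_rev, _root_.map_mul, Equiv.Perm.mul_apply, hx, hy, Equiv.Perm.mul_apply]
  refine ⟨fun g => (P g⁻¹ (1, 1)).2, by simp, ?_, ?_⟩
  · intro g a
    show (P (g * of a)⁻¹ (1, 1)).2 = _
    rw [mul_inv_rev, _root_.map_mul, Equiv.Perm.mul_apply, hPinv, hfst, one_mul]
  · intro k hk g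
    show (P (k * g)⁻¹ (1, 1)).2 = _
    rw [mul_inv_rev, _root_.map_mul, Equiv.Perm.mul_apply]
    have h1 : P k⁻¹ (1, 1) = (k * (1 : FreeGroup A), (P k⁻¹ (1, 1)).2 * (1 : Z)) := by
      ext
      · rw [hfst]; simp
      · simp
    rw [h1]
    have := hcomm k hk (P k⁻¹ (1, 1)).2 g (1, 1)
    rw [this]

end
end CF

namespace CF
open FreeGroup
set_option linter.unusedSectionVars false
set_option linter.unusedVariables false

section
variable {A : Type} [DecidableEq A] {G L K : Subgroup (FreeGroup A)} {x y : FreeGroup A}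
  {u : FreeGroup A → FreeGroup A}

/-- Schreier generator of an edge -/
def bE (u : FreeGroup A → FreeGroup A) (e : FreeGroup A × A) : FreeGroup A :=
  e.1 * of e.2 * (u (e.1 * of e.2))⁻¹

/-- evaluation of words in edges -/
def ev (u : FreeGroup A → FreeGroup A) : FreeGroup (FreeGroup A × A) →* FreeGroup A := lift (bE u)

theorem ev_of (e : FreeGroup A × A) : ev u (of e) = bE u e := by simp [ev]

/-- data of paths in the contracted graph -/
structure ZData (K L : Subgroup (FreeGroup A)) (u : FreeGroup A → FreeGroup A)
    (ζ : FreeGroup A → FreeGroup (FreeGroup A × A)) (S : Set (FreeGroup A × A)) : Prop where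
  inv : ∀ k ∈ K, ∀ g, ζ (k * g) = ζ g
  one : ζ 1 = 1
  tmem : ∀ t ∈ T L, ∃ l ∈ L, (ev u (ζ t))⁻¹ * u t = l * t
  tree : ∀ t ∈ T L, ∀ a, t * of a ∈ T L → u (t * of a) = u t * of a → ζ (t * of a) = ζ t
  edge : ∀ e ∈ S, ∃ t ∈ T L, t * of e.2 ∈ T L ∧ u t = e.1 ∧ ζ t * (ζ (t * of e.2))⁻¹ = of e
  cl : ∀ g, ζ g ∈ Subgroup.closure (of '' S)

open Classical in
/-- element of minimal norm of a set -/
noncomputable def mn (s : Set (FreeGroup A)) : FreeGroup A :=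
  if h : s.Nonempty then (measure (norm : FreeGroup A → ℕ)).wf.min s h else 1

theorem mn_mem {s : Set (FreeGroup A)} {t : FreeGroup A} (h : t ∈ s) : mn s ∈ s := by
  rw [mn, dif_pos ⟨t, h⟩]
  exact WellFounded.min_mem _ _ _

theorem mn_le {s : Set (FreeGroup A)} {t : FreeGroup A} (h : t ∈ s) : norm (mn s) ≤ norm t := by
  rw [mn, dif_pos ⟨t, h⟩]
  have := WellFounded.not_lt_min (measure (norm : FreeGroup A → ℕ)).wf s h
  exact not_lt.1 this

/-- minimal representative of a class -/
noncomputable def tl (L : Subgroup (FreeGroup A)) (u : FreeGroup A → FreeGroup A)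
    (t : FreeGroup A) : FreeGroup A :=
  mn {t' | t' ∈ T L ∧ ∃ l ∈ L, t' * (u t')⁻¹ = l * (t * (u t)⁻¹)}

theorem tl_eq {t1 t l : FreeGroup A} (hl : l ∈ L) (e : t1 * (u t1)⁻¹ = l * (t * (u t)⁻¹)) :
    tl L u t1 = tl L u t := by
  unfold tl
  congr 1
  ext t'
  constructor
  · rintro ⟨h, k, hk, h'⟩
    exact ⟨h, k * l, L.mul_mem hk hl, by rw [h', e, mul_assoc]⟩
  · rintro ⟨h, k, hk, h'⟩
    exact ⟨h, k * l⁻¹, L.mul_mem hk (L.inv_mem hl), by rw [h', e]; group⟩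

theorem tl_spec {t : FreeGroup A} (ht : t ∈ T L) : tl L u t ∈ T L ∧
    (∃ l ∈ L, tl L u t * (u (tl L u t))⁻¹ = l * (t * (u t)⁻¹)) ∧ norm (tl L u t) ≤ norm t := by
  have h : t ∈ {t' | t' ∈ T L ∧ ∃ l ∈ L, t' * (u t')⁻¹ = l * (t * (u t)⁻¹)} :=
    ⟨ht, 1, L.one_mem, by rw [one_mul]⟩
  have h1 := mn_mem h
  exact ⟨h1.1, h1.2, mn_le h⟩

theorem tl_tl {t : FreeGroup A} (ht : t ∈ T L) : tl L u (tl L u t) = tl L u t := by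
  obtain ⟨_, ⟨l, hl, e⟩, _⟩ := tl_spec (u := u) ht
  exact tl_eq hl e

/-- remove the last letter -/
def par (t : FreeGroup A) : FreeGroup A := mk (toWord t).dropLast

theorem par_spec (t : FreeGroup A) : t = 1 ∨ ∃ c, (toWord t).getLast? = some c ∧
    toWord t = (toWord t).dropLast ++ [c] ∧ t = par t * mk [c] ∧ norm (par t) < norm t := by
  rcases List.eq_nil_or_concat (toWord t) with h | ⟨w, c, h⟩
  · left; simpa using h
  · right
    have h : toWord t = w ++ [c] := by simpa using h
    refine ⟨c, by rw [h]; simp, by rw [h]; simp, ?_, ?_⟩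
    · rw [par, ← mk_append]
      conv_lhs => rw [← mk_toWord (x := t)]
      rw [h]; simp
    · refine lt_of_le_of_lt norm_mk_le ?_
      rw [FreeGroup.norm, h]; simp

theorem par_mem {t : FreeGroup A} (ht : t ∈ T L) : par t ∈ T L := by
  rcases par_spec t with rfl | ⟨c, _, h, _⟩
  · simpa [par, ← one_eq_mk] using ht
  · have := T_convex (u := 1) (v := t) (p := (toWord t).dropLast) (q := [c]) one_mem_T ht
      (by simpa using h)
    simpa [par] using this

/-- edge joining `par t` and `t` -/
def sE (u : FreeGroup A → FreeGroup A) (t : FreeGroup A) (c : A × Bool) : FreeGroup A × A :=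
  if c.2 then (u (par t), c.1) else (u t, c.1)

/-- word joining `par t` and `t` -/
def stp (u : FreeGroup A → FreeGroup A) (t : FreeGroup A) : FreeGroup (FreeGroup A × A) :=
  match (toWord t).getLast? with
  | none => 1
  | some c => if c.2 then (of (sE u t c))⁻¹ else of (sE u t c)

theorem stp_true {t : FreeGroup A} {a : A} (h : (toWord t).getLast? = some (a, true)) :
    stp u t = (of (u (par t), a))⁻¹ := by
  simp [stp, h, sE]

theorem stp_false {t : FreeGroup A} {a : A} (h : (toWord t).getLast? = some (a, false)) :
    stp u t = of (u t, a) := by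
  simp [stp, h, sE]

/-- path word of the class of `t` -/
noncomputable def Zt (L : Subgroup (FreeGroup A)) (u : FreeGroup A → FreeGroup A)
    (t : FreeGroup A) : FreeGroup (FreeGroup A × A) :=
  if h : norm (par (tl L u t)) < norm t then stp u (tl L u t) * Zt L u (par (tl L u t)) else 1
termination_by norm t

theorem tl_one : tl L u 1 = 1 := by
  have := (tl_spec (L := L) (u := u) one_mem_T).2.2
  rw [FreeGroup.norm_one, Nat.le_zero, FreeGroup.norm_eq_zero] at this
  exact this

theorem par_one : par (1 : FreeGroup A) = 1 := by simp [par, ← one_eq_mk]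

theorem stp_one : stp u 1 = 1 := by simp [stp]

theorem Zt_one : Zt L u 1 = 1 := by
  rw [Zt, dif_neg]
  simp

theorem Zt_eq {t : FreeGroup A} (ht : t ∈ T L) :
    Zt L u t = stp u (tl L u t) * Zt L u (par (tl L u t)) := by
  rcases par_spec (tl L u t) with h | ⟨c, _, _, _, h⟩
  · rw [Zt, h, stp_one, par_one, Zt_one]
    split <;> simp
  · have h2 := (tl_spec (u := u) ht).2.2
    rw [Zt, dif_pos (lt_of_lt_of_le h h2)]

theorem Zt_congr {t1 t l : FreeGroup A} (ht1 : t1 ∈ T L) (ht : t ∈ T L) (hl : l ∈ L)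
    (e : t1 * (u t1)⁻¹ = l * (t * (u t)⁻¹)) : Zt L u t1 = Zt L u t := by
  rw [Zt_eq ht1, Zt_eq ht, tl_eq hl e]

theorem Zt_ev (hu : UData K u) (n : ℕ) : ∀ t ∈ T L, norm t = n →
    ∃ l ∈ L, (ev u (Zt L u t))⁻¹ = l * (t * (u t)⁻¹) := by
  induction n using Nat.strong_induction_on with
  | _ n ih =>
    intro t ht hn
    obtain ⟨ht', ⟨l, hl, e⟩, hle⟩ := tl_spec (u := u) ht
    rw [Zt_eq ht]
    have hp := par_mem ht'
    generalize tl L u t = t' at *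
    rcases par_spec t' with rfl | ⟨c, h1, _, h2, h3⟩
    · rw [stp_one, par_one, Zt_one]
      refine ⟨l, hl, ?_⟩
      rw [← e, hu.mem_K K.one_mem]; simp
    · obtain ⟨l', hl', e'⟩ := ih _ (by omega) (par t') hp rfl
      refine ⟨l' * l, L.mul_mem hl' hl, ?_⟩
      rw [_root_.map_mul, mul_inv_rev, e', mul_assoc l' l, ← e]
      obtain ⟨a, b⟩ := c
      cases b with
      | true =>
        rw [mk_true] at h2
        rw [stp_true h1, _root_.map_inv, inv_inv, ev_of, bE]
        simp only
        have h5 : t' * (u t')⁻¹ = par t' * of a * (u t')⁻¹ := congrArg (· * (u t')⁻¹) h2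
        rw [hu.umul, ← h2, h5]
        group
      | false =>
        rw [mk_false] at h2
        rw [stp_false h1, ev_of, bE]
        simp only
        have h4 : t' * of a = par t' := by
          nth_rewrite 1 [h2]; group
        have h5 : t' * (u t')⁻¹ = par t' * (of a)⁻¹ * (u t')⁻¹ := congrArg (· * (u t')⁻¹) h2
        rw [hu.umul, h4, h5]
        group

/-- edges used -/
def SS (L : Subgroup (FreeGroup A)) (u : FreeGroup A → FreeGroup A) : Set (FreeGroup A × A) :=
  {e | ∃ t ∈ T L, ∃ c, (toWord (tl L u t)).getLast? = some c ∧ e = sE u (tl L u t) c}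

theorem stp_mem {t : FreeGroup A} (ht : t ∈ T L) :
    stp u (tl L u t) ∈ Subgroup.closure (of '' SS L u) := by
  rw [stp]
  split
  · exact Subgroup.one_mem _
  · rename_i c hc
    have : of (sE u (tl L u t) c) ∈ Subgroup.closure (of '' SS L u) :=
      Subgroup.subset_closure ⟨_, ⟨t, ht, c, hc, rfl⟩, rfl⟩
    split
    · exact Subgroup.inv_mem _ this
    · exact this

theorem Zt_mem (n : ℕ) : ∀ t ∈ T L, norm t = n →
    Zt L u t ∈ Subgroup.closure (of '' SS L u) := by
  induction n using Nat.strong_induction_on with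
  | _ n ih =>
    intro t ht hn
    obtain ⟨ht', ⟨l, hl, e⟩, hle⟩ := tl_spec (u := u) ht
    rw [Zt_eq ht]
    refine Subgroup.mul_mem _ (stp_mem ht) ?_
    rcases par_spec (tl L u t) with h | ⟨c, h1, _, h2, h3⟩
    · rw [h, par_one, Zt_one]; exact Subgroup.one_mem _
    · exact ih _ (by omega) _ (par_mem ht') rfl

open Classical in
/-- path words on all vertices -/
noncomputable def zeta (K L : Subgroup (FreeGroup A)) (u : FreeGroup A → FreeGroup A)
    (g : FreeGroup A) : FreeGroup (FreeGroup A × A) :=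
  if h : ∃ t ∈ T L, ∃ k ∈ K, t = k * g then Zt L u h.choose else 1

theorem zeta_eq (hu : UData K u) (hE : Emb L K) {g t k : FreeGroup A} (ht : t ∈ T L) (hk : k ∈ K)
    (e : t = k * g) : zeta K L u g = Zt L u t := by
  have h : ∃ t ∈ T L, ∃ k ∈ K, t = k * g := ⟨t, ht, k, hk, e⟩
  rw [zeta, dif_pos h]
  obtain ⟨h1, k1, hk1, e1⟩ := h.choose_spec
  generalize h.choose = t1 at *
  have e2 : t1 = k1 * k⁻¹ * t := by rw [e1, e]; group
  have hkk := K.mul_mem hk1 (K.inv_mem hk)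
  refine Zt_congr h1 ht (hE _ h1 _ ht _ hkk e2) ?_
  rw [e2, hu.inv _ hkk, mul_assoc]

theorem zeta_T (hu : UData K u) (hE : Emb L K) {t : FreeGroup A} (ht : t ∈ T L) :
    zeta K L u t = Zt L u t := zeta_eq hu hE ht K.one_mem (one_mul t).symm

theorem zdata (hu : UData K u) (hE : Emb L K) : ZData K L u (zeta K L u) (SS L u) := by
  refine ⟨?_, ?_, ?_, ?_, ?_, ?_⟩
  · intro k hk g
    by_cases h : ∃ t ∈ T L, ∃ k ∈ K, t = k * g
    · obtain ⟨t, ht, k', hk', e⟩ := h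
      rw [zeta_eq hu hE ht hk' e, zeta_eq hu hE ht (K.mul_mem hk' (K.inv_mem hk))
        (by rw [e]; group)]
    · have h' : ¬ ∃ t ∈ T L, ∃ k' ∈ K, t = k' * (k * g) := by
        rintro ⟨t, ht, k', hk', e⟩
        exact h ⟨t, ht, k' * k, K.mul_mem hk' hk, by rw [e, mul_assoc]⟩
      rw [zeta, zeta, dif_neg h, dif_neg h']
  · rw [zeta_T hu hE one_mem_T, Zt_one]
  · intro t ht
    obtain ⟨l, hl, e⟩ := Zt_ev hu _ t ht rfl
    refine ⟨l, hl, ?_⟩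
    rw [zeta_T hu hE ht, e]; group
  · intro t ht a hta e
    rw [zeta_T hu hE ht, zeta_T hu hE hta]
    refine Zt_congr hta ht L.one_mem ?_
    rw [e]; group
  · rintro e ⟨t, ht, c, hc, rfl⟩
    obtain ⟨ht', _, _⟩ := tl_spec (u := u) ht
    have h1 := Zt_eq (u := u) ht'
    rw [tl_tl ht] at h1
    have hp := par_mem ht'
    generalize tl L u t = t' at *
    rcases par_spec t' with rfl | ⟨c', hc', _, h2, h3⟩
    · simp at hc
    · rw [hc] at hc'
      obtain rfl := Option.some.inj hc'
      obtain ⟨a, b⟩ := c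
      cases b with
      | true =>
        rw [stp_true hc] at h1
        rw [mk_true] at h2
        refine ⟨par t', hp, ?_, ?_, ?_⟩
        · simpa [sE, ← h2] using ht'
        · simp [sE]
        · simp only [sE, if_true, ← h2]
          rw [zeta_T hu hE hp, zeta_T hu hE ht', h1]; group
      | false =>
        rw [stp_false hc] at h1
        rw [mk_false] at h2
        have h4 : t' * of a = par t' := by
          nth_rewrite 1 [h2]; group
        refine ⟨t', ht', ?_, ?_, ?_⟩
        · simpa [sE, h4] using hp
        · simp [sE]
        · simp only [sE, Bool.false_eq_true, if_false, h4]
          rw [zeta_T hu hE hp, zeta_T hu hE ht', h1]; group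
  · intro g
    rw [zeta]
    split
    · rename_i h
      exact Zt_mem _ _ h.choose_spec.1 rfl
    · exact Subgroup.one_mem _

end
end CF

namespace CF
open FreeGroup
set_option linter.unusedSectionVars false
set_option linter.unusedVariables false

section
variable {A : Type} [DecidableEq A] {G L K : Subgroup (FreeGroup A)} {x y : FreeGroup A}
  {u : FreeGroup A → FreeGroup A} {ζ : FreeGroup A → FreeGroup (FreeGroup A × A)}
  {S : Set (FreeGroup A × A)}

theorem walk_induction {Y : Set (FreeGroup A)} {P : FreeGroup A → Prop}
    (hs : ∀ y ∈ Y, ∀ a, y * of a ∈ Y → (P y ↔ P (y * of a))) :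
    ∀ (w : List (A × Bool)) (g : FreeGroup A), Walk Y g w → P g → P (g * mk w) := by
  intro w
  induction w with
  | nil => intro g _ h; simpa [← one_eq_mk] using h
  | cons c w ih =>
    intro g hw h
    rw [mk_cons, ← mul_assoc]
    refine ih _ hw.2 ?_
    have h1 := hw.1
    have h2 := hw.2.start
    obtain ⟨a, b⟩ := c
    cases b with
    | true => exact (hs g h1 a h2).1 h
    | false =>
      rw [mk_false] at h2 ⊢
      refine (hs _ h2 a (by simpa using h1)).2 ?_
      simpa using h

theorem T_induction {P : FreeGroup A → Prop} (h1 : P 1)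
    (hs : ∀ y ∈ T G, ∀ a, y * of a ∈ T G → (P y ↔ P (y * of a))) {y : FreeGroup A}
    (hy : y ∈ T G) : P y := by
  have := walk_induction hs _ _ (reach_T_one hy) h1
  rw [mk_toWord] at this
  simpa using this

theorem bE_mem (hu : UData K u) (e : FreeGroup A × A) : bE u e ∈ K := hu.kmem _

theorem ev_mem (hu : UData K u) (w : FreeGroup (FreeGroup A × A)) : ev u w ∈ K := by
  induction w using FreeGroup.induction_on with
  | C1 => simp
  | of e => rw [ev_of]; exact bE_mem hu e
  | inv_of e _ => rw [_root_.map_inv, ev_of]; exact K.inv_mem (bE_mem hu e)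
  | mul x y hx hy => rw [_root_.map_mul]; exact K.mul_mem hx hy

/-- lift of a vertex -/
def tt (u : FreeGroup A → FreeGroup A) (ζ : FreeGroup A → FreeGroup (FreeGroup A × A))
    (g : FreeGroup A) : FreeGroup A := (ev u (ζ g))⁻¹ * u g

theorem tt_inv (hu : UData K u) (hz : ZData K L u ζ S) {k : FreeGroup A} (hk : k ∈ K)
    (g : FreeGroup A) : tt u ζ (k * g) = tt u ζ g := by
  rw [tt, tt, hu.inv k hk, hz.inv k hk]

theorem tt_K (hu : UData K u) (hz : ZData K L u ζ S) (g : FreeGroup A) :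
    ∃ k ∈ K, tt u ζ g = k * g := by
  obtain ⟨k, hk, e⟩ := hu.mem g
  exact ⟨(ev u (ζ g))⁻¹ * k, K.mul_mem (K.inv_mem (ev_mem hu _)) hk, by rw [tt, e, mul_assoc]⟩

/-- edges of the subgraph of `L` -/
def LE (L : Subgroup (FreeGroup A)) (u : FreeGroup A → FreeGroup A)
    (ζ : FreeGroup A → FreeGroup (FreeGroup A × A)) (g : FreeGroup A) (a : A) : Prop :=
  tt u ζ g ∈ T L ∧ tt u ζ g * of a ∈ T L

theorem LE_of_T (hu : UData K u) (hz : ZData K L u ζ S) {y : FreeGroup A} {a : A} (hy : y ∈ T L)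
    (hya : y * of a ∈ T L) : LE L u ζ y a := by
  obtain ⟨l, hl, e⟩ := hz.tmem y hy
  rw [LE, tt, e, mul_assoc]
  exact ⟨T_smul hl hy, T_smul hl hya⟩

theorem LE_mem (hu : UData K u) (hz : ZData K L u ζ S) {g : FreeGroup A} {a : A}
    (h : LE L u ζ g a) : tt u ζ g * of a * (tt u ζ (g * of a))⁻¹ ∈ L := by
  obtain ⟨k, hk, e⟩ := tt_K hu hz g
  obtain ⟨l, hl, e'⟩ := hz.tmem _ h.2
  have h1 : tt u ζ (g * of a) = l * (tt u ζ g * of a) := by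
    rw [← tt_inv hu hz hk, ← mul_assoc, ← e]
    exact e'
  rw [h1]
  have h2 : tt u ζ g * of a * (l * (tt u ζ g * of a))⁻¹ = l⁻¹ := by group
  rw [h2]
  exact L.inv_mem hl

theorem LE_tree (hu : UData K u) (hz : ZData K L u ζ S) {g : FreeGroup A} {a : A}
    (h : LE L u ζ g a) (e : u (g * of a) = u g * of a) : ζ (g * of a) = ζ g := by
  obtain ⟨k, hk, ek⟩ := tt_K hu hz g
  have := hz.tree _ h.1 a h.2 (by rw [ek, mul_assoc, hu.inv k hk, hu.inv k hk, e])
  rw [ek, mul_assoc, hz.inv k hk, hz.inv k hk] at this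
  exact this

/-- the remaining edges -/
def EE (K L : Subgroup (FreeGroup A)) (u : FreeGroup A → FreeGroup A)
    (ζ : FreeGroup A → FreeGroup (FreeGroup A × A)) : Set (FreeGroup A × A) :=
  {e | u e.1 = e.1 ∧ e.1 ∈ T K ∧ e.1 * of e.2 ∈ T K ∧ ¬ LE L u ζ e.1 e.2 ∧
    u (e.1 * of e.2) ≠ e.1 * of e.2}

theorem gen (hu : UData K u) (hz : ZData K L u ζ S) (hLK : L ≤ K) {C : Set (FreeGroup A)}
    (hC : IsFreeBasis C L) :
    Subgroup.closure (C ∪ bE u '' (S ∪ EE K L u ζ)) = K := by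
  set N := Subgroup.closure (C ∪ bE u '' (S ∪ EE K L u ζ)) with hN
  have hCN : L ≤ N := by
    rw [← hC.1]; exact Subgroup.closure_mono Set.subset_union_left
  have hb : ∀ e ∈ S ∪ EE K L u ζ, bE u e ∈ N := fun e he =>
    Subgroup.subset_closure (Or.inr ⟨e, he, rfl⟩)
  have hev : ∀ g, ev u (ζ g) ∈ N := by
    intro g
    have h1 : Subgroup.closure (of '' S) ≤ N.comap (ev u) := by
      rw [Subgroup.closure_le]
      rintro _ ⟨e, he, rfl⟩
      show ev u (of e) ∈ N
      rw [ev_of]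
      exact hb e (Or.inl he)
    exact h1 (hz.cl g)
  apply le_antisymm
  · rw [hN, Subgroup.closure_le]
    rintro x (hx | ⟨e, _, rfl⟩)
    · exact hLK (by rw [← hC.1]; exact Subgroup.subset_closure hx)
    · exact bE_mem hu e
  · have hedge : ∀ v a, u v = v → v ∈ T K → v * of a ∈ T K → bE u (v, a) ∈ N := by
      intro v a hv h1 h2
      by_cases hL : LE L u ζ v a
      · have h3 := hCN (LE_mem hu hz hL)
        have : bE u (v, a) = ev u (ζ v) * (tt u ζ v * of a * (tt u ζ (v * of a))⁻¹) *
            (ev u (ζ (v * of a)))⁻¹ := by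
          simp only [bE, tt, hv]; group
        rw [this]
        exact N.mul_mem (N.mul_mem (hev _) h3) (N.inv_mem (hev _))
      · by_cases ht : u (v * of a) = v * of a
        · simp only [bE, ht]
          simp
        · exact hb _ (Or.inr ⟨hv, h1, h2, hL, ht⟩)
    intro k hk
    have : k * (u k)⁻¹ ∈ N := by
      refine T_induction (G := K) (P := fun g => g * (u g)⁻¹ ∈ N) ?_ ?_ (mem_T hk)
      · rw [hu.mem_K K.one_mem]; simp
      · intro y hy a hya
        obtain ⟨k, hk, e⟩ := hu.mem y
        have h1 := hedge (u y) a (hu.uu y) (by rw [e]; exact T_smul hk hy)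
          (by rw [e, mul_assoc]; exact T_smul hk hya)
        have h2 : y * of a * (u (y * of a))⁻¹ = y * (u y)⁻¹ * bE u (u y, a) := by
          simp only [bE, hu.umul]; group
        rw [h2]
        exact (Subgroup.mul_mem_cancel_right _ h1).symm
    rw [hu.mem_K hk] at this
    simpa using this

open Classical in
theorem free (hu : UData K u) (hz : ZData K L u ζ S) (hLK : L ≤ K) {C : Set (FreeGroup A)}
    (hC : IsFreeBasis C L) :
    Function.Injective (lift (Sum.elim Subtype.val (fun e => bE u e.1) :
      C ⊕ ↥(S ∪ EE K L u ζ) → FreeGroup A)) := by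
  obtain ⟨θ, hθ1, hθ2⟩ := exists_inv_lift hC
  have hθm : ∀ a ∈ L, ∀ b ∈ L, θ (a * b) = θ a * θ b := by
    intro a ha b hb
    apply hC.2
    rw [_root_.map_mul, hθ2 a ha, hθ2 b hb, hθ2 _ (L.mul_mem ha hb)]
  have hθone : θ 1 = 1 := by
    have := hθm 1 L.one_mem 1 L.one_mem
    simpa using this
  let i1 : FreeGroup C →* FreeGroup (C ⊕ (FreeGroup A × A)) := FreeGroup.map Sum.inl
  let i2 : FreeGroup (FreeGroup A × A) →* FreeGroup (C ⊕ (FreeGroup A × A)) := FreeGroup.map Sum.inr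
  let β : FreeGroup A → A → FreeGroup (C ⊕ (FreeGroup A × A)) := fun g a =>
    if LE L u ζ g a then i1 (θ (tt u ζ g * of a * (tt u ζ (g * of a))⁻¹))
    else if u (g * of a) = u g * of a then (i2 (ζ g))⁻¹ * i2 (ζ (g * of a))
    else (i2 (ζ g))⁻¹ * i2 (of (u g, a)) * i2 (ζ (g * of a))
  have hβ : ∀ k ∈ K, ∀ g a, β (k * g) a = β g a := by
    intro k hk g a
    have hLEk : LE L u ζ (k * g) a ↔ LE L u ζ g a := by
      rw [LE, LE, tt_inv hu hz hk]
    by_cases h : LE L u ζ g a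
    · simp only [β, if_pos h, if_pos (hLEk.2 h), mul_assoc k, tt_inv hu hz hk]
    · by_cases h' : u (g * of a) = u g * of a
      · have h2 : u (k * g * of a) = u (k * g) * of a := by
          rw [mul_assoc, hu.inv k hk, hu.inv k hk, h']
        simp only [β, if_neg h, if_neg (fun h3 => h (hLEk.1 h3)), if_pos h', if_pos h2]
        rw [mul_assoc k, hz.inv k hk, hz.inv k hk]
      · have h2 : ¬ u (k * g * of a) = u (k * g) * of a := by
          rw [mul_assoc, hu.inv k hk, hu.inv k hk]; exact h'
        simp only [β, if_neg h, if_neg (fun h3 => h (hLEk.1 h3)), if_neg h', if_neg h2]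
        rw [mul_assoc k, hz.inv k hk, hz.inv k hk, hu.inv k hk]
  obtain ⟨f, hf1, hfa, hfk⟩ := exists_phi K β hβ
  have htree : ∀ g a, u (g * of a) = u g * of a → β g a = (i2 (ζ g))⁻¹ * i2 (ζ (g * of a)) := by
    intro g a e
    by_cases h : LE L u ζ g a
    · have h1 := LE_tree hu hz h e
      have h2 : tt u ζ g * of a * (tt u ζ (g * of a))⁻¹ = 1 := by
        rw [tt, tt, h1, e]; group
      simp only [β, if_pos h]
      rw [h2, hθone, h1]; simp
    · simp only [β, if_neg h, if_pos e]
  have hpre : ∀ g, f (u g) = i2 (ζ (u g)) := by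
    intro g
    let Y : Set (FreeGroup A) := {v | u v = v}
    have hw : Walk Y 1 (toWord (u g)) := by
      refine walk_of_prefix ?_
      intro p q e
      rw [one_mul]
      exact hu.pre g p q e
    have := walk_induction (Y := Y) (P := fun v => f v = i2 (ζ v)) ?_ _ _ hw
      (by rw [hf1, hz.one, _root_.map_one])
    · rw [mk_toWord] at this
      simpa using this
    · intro v hv a hva
      have hv : u v = v := hv
      have hva : u (v * of a) = v * of a := hva
      rw [hfa, htree v a (by rw [hva, hv])]
      constructor
      · intro h; rw [h]; group
      · intro h
        have : f v * (i2 (ζ v))⁻¹ = 1 := by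
          have h' : (f v * (i2 (ζ v))⁻¹) * i2 (ζ (v * of a)) = 1 * i2 (ζ (v * of a)) := by
            rw [one_mul, mul_assoc]; exact h
          exact mul_right_cancel h'
        exact mul_inv_eq_one.1 this
  have hfb : ∀ v a, u v = v →
      f (bE u (v, a)) = i2 (ζ v) * β v a * (i2 (ζ (v * of a)))⁻¹ := by
    intro v a hv
    have h1 := hfk _ (bE_mem hu (v, a)) (u (v * of a))
    have h2 : bE u (v, a) * u (v * of a) = v * of a := by simp [bE]
    have h3 := hpre v
    rw [hv] at h3
    have h4 : ζ (u (v * of a)) = ζ (v * of a) := by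
      obtain ⟨k, hk, e⟩ := hu.mem (v * of a)
      rw [e, hz.inv k hk]
    rw [h2, hfa, hpre, h3, h4] at h1
    rw [h1]; group
  have hfe : ∀ e ∈ S ∪ EE K L u ζ, f (bE u e) = of (Sum.inr e) := by
    rintro ⟨v, a⟩ (he | ⟨h1, _, _, h2, h3⟩)
    · obtain ⟨t, ht, hta, h1, h2⟩ := hz.edge _ he
      simp only at h1 h2 hta
      have hv : u v = v := by rw [← h1]; exact hu.uu t
      obtain ⟨k, hk, e⟩ := hu.mem t
      have ev' : v = k * t := by rw [← h1, e]
      have hL : LE L u ζ v a := by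
        have := LE_of_T hu hz ht hta
        rw [LE] at this ⊢
        rwa [ev', tt_inv hu hz hk]
      have hz1 : ζ t = ζ v := by rw [ev', hz.inv k hk]
      have hz2 : ζ (t * of a) = ζ (v * of a) := by rw [ev', mul_assoc, hz.inv k hk]
      rw [hz1, hz2] at h2
      have h5 : ev u (ζ v) * (ev u (ζ (v * of a)))⁻¹ = v * of a * (u (v * of a))⁻¹ := by
        rw [← _root_.map_inv, ← _root_.map_mul, h2, ev_of, bE]
      have h6 : tt u ζ v * of a * (tt u ζ (v * of a))⁻¹ = 1 := by
        rw [tt, tt, hv]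
        have : (ev u (ζ (v * of a)))⁻¹ = (ev u (ζ v))⁻¹ * (v * of a * (u (v * of a))⁻¹) := by
          rw [← h5]; group
        rw [this]; group
      rw [hfb v a hv]
      simp only [β, if_pos hL]
      rw [h6, hθone, _root_.map_one, mul_one, ← _root_.map_inv, ← _root_.map_mul, h2]
      simp [i2]
    · simp only at h1 h2 h3
      rw [hfb v a h1]
      simp only [β, if_neg h2]
      rw [if_neg (by rwa [h1]), h1]
      simp only [i2, FreeGroup.map.of]
      group
  have hfT : ∀ y ∈ T L, y * (tt u ζ y)⁻¹ ∈ L ∧ f y = i1 (θ (y * (tt u ζ y)⁻¹)) := by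
    have hmem : ∀ y ∈ T L, y * (tt u ζ y)⁻¹ ∈ L := by
      intro y hy
      obtain ⟨l, hl, e⟩ := hz.tmem y hy
      rw [tt, e]; simpa using hl
    intro y hy
    refine ⟨hmem y hy, ?_⟩
    refine T_induction (G := L) (P := fun y => f y = i1 (θ (y * (tt u ζ y)⁻¹))) ?_ ?_ hy
    · rw [hf1, tt, hz.one, hu.mem_K K.one_mem]; simp [hθone]
    · intro y hy a hya
      have hL := LE_of_T hu hz hy hya
      have h1 : y * of a * (tt u ζ (y * of a))⁻¹ =
          (y * (tt u ζ y)⁻¹) * (tt u ζ y * of a * (tt u ζ (y * of a))⁻¹) := by group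
      rw [hfa, h1, hθm _ (hmem y hy) _ (LE_mem hu hz hL), _root_.map_mul]
      simp only [β, if_pos hL]
      exact (mul_left_inj _).symm
  have hfL : ∀ l ∈ L, f l = i1 (θ l) := by
    intro l hl
    rw [(hfT l (mem_T hl)).2]
    have : tt u ζ l = 1 := by
      have := tt_inv hu hz (hLK hl) 1
      rw [mul_one] at this
      rw [this, tt, hz.one, hu.mem_K K.one_mem]; simp
    rw [this]; simp
  have hCL : C ⊆ L := by rw [← hC.1]; exact Subgroup.subset_closure
  let c : C ⊕ ↥(S ∪ EE K L u ζ) → C ⊕ (FreeGroup A × A) := Sum.map id Subtype.val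
  have hc : Function.Injective c := Sum.map_injective.2 ⟨Function.injective_id, Subtype.val_injective⟩
  refine lift_injective_of _ K ?_ f (fun a ha b _ => hfk a ha b) (fun i => of (c i)) ?_ ?_
  · rintro (i | i)
    · exact hLK (hCL i.2)
    · exact bE_mem hu _
  · rintro (i | i)
    · show f i = _
      rw [hfL _ (hCL i.2)]
      have := hθ1 (of i)
      rw [lift_apply_of] at this
      simp [this, i1, c]
    · exact hfe _ i.2
  · have : lift (fun i => of (c i)) = FreeGroup.map c := by ext i; simp
    rw [this]
    exact FreeGroup.map_injective hc

theorem phase2 {R : ℕ} (hLK : L ≤ K) (hE : Emb L K) {C : Set (FreeGroup A)} (hC : IsFreeBasis C L)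
    (hR : RadLE K R) : ∃ D, D ⊆ (K : Set (FreeGroup A)) ∧ Disjoint C D ∧ IsFreeBasis (C ∪ D) K ∧
      ∀ d ∈ D, norm d ≤ 1 + 2 * R := by
  obtain ⟨u, hu⟩ := exists_u K
  have hz := zdata hu hE
  have hg := gen hu hz hLK hC
  have hf := free hu hz hLK hC
  obtain ⟨h1, h2⟩ := basis_of_family _ hf
  have hr : Set.range (Sum.elim Subtype.val (fun e => bE u e.1) :
      C ⊕ ↥(SS L u ∪ EE K L u (zeta K L u)) → FreeGroup A) =
      C ∪ bE u '' (SS L u ∪ EE K L u (zeta K L u)) := by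
    rw [Set.Sum.elim_range, Subtype.range_coe]
    congr 1
    ext z
    constructor
    · rintro ⟨e, rfl⟩; exact ⟨e.1, e.2, rfl⟩
    · rintro ⟨e, he, rfl⟩; exact ⟨⟨e, he⟩, rfl⟩
  rw [hr, hg] at h1
  have hnu : ∀ g ∈ T K, norm (u g) ≤ R := by
    intro g hg
    obtain ⟨k, hk, h⟩ := hR g hg
    exact (hu.min g k hk).trans h
  refine ⟨bE u '' (SS L u ∪ EE K L u (zeta K L u)), ?_, ?_, h1, ?_⟩
  · rintro _ ⟨e, _, rfl⟩
    exact bE_mem hu e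
  · rw [Set.disjoint_left]
    rintro x hx ⟨e, he, h⟩
    have := @h2 (Sum.inl ⟨x, hx⟩) (Sum.inr ⟨e, he⟩) h.symm
    simp at this
  · rintro _ ⟨e, he, rfl⟩
    have key : norm e.1 ≤ R ∧ norm (u (e.1 * of e.2)) ≤ R := by
      rcases he with he | ⟨h1, h2, h3, _⟩
      · obtain ⟨t, ht, hta, h3, _⟩ := hz.edge _ he
        rw [← h3, hu.umul]
        exact ⟨hnu _ (T_mono hLK ht), hnu _ (T_mono hLK hta)⟩
      · refine ⟨?_, hnu _ h3⟩
        rw [← h1]; exact hnu _ h2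
    have e1 := FreeGroup.norm_mul_le (e.1 * of e.2) (u (e.1 * of e.2))⁻¹
    have e2 := FreeGroup.norm_mul_le e.1 (of e.2)
    rw [norm_inv_eq] at e1
    rw [FreeGroup.norm_of] at e2
    rw [bE]
    omega

end
end CF

namespace CF
open FreeGroup
set_option linter.unusedSectionVars false

section
variable {A : Type}

theorem path_append {M : Autom A} {v w : List (Ltr A)} {p r : M.Q} :
    M.Path p (v ++ w) r ↔ ∃ q, M.Path p v q ∧ M.Path q w r := by
  induction v generalizing p with
  | nil =>
    constructor
    · intro h; exact ⟨p, Autom.PathOn.nil p, h⟩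
    · rintro ⟨q, h1, h2⟩
      cases h1
      exact h2
  | cons a v ih =>
    constructor
    · intro h
      cases h with
      | cons he h =>
        obtain ⟨s, h1, h2⟩ := ih.1 h
        exact ⟨s, Autom.PathOn.cons he h1, h2⟩
    · rintro ⟨q, h1, h2⟩
      cases h1 with
      | cons he h => exact Autom.PathOn.cons he (ih.2 ⟨q, h, h2⟩)

theorem path_inv {M : Autom A} (hd : M.Dual) {w : List (Ltr A)} {p q : M.Q}
    (h : M.Path p w q) : M.Path q (invRev w) p := by
  induction w generalizing p with
  | nil => cases h; exact Autom.PathOn.nil _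
  | cons a w ih =>
    cases h with
    | cons he h =>
      rw [invRev_cons]
      refine path_append.2 ⟨_, ih h, ?_⟩
      have e : invRev [a] = [Ltr.inv a] := by simp [invRev, Ltr.inv]
      rw [e]
      exact Autom.PathOn.cons ((hd _ _ _).1 he) (Autom.PathOn.nil _)

theorem path_step {M : Autom A} (hM : M.IsInv) {w w' : List (Ltr A)} {p q : M.Q}
    (h : M.Path p w q) (hs : Red.Step w w') : M.Path p w' q := by
  cases hs with
  | @not L1 L2 x b =>
    obtain ⟨s, h1, h2⟩ := path_append.1 h
    cases h2 with
    | cons he h3 =>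
      cases h3 with
      | cons he' h4 =>
        have h5 := (hM.2.2 _ _ _).1 he
        have h6 := hM.1 _ _ _ _ he' h5
        rw [h6] at h4
        exact path_append.2 ⟨s, h1, h4⟩

theorem path_red {M : Autom A} (hM : M.IsInv) {w w' : List (Ltr A)} {p q : M.Q}
    (h : M.Path p w q) (hs : Red w w') : M.Path p w' q := by
  induction hs with
  | refl => exact h
  | tail _ hs ih => exact path_step hM ih hs

theorem isReducedWord_of {w : List (Ltr A)} (h : FreeGroup.IsReduced w) : IsReducedWord w := by
  rintro u v a b rfl
  exact h.not_step Red.Step.not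

variable [DecidableEq A]

theorem radLE_of_represents {M : Autom A} {H : Subgroup (FreeGroup A)} (hM : M.Represents H)
    (hfin : Finite M.Q) : RadLE H M.diam := by
  rintro _ ⟨g, hg, h, hh, p, q, e, rfl⟩
  have h1 : h ∈ M.langRho := by rw [hM.2.2]; exact hh
  obtain ⟨w, hw, rfl⟩ := h1
  have h2 : M.Path M.q0 (toWord (mk w)) M.q0 := by
    rw [toWord_mk]
    exact path_red hM.1 hw reduce.red
  have hp := isReduced_left e
  rw [e] at h2
  obtain ⟨s, h3, h4⟩ := path_append.1 h2
  have hne : {n | ∃ u, IsReducedWord u ∧ u.length = n ∧ M.Path M.q0 u s}.Nonempty :=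
    ⟨p.length, p, isReducedWord_of hp, rfl, h3⟩
  obtain ⟨u, hu1, hu2, hu3⟩ := Nat.sInf_mem hne
  have h5 : u.length ≤ M.diam := by
    rw [hu2]
    exact le_ciSup (f := fun s : M.Q =>
      sInf {n | ∃ u, IsReducedWord u ∧ u.length = n ∧ M.Path M.q0 u s})
      (Set.finite_range _).bddAbove s
  have h6 : mk u * (mk p)⁻¹ ∈ H := by
    have : mk (u ++ invRev p) ∈ M.langRho :=
      ⟨_, path_append.2 ⟨s, hu3, path_inv hM.1.2.2 h3⟩, rfl⟩
    rw [hM.2.2, mk_append, ← inv_mk] at this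
    exact this
  refine ⟨mk u * (mk p)⁻¹ * g⁻¹, H.mul_mem h6 (H.inv_mem hg), ?_⟩
  have h7 : mk u * (mk p)⁻¹ * g⁻¹ * (g * mk p) = mk u := by group
  rw [h7]
  exact le_trans FreeGroup.norm_mk_le h5

theorem closure_adj (B : Set (FreeGroup A)) (x : FreeGroup A) :
    adj (Subgroup.closure B) x = Subgroup.closure (B ∪ {x}) := by
  rw [adj, Subgroup.closure_union, Subgroup.zpowers_eq_closure]

open Classical in
theorem ext_of_basis {C B : Set (FreeGroup A)} {K : Subgroup (FreeGroup A)} {x : FreeGroup A}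
    (hC : IsFreeBasis C K) (hB : B ⊆ C) (hx : x ∈ C) (hxB : x ∉ B) :
    Ext (Subgroup.closure B) x := by
  intro Z _ φ hφ z
  obtain ⟨θ, hθ1, hθ2⟩ := exists_inv_lift hC
  have hθm : ∀ a ∈ K, ∀ b ∈ K, θ (a * b) = θ a * θ b := by
    intro a ha b hb
    apply hC.2
    rw [_root_.map_mul, hθ2 a ha, hθ2 b hb, hθ2 _ (K.mul_mem ha hb)]
  let f : FreeGroup C →* Z := lift (fun c => if c.1 = x then z else φ c.1)
  have hψ : HomOn K (fun g => f (θ g)) := by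
    intro a ha b hb
    simp only
    rw [hθm a ha b hb, _root_.map_mul]
  have hBK : Subgroup.closure B ≤ K := by rw [← hC.1]; exact Subgroup.closure_mono hB
  have hcv : ∀ c (hc : c ∈ C), f (θ c) = if c = x then z else φ c := by
    intro c hc
    have := hθ1 (of ⟨c, hc⟩)
    rw [lift_apply_of] at this
    simp only at this
    rw [this]
    simp only [f, lift_apply_of]
  have hK : adj (Subgroup.closure B) x ≤ K := by
    rw [closure_adj, ← hC.1]
    apply Subgroup.closure_mono
    rintro y (hy | rfl)
    · exact hB hy
    · exact hx
  refine ⟨fun g => f (θ g), hψ.mono hK, ?_, ?_⟩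
  · intro g hg
    have hψ' := hψ.mono hBK
    induction hg using Subgroup.closure_induction with
    | mem y hy =>
      show f (θ y) = φ y
      rw [hcv y (hB hy), if_neg]
      rintro rfl
      exact hxB hy
    | one => exact hψ'.one.trans hφ.one.symm
    | mul a b ha hb iha ihb => rw [hψ' a ha b hb, hφ a ha b hb, iha, ihb]
    | inv a ha iha =>
      refine (hψ'.inv ha).trans ?_
      rw [hφ.inv ha, ← iha]
  · show f (θ x) = z
    rw [hcv x hx, if_pos rfl]

theorem finite_sub {C : Set (FreeGroup A)} {g : FreeGroup A} (hg : g ∈ Subgroup.closure C) :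
    ∃ C0 ⊆ C, C0.Finite ∧ g ∈ Subgroup.closure C0 := by
  induction hg using Subgroup.closure_induction with
  | mem y hy => exact ⟨{y}, by simpa using hy, Set.finite_singleton y, Subgroup.subset_closure rfl⟩
  | one => exact ⟨∅, by simp, Set.finite_empty, Subgroup.one_mem _⟩
  | mul a b _ _ iha ihb =>
    obtain ⟨X, h1, h2, h3⟩ := iha
    obtain ⟨Y, k1, k2, k3⟩ := ihb
    exact ⟨X ∪ Y, Set.union_subset h1 k1, h2.union k2, Subgroup.mul_mem _
      (Subgroup.closure_mono Set.subset_union_left h3)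
      (Subgroup.closure_mono Set.subset_union_right k3)⟩
  | inv a _ iha =>
    obtain ⟨X, h1, h2, h3⟩ := iha
    exact ⟨X, h1, h2, Subgroup.inv_mem _ h3⟩

theorem basis_finite {C : Set (FreeGroup A)} {K : Subgroup (FreeGroup A)}
    (hC : IsFreeBasis C K) (hK : K.FG) : C.Finite := by
  obtain ⟨S, hS⟩ := hK
  have h1 : ∀ s ∈ S, ∃ C0 ⊆ C, C0.Finite ∧ s ∈ Subgroup.closure C0 := by
    intro s hs
    apply finite_sub
    rw [hC.1, ← hS]
    exact Subgroup.subset_closure hs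
  choose! c hc1 hc2 hc3 using h1
  let C0 : Set (FreeGroup A) := ⋃ s ∈ (S : Set (FreeGroup A)), c s
  have hfin : C0.Finite := S.finite_toSet.biUnion (fun s hs => hc2 s hs)
  have hsub : C0 ⊆ C := Set.iUnion₂_subset hc1
  have hKC : K ≤ Subgroup.closure C0 := by
    rw [← hS, Subgroup.closure_le]
    intro s hs
    exact Subgroup.closure_mono (Set.subset_biUnion_of_mem (u := c) hs) (hc3 s hs)
  refine hfin.subset ?_
  intro x hx
  by_contra hn
  apply (ext_of_basis hC hsub hx hn).notMem
  apply hKC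
  rw [← hC.1]
  exact Subgroup.subset_closure hx

theorem chain_of_list {C : Set (FreeGroup A)} {K : Subgroup (FreeGroup A)}
    (hC : IsFreeBasis C K) (l : List (FreeGroup A)) : ∀ B : Set (FreeGroup A), l.Nodup →
    (∀ x ∈ l, x ∉ B) → B ∪ {x | x ∈ l} = C → Chain K (Subgroup.closure B) l := by
  induction l with
  | nil =>
    intro B _ _ h
    have : B = C := by simpa using h
    rw [this]
    exact hC.1
  | cons x l ih =>
    intro B hl hx h
    rw [List.nodup_cons] at hl
    refine ⟨ext_of_basis hC (by rw [← h]; exact Set.subset_union_left)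
      (by rw [← h]; right; simp) (hx x (by simp)), ?_⟩
    rw [closure_adj]
    apply ih _ hl.2
    · intro y hy hy'
      rcases hy' with h1 | h1
      · exact hx y (by simp [hy]) h1
      · rw [Set.mem_singleton_iff] at h1
        subst h1
        exact hl.1 hy
    · rw [← h]
      ext y
      simp
      tauto

theorem main {H K : Subgroup (FreeGroup A)} (hK : K.FG) {R R' : ℕ} (hR : RadLE H R)
    (hR' : RadLE K R') (hff : FreeFactor H K) :
    ∃ C D : Set (FreeGroup A), IsFreeBasis C H ∧ Disjoint C D ∧ D ⊆ ↑K ∧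
      IsFreeBasis (C ∪ D) K ∧
      ∀ x ∈ D, (FreeGroup.toWord x).length ≤ max (2 * R) (1 + 2 * R') := by
  obtain ⟨B, C, hB, hC, hBC⟩ := hff
  have hfin : (C \ B).Finite := (basis_finite hC hK).sdiff
  have hch : Chain K H hfin.toFinset.toList := by
    rw [← hB.1]
    refine chain_of_list hC _ B (Finset.nodup_toList _) ?_ ?_
    · intro x hx
      simp at hx
      exact hx.2
    · ext y
      simp only [Finset.mem_toList, Set.Finite.mem_toFinset, Set.mem_union, Set.mem_setOf_eq,
        Set.mem_diff]
      have := @hBC y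
      tauto
  obtain ⟨l, -, hl, -, hs⟩ := sort_chain K _ H _ rfl hch
  obtain ⟨L, D1, hLK, hE, hL, hd1, hn1⟩ := zero_phase R hR hB hl hs
  obtain ⟨D2, hD2, hd2, hb, hn2⟩ := phase2 hLK hE hL hR'
  refine ⟨B, D1 ∪ D2, hB, ?_, ?_, ?_, ?_⟩
  · rw [Set.disjoint_union_right]
    exact ⟨hd1, hd2.mono_left Set.subset_union_left⟩
  · apply Set.union_subset _ hD2
    intro x hx
    apply hLK
    rw [← hL.1]
    exact Subgroup.subset_closure (Or.inr hx)
  · rw [← Set.union_assoc]; exact hb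
  · rintro x (hx | hx)
    · exact le_max_of_le_left (hn1 x hx)
    · exact le_max_of_le_right (hn2 x hx)

end
end CF

/-- Proposition 4.2: if `H ≤ff K`, then `H` has a complement in `K` generated by
elements of length at most `max (2 diam_{q₀}(Γ_A(H))) (1 + 2 diam_{q₀}(Γ_A(K)))`. -/
theorem complement_in_subgroup
    {A : Type} [DecidableEq A] (H K : Subgroup (FreeGroup A)) (hHfg : H.FG) (hKfg : K.FG)
    (MH MK : Autom A) (hMH : MH.Represents H) (hMK : MK.Represents K)
    (hfinH : Finite MH.Q) (hfinK : Finite MK.Q)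
    (hff : FreeFactor H K) :
    ∃ C D : Set (FreeGroup A), IsFreeBasis C H ∧ Disjoint C D ∧ D ⊆ ↑K ∧
      IsFreeBasis (C ∪ D) K ∧
      ∀ x ∈ D, (FreeGroup.toWord x).length ≤ max (2 * MH.diam) (1 + 2 * MK.diam) := by
  exact CF.main hKfg (CF.radLE_of_represents hMH hfinH) (CF.radLE_of_represents hMK hfinK) hff
end
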